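/- arXiv:2512.15255 — 2 statements merged into one kernel-verified Lean document; each statement's English description precedes it below -/
import Mathlib

section
/- Let u be a very weak solution with integrability deficit δ ∈ (0,1), and assume the p-intrinsic hypotheses. Then for every θ ∈ ((q−1)/p, δ] and every s ∈ [2ρ, 4ρ] there exists a constant c = c(data) such that ⨍_{Q^π_s(z₀)} (inf_{w ∈ Q^π_s(z₀)} a(w))^θ · |u − (u)_{Q^π_s(z₀)}|^{θq}/s^{θq} dz ≤ c ⨍_{Q^π_s(z₀)} (H(z,|∇u|) + H(z,|F|))^θ dz. -/
open MeasureTheory Set Metric Filter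
open scoped ENNReal NNReal Topology BigOperators Classical

noncomputable section

namespace DoublePhase

/-- Spatial points: ℝⁿ. -/
abbrev Spc (n : ℕ) : Type := EuclideanSpace ℝ (Fin n)
/-- Space-time points `z = (x,t)`. -/
abbrev Pt (n : ℕ) : Type := Spc n × ℝ
/-- Values in ℝᴺ. -/
abbrev Vec (N : ℕ) : Type := Fin N → ℝ
/-- Matrices in ℝ^{N×n}. -/
abbrev Mat (N n : ℕ) : Type := Fin N → Fin n → ℝ

/-- Euclidean inner product on ℝᴺ. -/
def vdot {N : ℕ} (v w : Vec N) : ℝ := ∑ i, v i * w i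
/-- Euclidean norm on ℝᴺ. -/
def vnorm {N : ℕ} (v : Vec N) : ℝ := Real.sqrt (vdot v v)
/-- Euclidean inner product on ℝ^{N×n}. -/
def mdot {N n : ℕ} (A B : Mat N n) : ℝ := ∑ i, ∑ j, A i j * B i j
/-- Euclidean norm on ℝ^{N×n}. -/
def mnorm {N n : ℕ} (A : Mat N n) : ℝ := Real.sqrt (mdot A A)

/-- Parabolic cylinder `Q_{r,s}(z₀) = B_r(x₀) × (t₀−s, t₀+s)`. -/
def Qrs {n : ℕ} (z₀ : Pt n) (r s : ℝ) : Set (Pt n) :=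
  (Metric.ball z₀.1 r) ×ˢ (Set.Ioo (z₀.2 - s) (z₀.2 + s))

/-- Standard parabolic cylinder `Q_ρ(z₀) = B_ρ(x₀) × (t₀−ρ², t₀+ρ²)`. -/
def Qc {n : ℕ} (z₀ : Pt n) (ρ : ℝ) : Set (Pt n) := Qrs z₀ ρ (ρ ^ 2)

/-- The double-phase function `H(z,s) = s^p + a(z) s^q`. -/
def Hf {n : ℕ} (a : Pt n → ℝ) (p q : ℝ) (z : Pt n) (s : ℝ) : ℝ := s ^ p + a z * s ^ q

/-- `p`-intrinsic cylinder `Q_ρ^λ(z₀) = B_ρ(x₀) × (t₀−λ^{2−p}ρ², t₀+λ^{2−p}ρ²)`. -/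
def Qp {n : ℕ} (p : ℝ) (z₀ : Pt n) (lam ρ : ℝ) : Set (Pt n) :=
  Qrs z₀ ρ (lam ^ (2 - p) * ρ ^ 2)

/-- `(p,q)`-intrinsic cylinder `G_ρ^λ(z₀)`. -/
def Gpq {n : ℕ} (a : Pt n → ℝ) (p q : ℝ) (z₀ : Pt n) (lam ρ : ℝ) : Set (Pt n) :=
  Qrs z₀ ρ (lam ^ 2 / Hf a p q z₀ lam * ρ ^ 2)

/-- The space-time domain `Ω_T = Ω × (0,T)`. -/
def cyl {n : ℕ} (Ω : Set (Spc n)) (T : ℝ) : Set (Pt n) := Ω ×ˢ Set.Ioo 0 T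

/-- Spatial partial derivative `∂_{x_j} ψ` of a scalar test function. -/
def dxj {n : ℕ} (ψ : Pt n → ℝ) (j : Fin n) (z : Pt n) : ℝ :=
  fderiv ℝ ψ z (EuclideanSpace.single j 1, 0)

/-- Time derivative `∂_t φ` of a vector-valued test function. -/
def dtd {n N : ℕ} (φ : Pt n → Vec N) (z : Pt n) : Vec N :=
  fderiv ℝ φ z ((0 : Spc n), (1 : ℝ))

/-- Spatial gradient `∇φ` of a vector-valued test function, as a matrix. -/
def gradm {n N : ℕ} (φ : Pt n → Vec N) (z : Pt n) : Mat N n :=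
  fun i j => fderiv ℝ (fun w => φ w i) z (EuclideanSpace.single j 1, 0)

/-- The structural setting of the parabolic double-phase problem:
`data = (n, N, p, q, α, L₁, L₂, [a]_α)` together with the bounded domain `Ω`,
time `T`, the coefficient `a`, the vector field `𝒜` and the source `F`. -/
structure Setting (n N : ℕ) (p q α L₁ L₂ aH : ℝ) where
  Ω : Set (Spc n)
  T : ℝ
  a : Pt n → ℝ
  A : Pt n → Mat N n → Mat N n
  F : Pt n → Mat N n
  hn : 2 ≤ n
  hN : 1 ≤ N
  hΩo : IsOpen Ω
  hΩb : Bornology.IsBounded Ω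
  hΩne : Ω.Nonempty
  hT : 0 < T
  hα : α ∈ Set.Ioc (0 : ℝ) 1
  hp2 : 2 < p
  hpq : p < q
  hqub : q < p + 2 * α / ((n : ℝ) + 2)
  hL₁ : 0 < L₁
  hL₁₂ : L₁ ≤ L₂
  haH : 0 < aH
  ha0 : ∀ z, 0 ≤ a z
  haM : Measurable a
  haB : BddAbove (Set.range a)
  haHol : ∀ x ∈ Ω, ∀ y ∈ Ω, ∀ t ∈ Set.Ioo (0 : ℝ) T, ∀ s ∈ Set.Ioo (0 : ℝ) T,
    |a (x, t) - a (y, s)| ≤ aH * max (‖x - y‖ ^ α) (|t - s| ^ (α / 2))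
  hAM : Measurable (Function.uncurry A)
  hAcoer : ∀ᵐ z ∂(volume.restrict (cyl Ω T)), ∀ ξ : Mat N n,
    L₁ * (mnorm ξ ^ p + a z * mnorm ξ ^ q) ≤ mdot (A z ξ) ξ
  hAgrow : ∀ᵐ z ∂(volume.restrict (cyl Ω T)), ∀ ξ : Mat N n,
    mnorm (A z ξ) ≤ L₂ * (mnorm ξ ^ (p - 1) + a z * mnorm ξ ^ (q - 1))
  hFM : Measurable F
  hFint : IntegrableOn (fun z => Hf a p q z (mnorm (F z))) (cyl Ω T)

variable {n N : ℕ} {p q α L₁ L₂ aH : ℝ}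

/-- The right-hand side field `|F|^{p−2}F + a|F|^{q−2}F`. -/
def rhsF (S : Setting n N p q α L₁ L₂ aH) (z : Pt n) : Mat N n :=
  fun i j => mnorm (S.F z) ^ (p - 2) * S.F z i j + S.a z * mnorm (S.F z) ^ (q - 2) * S.F z i j

/-- Very weak solution with integrability deficit `δ`: `u ∈ L¹(0,T;W^{1,1})` with
weak spatial gradient `Du`, `H(·,|Du|)^δ` integrable, satisfying the weak formulation. -/
structure VeryWeakSolution (S : Setting n N p q α L₁ L₂ aH)
    (u : Pt n → Vec N) (Du : Pt n → Mat N n) (δ : ℝ) : Prop where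
  hδ : δ ∈ Set.Ioo (0 : ℝ) 1
  huM : Measurable u
  hDuM : Measurable Du
  huL1 : IntegrableOn (fun z => vnorm (u z)) (cyl S.Ω S.T)
  hDuL1 : IntegrableOn (fun z => mnorm (Du z)) (cyl S.Ω S.T)
  hgrad : ∀ (i : Fin N) (j : Fin n) (ψ : Pt n → ℝ),
    ContDiff ℝ (⊤ : ℕ∞) ψ → HasCompactSupport ψ → tsupport ψ ⊆ cyl S.Ω S.T →
    ∫ z in cyl S.Ω S.T, u z i * dxj ψ j z = - ∫ z in cyl S.Ω S.T, Du z i j * ψ z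
  henergy : IntegrableOn (fun z => Hf S.a p q z (mnorm (Du z)) ^ δ) (cyl S.Ω S.T)
  hweak : ∀ φ : Pt n → Vec N,
    ContDiff ℝ (⊤ : ℕ∞) φ → HasCompactSupport φ → tsupport φ ⊆ cyl S.Ω S.T →
    ∫ z in cyl S.Ω S.T, (-(vdot (u z) (dtd φ z)) + mdot (S.A z (Du z)) (gradm φ z))
      = ∫ z in cyl S.Ω S.T, mdot (rhsF S z) (gradm φ z)

/-- `H(z,|∇u|)`. -/
def HDu (S : Setting n N p q α L₁ L₂ aH) (Du : Pt n → Mat N n) (z : Pt n) : ℝ :=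
  Hf S.a p q z (mnorm (Du z))

/-- `H(z,|F|)`. -/
def HFf (S : Setting n N p q α L₁ L₂ aH) (z : Pt n) : ℝ :=
  Hf S.a p q z (mnorm (S.F z))

/-- Componentwise integral average `(u)_E` of a vector-valued function. -/
def vavg {n N : ℕ} (u : Pt n → Vec N) (E : Set (Pt n)) : Vec N := fun i => ⨍ z in E, u z i

/-- The `p`-intrinsic hypotheses \eqref{eq_pcase}-\eqref{eq_rho_decay}. -/
structure PHyp (S : Setting n N p q α L₁ L₂ aH) (Du : Pt n → Mat N n)
    (z₀ : Pt n) (π ρ δ : ℝ) : Prop where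
  hz₀ : z₀ ∈ cyl S.Ω S.T
  hπ : 1 < π
  hρ : ρ ∈ Set.Ioo (0 : ℝ) 1
  hcase : S.a z₀ * π ^ q ≤ π ^ p
  hsub : Qp p z₀ π (16 * ρ) ⊆ cyl S.Ω S.T
  hlow : π ^ (δ * p) ≤ ⨍ z in Qp p z₀ π ρ, (HDu S Du z + HFf S z) ^ δ
  hup : (⨍ z in Qp p z₀ π (16 * ρ), (HDu S Du z + HFf S z) ^ δ) ≤ π ^ (δ * p)
  hdecay : ρ ^ α ≤ π ^ (p - q)

/-- The `(p,q)`-intrinsic hypotheses \eqref{eq_pqcase}-\eqref{eq_pq4}. -/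
structure PQHyp (S : Setting n N p q α L₁ L₂ aH) (Du : Pt n → Mat N n)
    (z₀ : Pt n) (π ρ δ : ℝ) : Prop where
  hz₀ : z₀ ∈ cyl S.Ω S.T
  hπ : 1 < π
  hρ : ρ ∈ Set.Ioo (0 : ℝ) 1
  hcase : π ^ p < S.a z₀ * π ^ q
  hsub : Gpq S.a p q z₀ π (16 * ρ) ⊆ cyl S.Ω S.T
  hcomp : ∀ z ∈ Qc z₀ (10 * ρ), S.a z₀ / 2 ≤ S.a z ∧ S.a z ≤ 2 * S.a z₀
  hlow : Hf S.a p q z₀ π ^ δ ≤ ⨍ z in Gpq S.a p q z₀ π ρ, (HDu S Du z + HFf S z) ^ δ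
  hup : (⨍ z in Gpq S.a p q z₀ π (16 * ρ), (HDu S Du z + HFf S z) ^ δ) ≤ Hf S.a p q z₀ π ^ δ

/-- Strong maximal function over parabolic cylinders. -/
def strongMax {n : ℕ} (f : Pt n → ℝ) (z : Pt n) : ℝ :=
  sSup {m : ℝ | ∃ (w : Pt n) (r s : ℝ), 0 < r ∧ 0 < s ∧ z ∈ Qrs w r s ∧
    m = ⨍ y in Qrs w r s, |f y|}

/-- The function `g = (|∇u| + |u−u₀|/ρ + |F|) χ_{𝒬₂}`. -/
def gW (S : Setting n N p q α L₁ L₂ aH) (u : Pt n → Vec N) (Du : Pt n → Mat N n)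
    (Q2 : Set (Pt n)) (ρ : ℝ) (z : Pt n) : ℝ :=
  Q2.indicator (fun w => mnorm (Du w) + vnorm (u w - vavg u Q2) / ρ + mnorm (S.F w)) z

/-- Hölder extension of `a` to all of ℝ^{n+1}. -/
def aExt (S : Setting n N p q α L₁ L₂ aH) (Q2 : Set (Pt n)) (z : Pt n) : ℝ :=
  sInf {v : ℝ | ∃ w ∈ cyl S.Ω S.T,
    v = Q2.indicator S.a w + aH * (‖z.1 - w.1‖ ^ α + |z.2 - w.2| ^ (α / 2))}

/-- Hölder extension of `a` truncated between `inf_{𝒬₂} a` and `sup_{𝒬₂} a`. -/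
def aStar (S : Setting n N p q α L₁ L₂ aH) (Q2 : Set (Pt n)) (z : Pt n) : ℝ :=
  max (min (aExt S Q2 z) (sSup (S.a '' Q2))) (sInf (S.a '' Q2))

/-- The maximal weight `Υ(z) = (M(g^{q−1} + (a g^q)^{(q−1)/p})(z))^{p/(q−1)}`. -/
def Ups (S : Setting n N p q α L₁ L₂ aH) (u : Pt n → Vec N) (Du : Pt n → Mat N n)
    (Q2 : Set (Pt n)) (ρ : ℝ) (z : Pt n) : ℝ :=
  strongMax (fun w => gW S u Du Q2 ρ w ^ (q - 1)
      + (aStar S Q2 w * gW S u Du Q2 ρ w ^ q) ^ ((q - 1) / p)) z ^ (p / (q - 1))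

/-- `Υ̂(z) = max{Υ(z), θΠ}`. -/
def UpsHat (S : Setting n N p q α L₁ L₂ aH) (u : Pt n → Vec N) (Du : Pt n → Mat N n)
    (Q2 : Set (Pt n)) (ρ θ Pi' : ℝ) (z : Pt n) : ℝ :=
  max (Ups S u Du Q2 ρ z) (θ * Pi')

/-- `‖a‖_{L^∞(Ω_T)}`. -/
def supA (S : Setting n N p q α L₁ L₂ aH) : ℝ := sSup (S.a '' cyl S.Ω S.T)

/-- The constant `K = ((1+‖a‖_∞)/|B₁| ∬ Υ^μ)^{α/(n+2)}`. -/
def Kconst (S : Setting n N p q α L₁ L₂ aH) (u : Pt n → Vec N) (Du : Pt n → Mat N n)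
    (Q2 : Set (Pt n)) (ρ μ : ℝ) : ℝ :=
  (((1 + supA S) / (volume (Metric.ball (0 : Spc n) 1)).toReal)
      * ∫ z, Ups S u Du Q2 ρ z ^ μ) ^ (α / ((n : ℝ) + 2))

/-- Conditions \eqref{def_mu}-\eqref{def_mu_2} on `μ`. -/
def muCond (n : ℕ) (p q α μ : ℝ) : Prop :=
  max (1 - 2 / q + ((n : ℝ) + 2) * (q - p) / (q * α)) ((q - 1) / p) < μ ∧ μ < 1 ∧
    (1 / μ - 1) * (2 * (n : ℝ)) / (((n : ℝ) + 2) * q) + (n : ℝ) / ((n : ℝ) + 2) ≤ p / q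

/-- Condition \eqref{def_mfs} on `γ`. -/
def gammaCond (n : ℕ) (p q α μ γ : ℝ) : Prop :=
  0 < γ ∧ γ < 1 ∧ -(2 * α) / ((n : ℝ) + 2) + α * q * (1 - μ) / ((n : ℝ) + 2) < p - q - γ

/-- Condition \eqref{def_mfc} on the structural constant `c₀`. -/
def c0Cond (S : Setting n N p q α L₁ L₂ aH) (u : Pt n → Vec N) (Du : Pt n → Mat N n)
    (Q2 : Set (Pt n)) (ρ θ μ γ c₀ : ℝ) : Prop :=
  1 < c₀ ∧
    Kconst S u Du Q2 ρ μ * (θ * c₀ / (2 * (1 + supA S))) ^ (-(γ / p))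
      ≤ 1 / (800 * (1 + aH))

/-- The cylinder `𝒬` of \eqref{def_Qi}: `p`-intrinsic or `(p,q)`-intrinsic by phase. -/
def QorG (S : Setting n N p q α L₁ L₂ aH) (z₀ : Pt n) (π r : ℝ) : Set (Pt n) :=
  if S.a z₀ * π ^ q ≤ π ^ p then Qp p z₀ π r else Gpq S.a p q z₀ π r

/-- Half-length `σ` of the time interval of `𝒬`. -/
def sigmaOf (S : Setting n N p q α L₁ L₂ aH) (z₀ : Pt n) (π r : ℝ) : ℝ :=
  if S.a z₀ * π ^ q ≤ π ^ p then π ^ (2 - p) * r ^ 2 else π ^ 2 / Hf S.a p q z₀ π * r ^ 2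

/-- `Π_{z₀}` of \eqref{def_Pizo}. -/
def PiZ (S : Setting n N p q α L₁ L₂ aH) (z₀ : Pt n) (π : ℝ) : ℝ :=
  if S.a z₀ * π ^ q ≤ π ^ p then Hf S.a p q z₀ π else π ^ p

/-- Upper level set `Ψ(Λ)` of `H(z,|∇u|)`. -/
def PsiSet (S : Setting n N p q α L₁ L₂ aH) (Du : Pt n → Mat N n) (Λ : ℝ) : Set (Pt n) :=
  {z ∈ cyl S.Ω S.T | Λ < HDu S Du z}

/-- Upper level set `Φ(Λ)` of `H(z,|F|)`. -/
def PhiSet (S : Setting n N p q α L₁ L₂ aH) (Λ : ℝ) : Set (Pt n) :=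
  {z ∈ cyl S.Ω S.T | Λ < HFf S z}

/-- `Π > c₀` for the structural constant `c₀` of the paper. -/
def PiBig (S : Setting n N p q α L₁ L₂ aH) (u : Pt n → Vec N) (Du : Pt n → Mat N n)
    (z₀ : Pt n) (π ρ : ℝ) : Prop :=
  ∃ θ μ γ c₀ : ℝ, θ ∈ Set.Ioo (0 : ℝ) 1 ∧ muCond n p q α μ ∧ gammaCond n p q α μ γ ∧
    c0Cond S u Du (QorG S z₀ π (4 * ρ)) ρ θ μ γ c₀ ∧ c₀ < Hf S.a p q z₀ π

/-- `u ∈ C(0,T; L²(Ω,ℝᴺ))`. -/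
def ContL2 (S : Setting n N p q α L₁ L₂ aH) (u : Pt n → Vec N) : Prop :=
  (∀ t ∈ Set.Ioo (0 : ℝ) S.T, IntegrableOn (fun x => vnorm (u (x, t)) ^ 2) S.Ω) ∧
  ∀ t₁ ∈ Set.Ioo (0 : ℝ) S.T, ∀ ε > (0 : ℝ), ∃ η > (0 : ℝ), ∀ t₂ ∈ Set.Ioo (0 : ℝ) S.T,
    |t₂ - t₁| < η → ∫ x in S.Ω, vnorm (u (x, t₂) - u (x, t₁)) ^ 2 < ε

/-- The Vitali covering cylinder `U(w)`: `Q^{π_w}_{2ρ_w}(w)` or `G^{π_w}_{2ρ_w}(w)` by phase. -/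
def Uw (S : Setting n N p q α L₁ L₂ aH) (w : Pt n) (πw ρw : ℝ) : Set (Pt n) :=
  if S.a w * πw ^ q ≤ πw ^ p then Qp p w πw (2 * ρw) else Gpq S.a p q w πw (2 * ρw)

end DoublePhase

open DoublePhase
lemma jensen_lint {β : Type*} [MeasurableSpace β] (μ : Measure β) {r : ℝ} (hr : 1 ≤ r)
    {g : β → ℝ≥0∞} (hg : AEMeasurable g μ) :
    (∫⁻ x, g x ∂μ) ^ r ≤ μ univ ^ (r - 1) * ∫⁻ x, g x ^ r ∂μ := by
  rcases eq_or_lt_of_le hr with h | h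
  · subst h; simp
  · have hc : r.HolderConjugate (Real.conjExponent r) := Real.HolderConjugate.conjExponent h
    have h0 := ENNReal.lintegral_mul_le_Lp_mul_Lq μ hc hg (aemeasurable_const (b := (1 : ℝ≥0∞)))
    have hr0 : (0 : ℝ) < r := by linarith
    have h1 := ENNReal.rpow_le_rpow h0 hr0.le
    simp only [Pi.mul_apply, mul_one, ENNReal.one_rpow, lintegral_const, one_mul] at h1
    rw [ENNReal.mul_rpow_of_nonneg _ _ hr0.le, ← ENNReal.rpow_mul, ← ENNReal.rpow_mul] at h1
    have e1 : 1 / r * r = 1 := by field_simp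
    have e2 : 1 / Real.conjExponent r * r = r - 1 := by
      have h1 : r - 1 ≠ 0 := by linarith
      unfold Real.conjExponent; field_simp
    rw [e1, e2, ENNReal.rpow_one, mul_comm] at h1
    exact h1

lemma lint_affine {n : ℕ} (c : Spc n) {τ : ℝ} (hτ : 0 < τ) {G : Spc n → ℝ≥0∞} (hG : Measurable G) :
    ∫⁻ x, G (c + τ • x) = ENNReal.ofReal ((τ ^ n)⁻¹) * ∫⁻ x, G x := by
  have h1 : ∫⁻ x, G (c + τ • x) = ∫⁻ y, G (c + y) ∂(Measure.map (fun x : Spc n => τ • x) volume) := by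
    rw [lintegral_map (by fun_prop) (by fun_prop)]
  rw [h1, Measure.map_addHaar_smul _ hτ.ne', lintegral_smul_measure, lintegral_add_left_eq_self G c]
  simp [abs_of_pos hτ]

lemma lint_affine_le {n : ℕ} (c : Spc n) {τ : ℝ} (hτ : 1 / 2 ≤ τ) {G : Spc n → ℝ≥0∞}
    (hG : Measurable G) :
    ∫⁻ x, G (c + τ • x) ≤ 2 ^ n * ∫⁻ x, G x := by
  rw [lint_affine c (by linarith) hG]
  gcongr
  have : (τ ^ n)⁻¹ ≤ 2 ^ n := by
    rw [← inv_pow]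
    gcongr
    rw [inv_le_comm₀ (by linarith) (by norm_num)]
    linarith
  calc _ ≤ ENNReal.ofReal (2 ^ n) := ENNReal.ofReal_le_ofReal this
    _ = 2 ^ n := by rw [ENNReal.ofReal_pow (by norm_num)]; simp

lemma slice_seg {n : ℕ} {v : Spc n → ℝ} (hv : ContDiff ℝ 1 v) {s : ℝ} {x₀ x y : Spc n}
    (hx : x ∈ ball x₀ s) (hy : y ∈ ball x₀ s) {r : ℝ} (hr : 1 ≤ r) :
    ‖v x - v y‖ₑ ^ r ≤ ENNReal.ofReal (2 * s) ^ r *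
      ∫⁻ τ in Icc (0 : ℝ) 1, ‖fderiv ℝ v (y + τ • (x - y))‖ₑ ^ r := by
  have hr0 : (0 : ℝ) ≤ r := by linarith
  have hcd : Continuous (fun τ : ℝ => fderiv ℝ v (y + τ • (x - y))) :=
    (hv.continuous_fderiv (by norm_num)).comp (by fun_prop)
  have hd : ∀ τ : ℝ, HasDerivAt (fun τ : ℝ => v (y + τ • (x - y)))
      (fderiv ℝ v (y + τ • (x - y)) (x - y)) τ := by
    intro τ
    have h1 : HasDerivAt (fun τ : ℝ => y + τ • (x - y)) (x - y) τ := by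
      simpa using ((hasDerivAt_id τ).smul_const (x - y)).const_add y
    exact ((hv.differentiable (by norm_num)) _).hasFDerivAt.comp_hasDerivAt τ h1
  have hftc := intervalIntegral.integral_eq_sub_of_hasDerivAt (a := 0) (b := 1)
    (fun τ _ => hd τ) ((hcd.clm_apply continuous_const).intervalIntegrable _ _)
  simp only [one_smul, zero_smul, add_zero, add_sub_cancel] at hftc
  have hxy : ‖x - y‖ ≤ 2 * s := by
    have := dist_triangle_right x y x₀
    rw [mem_ball] at hx hy
    rw [← dist_eq_norm]; linarith
  have h2 : ‖v x - v y‖ₑ ≤ ∫⁻ τ in Icc (0 : ℝ) 1,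
      ENNReal.ofReal (2 * s) * ‖fderiv ℝ v (y + τ • (x - y))‖ₑ := by
    rw [← hftc, intervalIntegral.integral_of_le (by norm_num), ← integral_Icc_eq_integral_Ioc]
    refine (enorm_integral_le_lintegral_enorm _).trans ?_
    apply lintegral_mono
    intro τ
    have h3 : ‖x - y‖ₑ ≤ ENNReal.ofReal (2 * s) := by
      rw [← ofReal_norm]
      exact ENNReal.ofReal_le_ofReal hxy
    calc _ ≤ ‖fderiv ℝ v (y + τ • (x - y))‖ₑ * ‖x - y‖ₑ := ContinuousLinearMap.le_opENorm _ _
      _ ≤ ‖fderiv ℝ v (y + τ • (x - y))‖ₑ * ENNReal.ofReal (2 * s) := by gcongr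
      _ = _ := mul_comm _ _
  have hm : Measurable (fun τ : ℝ => ‖fderiv ℝ v (y + τ • (x - y))‖ₑ) := hcd.enorm.measurable
  rw [lintegral_const_mul _ hm] at h2
  refine (ENNReal.rpow_le_rpow h2 hr0).trans ?_
  rw [ENNReal.mul_rpow_of_nonneg _ _ hr0]
  gcongr
  refine (jensen_lint _ hr hm.aemeasurable).trans ?_
  simp

set_option maxHeartbeats 400000 in
lemma poincare_ball_smooth {n : ℕ} {v : Spc n → ℝ} (hv : ContDiff ℝ 1 v) {s : ℝ}
    (x₀ : Spc n) {r : ℝ} (hr : 1 ≤ r) :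
    ∫⁻ x in ball x₀ s, ∫⁻ y in ball x₀ s, ‖v x - v y‖ₑ ^ r ≤
      ENNReal.ofReal (2 * s) ^ r * (2 ^ (n + 1) * (volume (ball x₀ s) *
        ∫⁻ x in ball x₀ s, ‖fderiv ℝ v x‖ₑ ^ r)) := by
  have hr0 : (0 : ℝ) ≤ r := by linarith
  set B := ball x₀ s with hB
  have hBm : MeasurableSet B := measurableSet_ball
  set G : Spc n → ℝ≥0∞ := B.indicator (fun x => ‖fderiv ℝ v x‖ₑ ^ r) with hG
  have hcf : Continuous (fun x => ‖fderiv ℝ v x‖ₑ) := (hv.continuous_fderiv (by norm_num)).enorm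
  have hGm : Measurable G := (hcf.measurable.pow_const r).indicator hBm
  have hGi : ∫⁻ x in B, ‖fderiv ℝ v x‖ₑ ^ r = ∫⁻ x, G x := by
    rw [hG, lintegral_indicator hBm]
  rw [hGi]
  have hconv : Convex ℝ B := convex_ball x₀ s
  have hmem : ∀ x ∈ B, ∀ y ∈ B, ∀ τ ∈ Icc (0:ℝ) 1, y + τ • (x - y) ∈ B := by
    intro x hx y hy τ hτ
    exact hconv.add_smul_sub_mem hy hx hτ
  have hstep1 : ∫⁻ x in B, ∫⁻ y in B, ‖v x - v y‖ₑ ^ r ≤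
      ∫⁻ x in B, ∫⁻ y in B, ENNReal.ofReal (2 * s) ^ r *
        ∫⁻ τ in Icc (0 : ℝ) 1, G (y + τ • (x - y)) := by
    apply setLIntegral_mono' hBm
    intro x hx
    apply setLIntegral_mono' hBm
    intro y hy
    refine (slice_seg hv hx hy hr).trans ?_
    refine mul_le_mul_right ?_ _
    apply setLIntegral_mono' measurableSet_Icc
    intro τ hτ
    rw [hG, indicator_of_mem (hmem x hx y hy τ hτ)]
  refine hstep1.trans ?_
  have hJ : Measurable (fun w : (Spc n × Spc n) × ℝ => G (w.1.2 + w.2 • (w.1.1 - w.1.2))) :=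
    hGm.comp (by fun_prop)
  have hJ' : Measurable (fun w : Spc n × Spc n => ∫⁻ τ in Icc (0 : ℝ) 1, G (w.2 + τ • (w.1 - w.2))) :=
    hJ.lintegral_prod_right'
  have hJτ : ∀ τ : ℝ, Measurable (fun w : Spc n × Spc n => G (w.2 + τ • (w.1 - w.2))) :=
    fun τ => hGm.comp (by fun_prop)
  have e1 : ∫⁻ x in B, ∫⁻ y in B, ENNReal.ofReal (2 * s) ^ r *
        ∫⁻ τ in Icc (0 : ℝ) 1, G (y + τ • (x - y)) = ENNReal.ofReal (2 * s) ^ r *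
      ∫⁻ x in B, ∫⁻ y in B, ∫⁻ τ in Icc (0 : ℝ) 1, G (y + τ • (x - y)) := by
    have ht : ENNReal.ofReal (2 * s) ^ r ≠ ∞ := ENNReal.rpow_ne_top_of_nonneg hr0 ENNReal.ofReal_ne_top
    rw [← lintegral_const_mul' _ _ ht]
    congr 1; ext x
    rw [lintegral_const_mul' _ _ ht]
  rw [e1]
  gcongr
  -- swap the tau integral outside
  have e2 : ∫⁻ x in B, ∫⁻ y in B, ∫⁻ τ in Icc (0 : ℝ) 1, G (y + τ • (x - y)) =
      ∫⁻ τ in Icc (0 : ℝ) 1, ∫⁻ x in B, ∫⁻ y in B, G (y + τ • (x - y)) := by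
    have h1 : ∫⁻ x in B, ∫⁻ y in B, ∫⁻ τ in Icc (0 : ℝ) 1, G (y + τ • (x - y)) =
        ∫⁻ w : Spc n × Spc n, (∫⁻ τ in Icc (0 : ℝ) 1, G (w.2 + τ • (w.1 - w.2)))
          ∂((volume.restrict B).prod (volume.restrict B)) := by
      rw [lintegral_prod _ hJ'.aemeasurable]
    rw [h1, lintegral_lintegral_swap (f := fun (w : Spc n × Spc n) (τ : ℝ) =>
      G (w.2 + τ • (w.1 - w.2))) hJ.aemeasurable]
    congr 1; ext τ
    rw [lintegral_prod _ (hJτ τ).aemeasurable]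
  rw [e2]
  have hbd : ∀ τ ∈ Icc (0:ℝ) 1, ∫⁻ x in B, ∫⁻ y in B, G (y + τ • (x - y)) ≤
      2 ^ n * (volume B * ∫⁻ x, G x) := by
    intro τ hτ
    have hA : ∀ τ' : ℝ, 1/2 ≤ τ' → ∀ c : Spc n, ∫⁻ x in B, G (c + τ' • x) ≤ 2 ^ n * ∫⁻ x, G x := by
      intro τ' h c
      exact (setLIntegral_le_lintegral _ _).trans (lint_affine_le c h hGm)
    have hC : ∫⁻ _x in B, (2 : ℝ≥0∞) ^ n * ∫⁻ x, G x = 2 ^ n * (volume B * ∫⁻ x, G x) := by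
      rw [setLIntegral_const]; ring
    rcases le_total (1/2) τ with h | h
    · rw [lintegral_lintegral_swap (f := fun (x y : Spc n) => G (y + τ • (x - y)))
        (hJτ τ).aemeasurable, ← hC]
      have hpt : ∀ y, ∫⁻ x in B, G (y + τ • (x - y)) ≤ 2 ^ n * ∫⁻ x, G x := by
        intro y
        have := hA τ h ((1 - τ) • y)
        have e : ∀ x, (1 - τ) • y + τ • x = y + τ • (x - y) := fun x => by module
        simp only [e] at this
        exact this
      exact lintegral_mono hpt
    · rw [← hC]
      have hpt : ∀ x, ∫⁻ y in B, G (y + τ • (x - y)) ≤ 2 ^ n * ∫⁻ x, G x := by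
        intro x
        have := hA (1 - τ) (by linarith) (τ • x)
        have e : ∀ y, τ • x + (1 - τ) • y = y + τ • (x - y) := fun y => by module
        simp only [e] at this
        exact this
      exact lintegral_mono hpt
  calc _ ≤ ∫⁻ τ in Icc (0 : ℝ) 1, 2 ^ n * (volume B * ∫⁻ x, G x) :=
        setLIntegral_mono' measurableSet_Icc hbd
    _ = 2 ^ n * (volume B * ∫⁻ x, G x) := by simp
    _ ≤ _ := by gcongr <;> norm_num

instance pt_haar (n : ℕ) : (volume : Measure (Pt n)).IsAddHaarMeasure :=
  inferInstanceAs (((volume : Measure (Spc n)).prod (volume : Measure ℝ)).IsAddHaarMeasure)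

/-- mollification -/
def moll {n : ℕ} (κ : ContDiffBump (0 : Pt n)) (F : Pt n → ℝ) (z : Pt n) : ℝ :=
  ∫ w, F w * κ.normed volume (z - w)

lemma moll_eq {n : ℕ} (κ : ContDiffBump (0 : Pt n)) (F : Pt n → ℝ) :
    moll κ F = MeasureTheory.convolution F (κ.normed volume) (ContinuousLinearMap.lsmul ℝ ℝ) volume := by
  ext z; simp [moll, MeasureTheory.convolution]

lemma moll_eq' {n : ℕ} (κ : ContDiffBump (0 : Pt n)) (F : Pt n → ℝ) :
    moll κ F = MeasureTheory.convolution (κ.normed volume) F (ContinuousLinearMap.lsmul ℝ ℝ) volume := by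
  rw [moll_eq, ← MeasureTheory.convolution_flip]
  congr 1
  ext; simp

lemma moll_contDiff {n : ℕ} (κ : ContDiffBump (0 : Pt n)) {F : Pt n → ℝ}
    (hF : Integrable F) : ContDiff ℝ 1 (moll κ F) := by
  rw [moll_eq]
  exact κ.hasCompactSupport_normed.contDiff_convolution_right (n := (1 : ℕ∞)) _ hF.locallyIntegrable
    (κ.contDiff_normed (n := (1 : ℕ∞)))

lemma moll_fderiv {n : ℕ} (κ : ContDiffBump (0 : Pt n)) {F : Pt n → ℝ}
    (hF : Integrable F) (z e : Pt n) :
    fderiv ℝ (moll κ F) z e = ∫ w, F w * fderiv ℝ (κ.normed volume) (z - w) e := by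
  rw [moll_eq]
  have h1 : ContDiff ℝ 1 (κ.normed volume) := κ.contDiff_normed (n := (1 : ℕ∞))
  rw [(κ.hasCompactSupport_normed.hasFDerivAt_convolution_right (ContinuousLinearMap.lsmul ℝ ℝ)
    hF.locallyIntegrable h1 z).fderiv]
  rw [MeasureTheory.convolution_precompR_apply (ContinuousLinearMap.lsmul ℝ ℝ) hF.locallyIntegrable (κ.hasCompactSupport_normed.fderiv ℝ)
    (h1.continuous_fderiv (by norm_num))]
  simp [MeasureTheory.convolution]

lemma moll_grad {n : ℕ} {Q : Set (Pt n)} (hQ : MeasurableSet Q) {f : Pt n → ℝ} {g : Fin n → Pt n → ℝ}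
    (hf : IntegrableOn f Q)
    (hw : ∀ (j : Fin n) (ψ : Pt n → ℝ),
      ContDiff ℝ (⊤ : ℕ∞) ψ → HasCompactSupport ψ → tsupport ψ ⊆ Q →
      ∫ z in Q, f z * dxj ψ j z = - ∫ z in Q, g j z * ψ z)
    (κ : ContDiffBump (0 : Pt n)) (z : Pt n) (hz : closedBall z κ.rOut ⊆ Q) (j : Fin n) :
    fderiv ℝ (moll κ (Q.indicator f)) z (EuclideanSpace.single j 1, 0)
      = ∫ w in Q, g j w * κ.normed volume (z - w) := by
  rw [moll_fderiv κ ((integrable_indicator_iff hQ).2 hf)]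
  have hcd : ContDiff ℝ (⊤ : ℕ∞) (κ.normed volume) := κ.contDiff_normed (n := (⊤ : ℕ∞))
  set ψ : Pt n → ℝ := fun w => κ.normed volume (z - w) with hψ
  have hψd : ∀ w, dxj ψ j w = - fderiv ℝ (κ.normed volume) (z - w) (EuclideanSpace.single j 1, 0) := by
    intro w
    have h1 : HasFDerivAt (κ.normed volume) (fderiv ℝ (κ.normed volume) (z - w)) (z - w) :=
      (hcd.differentiable (by norm_num) _).hasFDerivAt
    have h2 : HasFDerivAt (fun w : Pt n => z - w) (-(ContinuousLinearMap.id ℝ (Pt n))) w :=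
      (hasFDerivAt_id w).const_sub z
    have h3 := (h1.comp w h2).fderiv
    have h4 : fderiv ℝ ψ w = (fderiv ℝ (κ.normed volume) (z - w)).comp (-(ContinuousLinearMap.id ℝ (Pt n))) := h3
    rw [dxj, h4]; simp
  have hsupp : Function.support ψ ⊆ closedBall z κ.rOut := by
    intro w hw
    have : z - w ∈ Function.support (κ.normed volume) := hw
    rw [κ.support_normed_eq] at this
    rw [mem_closedBall, dist_eq_norm, ← norm_neg, neg_sub]
    rw [mem_ball, dist_zero_right] at this
    exact this.le
  have hts : tsupport ψ ⊆ closedBall z κ.rOut := closure_minimal hsupp isClosed_closedBall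
  have hcs : HasCompactSupport ψ :=
    HasCompactSupport.of_support_subset_isCompact (isCompact_closedBall z κ.rOut) hsupp
  have key := hw j ψ (hcd.comp (contDiff_const.sub contDiff_id)) hcs (hts.trans hz)
  simp only [hψd] at key
  have e1 : ∫ w in Q, f w * -(fderiv ℝ (κ.normed volume) (z - w)) (EuclideanSpace.single j 1, 0) =
      - ∫ w, Q.indicator f w * fderiv ℝ (κ.normed volume) (z - w) (EuclideanSpace.single j 1, 0) := by
    rw [← integral_neg, ← integral_indicator hQ]
    congr 1; ext w
    by_cases h : w ∈ Q <;> simp [h]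
  rw [e1] at key
  linarith

lemma norm_clm_le_sum {n : ℕ} (L : Spc n →L[ℝ] ℝ) :
    ‖L‖ ≤ ∑ j, |L (EuclideanSpace.single j 1)| := by
  apply ContinuousLinearMap.opNorm_le_bound _ (by positivity)
  intro x
  have hx : x = ∑ j, x j • EuclideanSpace.single j (1 : ℝ) := by
    ext i
    simp [Pi.single_apply]
  conv_lhs => rw [hx]
  rw [map_sum, Finset.sum_mul]
  refine (norm_sum_le _ _).trans (Finset.sum_le_sum fun j _ => ?_)
  rw [map_smul, norm_smul, mul_comm]
  exact mul_le_mul_of_nonneg_left (PiLp.norm_apply_le x j) (abs_nonneg _)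

lemma kernel_mass {n : ℕ} (κ : ContDiffBump (0 : Pt n)) :
    ∫⁻ w, ENNReal.ofReal (κ.normed volume w) = 1 := by
  rw [← ofReal_integral_eq_lintegral_ofReal κ.integrable_normed
    (ae_of_all _ fun x => κ.nonneg_normed x), κ.integral_normed, ENNReal.ofReal_one]

lemma moll_slice_bound {n : ℕ} {Q : Set (Pt n)} (hQ : MeasurableSet Q) {f : Pt n → ℝ}
    {g : Fin n → Pt n → ℝ} {D : Pt n → ℝ}
    (hf : IntegrableOn f Q) (hDm : Measurable D) (hgD : ∀ j z, |g j z| ≤ D z)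
    (hw : ∀ (j : Fin n) (ψ : Pt n → ℝ),
      ContDiff ℝ (⊤ : ℕ∞) ψ → HasCompactSupport ψ → tsupport ψ ⊆ Q →
      ∫ z in Q, f z * dxj ψ j z = - ∫ z in Q, g j z * ψ z)
    (κ : ContDiffBump (0 : Pt n)) (x : Spc n) (t : ℝ) (hz : closedBall (x, t) κ.rOut ⊆ Q)
    {r : ℝ} (hr : 1 ≤ r) :
    ‖fderiv ℝ (fun y => moll κ (Q.indicator f) (y, t)) x‖ₑ ^ r ≤
      (n : ℝ≥0∞) ^ r * ∫⁻ w in Q, ENNReal.ofReal (κ.normed volume ((x, t) - w)) * ‖D w‖ₑ ^ r := by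
  have hr0 : (0 : ℝ) ≤ r := by linarith
  set v := moll κ (Q.indicator f) with hv
  have hvd : ContDiff ℝ 1 v := moll_contDiff κ ((integrable_indicator_iff hQ).2 hf)
  have h1 : ∀ j, fderiv ℝ (fun y => v (y, t)) x (EuclideanSpace.single j 1) =
      ∫ w in Q, g j w * κ.normed volume ((x, t) - w) := by
    intro j
    rw [← moll_grad hQ hf hw κ (x, t) hz j]
    have h2 : HasFDerivAt (fun y : Spc n => ((y, t) : Pt n)) (ContinuousLinearMap.inl ℝ (Spc n) ℝ) x :=
      hasFDerivAt_prodMk_left x t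
    have h3 := ((hvd.differentiable (by norm_num) (x, t)).hasFDerivAt.comp x h2).fderiv
    have h4 : fderiv ℝ (fun y => v (y, t)) x = (fderiv ℝ v (x, t)).comp (ContinuousLinearMap.inl ℝ (Spc n) ℝ) := h3
    rw [h4]; simp [hv]
  set ker : Pt n → ℝ≥0∞ := fun w => ENNReal.ofReal (κ.normed volume ((x, t) - w)) with hker
  have hkm : Measurable ker := by
    apply Measurable.ennreal_ofReal
    exact κ.continuous_normed.measurable.comp (by fun_prop)
  have hb : ‖fderiv ℝ (fun y => v (y, t)) x‖ₑ ≤ (n : ℝ≥0∞) * ∫⁻ w in Q, ker w * ‖D w‖ₑ := by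
    calc ‖fderiv ℝ (fun y => v (y, t)) x‖ₑ
        ≤ ∑ j : Fin n, ‖fderiv ℝ (fun y => v (y, t)) x (EuclideanSpace.single j 1)‖ₑ := by
          have h5 := ENNReal.ofReal_le_ofReal (norm_clm_le_sum (fderiv ℝ (fun y => v (y, t)) x))
          rw [ofReal_norm, ENNReal.ofReal_sum_of_nonneg (fun _ _ => abs_nonneg _)] at h5
          simpa [← Real.enorm_eq_ofReal_abs] using h5
      _ ≤ ∑ j : Fin n, ∫⁻ w in Q, ker w * ‖D w‖ₑ := by
          refine Finset.sum_le_sum fun j _ => ?_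
          rw [h1 j]
          refine (enorm_integral_le_lintegral_enorm _).trans (lintegral_mono fun w => ?_)
          rw [enorm_mul, mul_comm, Real.enorm_of_nonneg (κ.nonneg_normed _)]
          refine mul_le_mul_right ?_ _
          rw [Real.enorm_eq_ofReal_abs, Real.enorm_eq_ofReal_abs]
          exact ENNReal.ofReal_le_ofReal ((hgD j w).trans (le_abs_self _))
      _ = _ := by simp
  refine (ENNReal.rpow_le_rpow hb hr0).trans ?_
  rw [ENNReal.mul_rpow_of_nonneg _ _ hr0]
  refine mul_le_mul_right ?_ _
  have hDe : Measurable (fun w => ‖D w‖ₑ) := hDm.enorm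
  set μ := (volume.restrict Q).withDensity ker with hμ
  have e1 : ∫⁻ w in Q, ker w * ‖D w‖ₑ = ∫⁻ w, ‖D w‖ₑ ∂μ := by
    rw [hμ, lintegral_withDensity_eq_lintegral_mul _ hkm hDe]; rfl
  have e2 : ∫⁻ w in Q, ker w * ‖D w‖ₑ ^ r = ∫⁻ w, ‖D w‖ₑ ^ r ∂μ := by
    rw [hμ, lintegral_withDensity_eq_lintegral_mul _ hkm (hDe.pow_const r)]; rfl
  rw [e1, e2]
  refine (jensen_lint μ hr hDe.aemeasurable).trans ?_
  have hmass : μ univ ≤ 1 := by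
    rw [hμ, withDensity_apply _ MeasurableSet.univ, Measure.restrict_univ]
    refine (setLIntegral_le_lintegral _ _).trans ?_
    rw [← kernel_mass κ]
    exact (lintegral_sub_left_eq_self (fun w => ENNReal.ofReal (κ.normed volume w)) (x, t)).le
  refine mul_le_of_le_one_left zero_le ?_
  exact (ENNReal.rpow_le_rpow hmass (by linarith)).trans (by simp)

lemma moll_int_bound {n : ℕ} {z₀ : Pt n} {s σ : ℝ} {f : Pt n → ℝ}
    {g : Fin n → Pt n → ℝ} {D : Pt n → ℝ}
    (hf : IntegrableOn f (Qrs z₀ s σ)) (hDm : Measurable D) (hgD : ∀ j z, |g j z| ≤ D z)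
    (hw : ∀ (j : Fin n) (ψ : Pt n → ℝ),
      ContDiff ℝ (⊤ : ℕ∞) ψ → HasCompactSupport ψ → tsupport ψ ⊆ (Qrs z₀ s σ) →
      ∫ z in (Qrs z₀ s σ), f z * dxj ψ j z = - ∫ z in (Qrs z₀ s σ), g j z * ψ z)
    (κ : ContDiffBump (0 : Pt n)) {r : ℝ} (hr : 1 ≤ r) :
    ∫⁻ t in Ioo (z₀.2 - (σ - κ.rOut)) (z₀.2 + (σ - κ.rOut)),
      ∫⁻ x in ball z₀.1 (s - κ.rOut), ∫⁻ y in ball z₀.1 (s - κ.rOut),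
      ‖moll κ ((Qrs z₀ s σ).indicator f) (x, t) - moll κ ((Qrs z₀ s σ).indicator f) (y, t)‖ₑ ^ r ≤
    ENNReal.ofReal (2 * s) ^ r * (2 ^ (n + 1) * (volume (ball z₀.1 s) *
      ((n : ℝ≥0∞) ^ r * ∫⁻ w in Qrs z₀ s σ, ‖D w‖ₑ ^ r))) := by
  have hr0 : (0 : ℝ) ≤ r := by linarith
  set Q := Qrs z₀ s σ with hQdef
  have hQ : MeasurableSet Q := measurableSet_ball.prod measurableSet_Ioo
  set v := moll κ (Q.indicator f) with hv
  have hvd : ContDiff ℝ 1 v := moll_contDiff κ ((integrable_indicator_iff hQ).2 hf)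
  set ε := κ.rOut with hε
  have hε0 : 0 < ε := κ.rOut_pos
  set I' := Ioo (z₀.2 - (σ - ε)) (z₀.2 + (σ - ε)) with hI'
  set B' := ball z₀.1 (s - ε) with hB'
  have hsub : ∀ t ∈ I', ∀ x ∈ B', closedBall ((x, t) : Pt n) ε ⊆ Q := by
    intro t ht x hx w hw'
    rw [← closedBall_prod_same, Set.mem_prod, mem_closedBall, mem_closedBall] at hw'
    rw [hB', mem_ball] at hx
    refine ⟨?_, ?_⟩
    · rw [mem_ball]
      have := dist_triangle w.1 x z₀.1
      have h1 := hw'.1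
      linarith
    · have h2 := hw'.2
      simp only [Real.dist_eq, abs_le] at h2
      rw [hI', mem_Ioo] at ht
      constructor <;> linarith [ht.1, ht.2, h2.1, h2.2]
  set Φ : Pt n → ℝ≥0∞ := fun z => ∫⁻ w in Q, ENNReal.ofReal (κ.normed volume (z - w)) * ‖D w‖ₑ ^ r with hΦ
  have hker : Measurable (fun p : Pt n × Pt n =>
      ENNReal.ofReal (κ.normed volume (p.1 - p.2)) * ‖D p.2‖ₑ ^ r) := by
    apply Measurable.mul
    · exact (κ.continuous_normed.measurable.comp (by fun_prop)).ennreal_ofReal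
    · exact ((hDm.comp measurable_snd).enorm).pow_const r
  have hΦm : Measurable Φ := hker.lintegral_prod_right'
  have hΦi : ∫⁻ z, Φ z ≤ ∫⁻ w in Q, ‖D w‖ₑ ^ r := by
    rw [hΦ, lintegral_lintegral_swap hker.aemeasurable]
    refine lintegral_mono fun w => ?_
    have hm : Measurable (fun z : Pt n => ENNReal.ofReal (κ.normed volume (z - w))) :=
      (κ.continuous_normed.measurable.comp (by fun_prop)).ennreal_ofReal
    simp only
    rw [lintegral_mul_const _ hm]
    have : ∫⁻ z, ENNReal.ofReal (κ.normed volume (z - w)) = 1 := by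
      rw [← kernel_mass κ]
      exact lintegral_sub_right_eq_self (fun z => ENNReal.ofReal (κ.normed volume z)) w
    rw [this, one_mul]
  have hslice : ∀ t ∈ I', ∫⁻ x in B', ∫⁻ y in B', ‖v (x, t) - v (y, t)‖ₑ ^ r ≤
      ENNReal.ofReal (2 * s) ^ r * (2 ^ (n + 1) * (volume (ball z₀.1 s) *
      ((n : ℝ≥0∞) ^ r * ∫⁻ x, Φ (x, t)))) := by
    intro t ht
    have hvt : ContDiff ℝ 1 (fun x => v (x, t)) := hvd.comp (contDiff_id.prodMk contDiff_const)
    refine (poincare_ball_smooth hvt z₀.1 (s := s - ε) hr).trans ?_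
    have h1 : ∫⁻ x in B', ‖fderiv ℝ (fun y => v (y, t)) x‖ₑ ^ r ≤
        (n : ℝ≥0∞) ^ r * ∫⁻ x, Φ (x, t) := by
      rw [← lintegral_const_mul' _ _ (ENNReal.rpow_ne_top_of_nonneg hr0 (ENNReal.natCast_ne_top n))]
      refine (setLIntegral_mono' measurableSet_ball fun x hx => ?_).trans (setLIntegral_le_lintegral _ _)
      exact moll_slice_bound hQ hf hDm hgD hw κ x t (hsub t ht x hx) hr
    gcongr
    · linarith
    · linarith
  have hT : ENNReal.ofReal (2 * s) ^ r ≠ ∞ := ENNReal.rpow_ne_top_of_nonneg hr0 ENNReal.ofReal_ne_top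
  calc _ ≤ ∫⁻ t, ENNReal.ofReal (2 * s) ^ r * (2 ^ (n + 1) * (volume (ball z₀.1 s) *
      ((n : ℝ≥0∞) ^ r * ∫⁻ x, Φ (x, t)))) :=
        (setLIntegral_mono' measurableSet_Ioo hslice).trans (setLIntegral_le_lintegral _ _)
    _ = ENNReal.ofReal (2 * s) ^ r * (2 ^ (n + 1) * (volume (ball z₀.1 s) *
      ((n : ℝ≥0∞) ^ r * ∫⁻ t, ∫⁻ x, Φ (x, t)))) := by
        rw [lintegral_const_mul' _ _ hT, lintegral_const_mul' _ _ (by simp),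
          lintegral_const_mul' _ _ measure_ball_lt_top.ne,
          lintegral_const_mul' _ _ (ENNReal.rpow_ne_top_of_nonneg hr0 (ENNReal.natCast_ne_top n))]
    _ ≤ _ := by
        gcongr
        refine le_trans (le_of_eq ?_) hΦi
        rw [Measure.volume_eq_prod, lintegral_prod_symm _ hΦm.aemeasurable]

lemma weak_poincare {n : ℕ} {z₀ : Pt n} {s σ : ℝ} {f : Pt n → ℝ}
    {g : Fin n → Pt n → ℝ} {D : Pt n → ℝ}
    (hf : IntegrableOn f (Qrs z₀ s σ)) (hDm : Measurable D) (hgD : ∀ j z, |g j z| ≤ D z)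
    (hw : ∀ (j : Fin n) (ψ : Pt n → ℝ),
      ContDiff ℝ (⊤ : ℕ∞) ψ → HasCompactSupport ψ → tsupport ψ ⊆ (Qrs z₀ s σ) →
      ∫ z in (Qrs z₀ s σ), f z * dxj ψ j z = - ∫ z in (Qrs z₀ s σ), g j z * ψ z)
    (hfm : Measurable f) {r : ℝ} (hr : 1 ≤ r) :
    ∫⁻ t in Ioo (z₀.2 - σ) (z₀.2 + σ),
      ∫⁻ x in ball z₀.1 s, ∫⁻ y in ball z₀.1 s, ‖f (x, t) - f (y, t)‖ₑ ^ r ≤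
    ENNReal.ofReal (2 * s) ^ r * (2 ^ (n + 1) * (volume (ball z₀.1 s) *
      ((n : ℝ≥0∞) ^ r * ∫⁻ w in Qrs z₀ s σ, ‖D w‖ₑ ^ r))) := by
  have hr0 : (0 : ℝ) ≤ r := by linarith
  set C := ENNReal.ofReal (2 * s) ^ r * (2 ^ (n + 1) * (volume (ball z₀.1 s) *
      ((n : ℝ≥0∞) ^ r * ∫⁻ w in Qrs z₀ s σ, ‖D w‖ₑ ^ r))) with hC
  set Q := Qrs z₀ s σ with hQdef
  have hQ : MeasurableSet Q := measurableSet_ball.prod measurableSet_Ioo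
  let ε : ℕ → ℝ := fun k => 1 / ((k : ℝ) + 1)
  have hε0 : ∀ k, 0 < ε k := fun k => by positivity
  have hεt : Tendsto ε atTop (𝓝 0) := tendsto_one_div_add_atTop_nhds_zero_nat
  let κ : ℕ → ContDiffBump (0 : Pt n) := fun k =>
    ⟨ε k / 2, ε k, by have := hε0 k; linarith, by have := hε0 k; linarith⟩
  have hκ : ∀ k, (κ k).rOut = ε k := fun k => rfl
  have hFi : Integrable (Q.indicator f) := (integrable_indicator_iff hQ).2 hf
  have hae : ∀ᵐ z : Pt n, Tendsto (fun k => moll (κ k) (Q.indicator f) z) atTop (𝓝 (Q.indicator f z)) := by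
    have := ContDiffBump.ae_convolution_tendsto_right_of_locallyIntegrable (μ := (volume : Measure (Pt n)))
      (φ := κ) (l := atTop) (K := 2) (g := Q.indicator f) hεt
      (Eventually.of_forall fun k => by show ε k ≤ 2 * (ε k / 2); linarith) hFi.locallyIntegrable
    filter_upwards [this] with z hz
    simpa only [← moll_eq'] using hz
  let X := ℝ × (Spc n × Spc n)
  have q1 : Measure.QuasiMeasurePreserving (fun w : X => ((w.2.1, w.1) : Pt n)) volume volume := by
    have h1 : Measure.QuasiMeasurePreserving (Prod.map (id : ℝ → ℝ) (Prod.fst : Spc n × Spc n → Spc n))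
      (volume : Measure X) (volume.prod volume) :=
      MeasureTheory.QuasiMeasurePreserving.prodMap (Measure.QuasiMeasurePreserving.id volume) Measure.quasiMeasurePreserving_fst
    exact (Measure.measurePreserving_swap (μ := (volume : Measure ℝ)) (ν := (volume : Measure (Spc n)))).quasiMeasurePreserving.comp h1
  have q2 : Measure.QuasiMeasurePreserving (fun w : X => ((w.2.2, w.1) : Pt n)) volume volume := by
    have h1 : Measure.QuasiMeasurePreserving (Prod.map (id : ℝ → ℝ) (Prod.snd : Spc n × Spc n → Spc n))
      (volume : Measure X) (volume.prod volume) :=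
      MeasureTheory.QuasiMeasurePreserving.prodMap (Measure.QuasiMeasurePreserving.id volume) Measure.quasiMeasurePreserving_snd
    exact (Measure.measurePreserving_swap (μ := (volume : Measure ℝ)) (ν := (volume : Measure (Spc n)))).quasiMeasurePreserving.comp h1
  let S : ℕ → Set X := fun k => Ioo (z₀.2 - (σ - ε k)) (z₀.2 + (σ - ε k)) ×ˢ
    (ball z₀.1 (s - ε k) ×ˢ ball z₀.1 (s - ε k))
  let Sinf : Set X := Ioo (z₀.2 - σ) (z₀.2 + σ) ×ˢ (ball z₀.1 s ×ˢ ball z₀.1 s)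
  have hSm : ∀ k, MeasurableSet (S k) := fun k =>
    measurableSet_Ioo.prod (measurableSet_ball.prod measurableSet_ball)
  have hSinfm : MeasurableSet Sinf := measurableSet_Ioo.prod (measurableSet_ball.prod measurableSet_ball)
  let h : ℕ → X → ℝ≥0∞ := fun k w =>
    ‖moll (κ k) (Q.indicator f) (w.2.1, w.1) - moll (κ k) (Q.indicator f) (w.2.2, w.1)‖ₑ ^ r
  have hhm : ∀ k, Measurable (h k) := by
    intro k
    have hc := (moll_contDiff (κ k) hFi).continuous
    have : Continuous (fun w : X => moll (κ k) (Q.indicator f) (w.2.1, w.1) - moll (κ k) (Q.indicator f) (w.2.2, w.1)) :=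
      (hc.comp (by fun_prop)).sub (hc.comp (by fun_prop))
    exact this.enorm.measurable.pow_const r
  let hinf : X → ℝ≥0∞ := fun w => ‖f (w.2.1, w.1) - f (w.2.2, w.1)‖ₑ ^ r
  have hhinfm : Measurable hinf :=
    (((hfm.comp (by fun_prop)).sub (hfm.comp (by fun_prop))).enorm).pow_const r
  have iter : ∀ (A : Set ℝ) (B : Set (Spc n)) (F : X → ℝ≥0∞), Measurable F → MeasurableSet A → MeasurableSet B →
      ∫⁻ w in A ×ˢ (B ×ˢ B), F w = ∫⁻ t in A, ∫⁻ x in B, ∫⁻ y in B, F (t, (x, y)) := by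
    intro A B F hF hA hB
    have e : (volume : Measure X) = (volume : Measure ℝ).prod ((volume : Measure (Spc n)).prod volume) := rfl
    rw [e, ← Measure.prod_restrict, ← Measure.prod_restrict, lintegral_prod _ hF.aemeasurable]
    congr 1; ext t
    exact lintegral_prod (fun y => F (t, y)) (hF.comp measurable_prodMk_left).aemeasurable
  have hk : ∀ k, ∫⁻ w, (S k).indicator (h k) w ≤ C := by
    intro k
    rw [lintegral_indicator (hSm k), iter _ _ _ (hhm k) measurableSet_Ioo measurableSet_ball]
    exact moll_int_bound hf hDm hgD hw (κ k) hr
  have hlim : ∫⁻ w, Sinf.indicator hinf w ≤ ∫⁻ w, liminf (fun k => (S k).indicator (h k) w) atTop := by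
    apply lintegral_mono_ae
    filter_upwards [q1.ae hae, q2.ae hae] with w hw1 hw2
    by_cases hwS : w ∈ Sinf
    · rw [indicator_of_mem hwS]
      have hm1 : ((w.2.1, w.1) : Pt n) ∈ Q := ⟨hwS.2.1, hwS.1⟩
      have hm2 : ((w.2.2, w.1) : Pt n) ∈ Q := ⟨hwS.2.2, hwS.1⟩
      rw [indicator_of_mem hm1] at hw1
      rw [indicator_of_mem hm2] at hw2
      have ht : Tendsto (fun k => h k w) atTop (𝓝 (hinf w)) :=
        (ENNReal.continuous_rpow_const.tendsto _).comp ((hw1.sub hw2).enorm)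
      have hev : ∀ᶠ k in atTop, w ∈ S k := by
        obtain ⟨⟨a1, a2⟩, a3, a4⟩ := hwS
        rw [mem_ball] at a3 a4
        have l1 := hεt.eventually (gt_mem_nhds (show 0 < w.1 - (z₀.2 - σ) by linarith))
        have l2 := hεt.eventually (gt_mem_nhds (show 0 < (z₀.2 + σ) - w.1 by linarith))
        have l3 := hεt.eventually (gt_mem_nhds (show 0 < s - dist w.2.1 z₀.1 by linarith))
        have l4 := hεt.eventually (gt_mem_nhds (show 0 < s - dist w.2.2 z₀.1 by linarith))
        filter_upwards [l1, l2, l3, l4] with k b1 b2 b3 b4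
        refine ⟨⟨?_, ?_⟩, ?_, ?_⟩
        · linarith
        · linarith
        · rw [mem_ball]; linarith
        · rw [mem_ball]; linarith
      have ht' : Tendsto (fun k => (S k).indicator (h k) w) atTop (𝓝 (hinf w)) := by
        refine ht.congr' ?_
        filter_upwards [hev] with k hk
        rw [indicator_of_mem hk]
      exact ht'.liminf_eq.ge
    · rw [indicator_of_notMem hwS]; exact zero_le
  have hfin : ∫⁻ w, Sinf.indicator hinf w ≤ C := by
    refine hlim.trans ((lintegral_liminf_le fun k => (hhm k).indicator (hSm k)).trans ?_)
    refine liminf_le_of_le (by isBoundedDefault) ?_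
    intro b hb
    obtain ⟨k, hk'⟩ := hb.exists
    exact hk'.trans (hk k)
  rw [lintegral_indicator hSinfm, iter _ _ _ hhinfm measurableSet_Ioo measurableSet_ball] at hfin
  exact hfin

lemma bump_cdf (κ : ContDiffBump (0 : ℝ)) (t a : ℝ) (ha : a ≤ t - κ.rOut) :
    ∃ K : ℝ → ℝ, ContDiff ℝ (⊤ : ℕ∞) K ∧ (∀ x, deriv K x = κ.normed volume (t - x)) ∧
      (∀ x ≤ t - κ.rOut, K x = 0) ∧ (∀ x, t + κ.rOut ≤ x → K x = 1) ∧ (∀ x, 0 ≤ K x ∧ K x ≤ 1) := by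
  have hcd : ContDiff ℝ (⊤ : ℕ∞) (fun w => κ.normed volume (t - w)) :=
    (κ.contDiff_normed (n := (⊤ : ℕ∞))).comp (contDiff_const.sub contDiff_id)
  have hc := hcd.continuous
  have hz : ∀ w, κ.rOut ≤ |t - w| → κ.normed volume (t - w) = 0 := by
    intro w hw
    have : t - w ∉ Function.support (κ.normed volume) := by
      rw [κ.support_normed_eq, mem_ball, dist_zero_right, Real.norm_eq_abs]; linarith
    simpa using this
  have hint : Integrable (fun w => κ.normed volume (t - w)) :=
    (κ.integrable_normed (μ := volume)).comp_sub_left t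
  have hone : ∫ w, κ.normed volume (t - w) = 1 := by
    rw [integral_sub_left_eq_self (fun w => κ.normed volume w) volume t]; exact κ.integral_normed
  have hd : ∀ x, HasDerivAt (fun x => ∫ w in a..x, κ.normed volume (t - w)) (κ.normed volume (t - x)) x :=
    fun x => intervalIntegral.integral_hasDerivAt_right (hc.intervalIntegrable _ _)
      hc.stronglyMeasurable.stronglyMeasurableAtFilter hc.continuousAt
  have h0 : ∀ x ≤ t - κ.rOut, ∫ w in a..x, κ.normed volume (t - w) = 0 := by
    intro x hx
    apply intervalIntegral.integral_zero_ae
    refine ae_of_all _ fun w hw => hz w ?_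
    have h1 : w ≤ max a x := by
      rw [uIoc, mem_Ioc] at hw; exact hw.2
    have h2 : w ≤ t - κ.rOut := h1.trans (max_le ha hx)
    exact le_trans (by linarith) (le_abs_self _)
  refine ⟨fun x => ∫ w in a..x, κ.normed volume (t - w), ?_, fun x => (hd x).deriv, h0, ?_, ?_⟩
  · rw [contDiff_infty_iff_deriv]
    refine ⟨fun x => (hd x).differentiableAt, ?_⟩
    have : deriv (fun x => ∫ w in a..x, κ.normed volume (t - w)) = fun x => κ.normed volume (t - x) :=
      funext fun x => (hd x).deriv
    rw [this]; exact hcd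
  · intro x hx
    have hr := κ.rOut_pos
    simp only
    rw [intervalIntegral.integral_of_le (by linarith), ← hone]
    apply setIntegral_eq_integral_of_forall_compl_eq_zero
    intro w hw
    apply hz
    rw [mem_Ioc, not_and_or, not_lt, not_le] at hw
    rcases hw with h | h
    · exact le_trans (by linarith) (le_abs_self _)
    · exact le_trans (by linarith) (neg_le_abs _)
  · intro x
    rcases le_total a x with h | h
    · simp only
      rw [intervalIntegral.integral_of_le h]
      constructor
      · exact integral_nonneg fun w => κ.nonneg_normed _
      · rw [← hone]
        exact setIntegral_le_integral hint (ae_of_all _ fun w => κ.nonneg_normed _)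
    · simp only; rw [h0 x (h.trans ha)]; norm_num

lemma osc_1d {a b : ℝ} (hab : a < b) {m : ℝ → ℝ} (hm : IntegrableOn m (Ioo a b)) {O : ℝ}
    (hO : ∀ ψ : ℝ → ℝ, ContDiff ℝ (⊤ : ℕ∞) ψ → HasCompactSupport ψ → tsupport ψ ⊆ Ioo a b →
      (∀ t, |ψ t| ≤ 1) → |∫ t in Ioo a b, m t * deriv ψ t| ≤ O) :
    ∃ c : ℝ, ∀ᵐ t ∂(volume.restrict (Ioo a b)), |m t - c| ≤ O := by
  let ε : ℕ → ℝ := fun k => 1 / ((k : ℝ) + 1)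
  have hε0 : ∀ k, 0 < ε k := fun k => by positivity
  have hεt : Tendsto ε atTop (𝓝 0) := tendsto_one_div_add_atTop_nhds_zero_nat
  let κ : ℕ → ContDiffBump (0 : ℝ) := fun k =>
    ⟨ε k / 2, ε k, by have := hε0 k; linarith, by have := hε0 k; linarith⟩
  set M := (Ioo a b).indicator m with hM
  have hMi : Integrable M := (integrable_indicator_iff measurableSet_Ioo).2 hm
  have hae : ∀ᵐ t : ℝ, Tendsto (fun k => ∫ w, M w * (κ k).normed volume (t - w)) atTop (𝓝 (M t)) := by
    have := ContDiffBump.ae_convolution_tendsto_right_of_locallyIntegrable (μ := (volume : Measure ℝ))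
      (φ := κ) (l := atTop) (K := 2) (g := M) hεt
      (Eventually.of_forall fun k => by show ε k ≤ 2 * (ε k / 2); linarith) hMi.locallyIntegrable
    filter_upwards [this] with z hz
    refine hz.congr fun k => ?_
    rw [← MeasureTheory.convolution_flip]
    simp [MeasureTheory.convolution, mul_comm]
  have hae' : ∀ᵐ t ∂(volume.restrict (Ioo a b)), t ∈ Ioo a b ∧
      Tendsto (fun k => ∫ w, M w * (κ k).normed volume (t - w)) atTop (𝓝 (m t)) := by
    rw [ae_restrict_iff' measurableSet_Ioo]
    filter_upwards [hae] with t ht hti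
    refine ⟨hti, ?_⟩
    rwa [hM, indicator_of_mem hti] at ht
  have hne : (volume.restrict (Ioo a b)) ≠ 0 := by
    rw [Ne, Measure.restrict_eq_zero, Real.volume_Ioo]
    simp [hab]
  haveI : NeBot (ae (volume.restrict (Ioo a b))) := ae_neBot.2 hne
  obtain ⟨τ, hτI, hτ⟩ := hae'.exists
  refine ⟨m τ, ?_⟩
  filter_upwards [hae'] with t ht
  obtain ⟨htI, ht⟩ := ht
  have hlim := (ht.sub hτ).abs
  refine le_of_tendsto hlim ?_
  have l1 := hεt.eventually (gt_mem_nhds (show 0 < t - a by linarith [htI.1]))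
  have l2 := hεt.eventually (gt_mem_nhds (show 0 < b - t by linarith [htI.2]))
  have l3 := hεt.eventually (gt_mem_nhds (show 0 < τ - a by linarith [hτI.1]))
  have l4 := hεt.eventually (gt_mem_nhds (show 0 < b - τ by linarith [hτI.2]))
  filter_upwards [l1, l2, l3, l4] with k b1 b2 b3 b4
  have hr : (κ k).rOut = ε k := rfl
  obtain ⟨K1, c1, d1, z1, o1, p1⟩ := bump_cdf (κ k) t a (by rw [hr]; linarith)
  obtain ⟨K2, c2, d2, z2, o2, p2⟩ := bump_cdf (κ k) τ a (by rw [hr]; linarith)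
  rw [hr] at z1 o1 z2 o2
  set A := min (t - ε k) (τ - ε k) with hA
  set B := max (t + ε k) (τ + ε k) with hB
  have hsupp : Function.support (fun x => K1 x - K2 x) ⊆ Icc A B := by
    intro x hx
    by_contra hcon
    apply hx
    rw [mem_Icc, not_and_or, not_le, not_le] at hcon
    rcases hcon with h | h
    · have := lt_min_iff.1 h
      simp only
      rw [z1 x this.1.le, z2 x this.2.le, sub_zero]
    · have := max_lt_iff.1 h
      simp only
      rw [o1 x this.1.le, o2 x this.2.le, sub_self]
  have key := hO (fun x => K1 x - K2 x) (c1.sub c2)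
    (HasCompactSupport.of_support_subset_isCompact isCompact_Icc hsupp)
    ((closure_minimal hsupp isClosed_Icc).trans (by
      intro x hx
      constructor
      · exact lt_of_lt_of_le (lt_min (by linarith) (by linarith)) hx.1
      · exact lt_of_le_of_lt hx.2 (max_lt (by linarith) (by linarith))))
    (fun x => by rw [abs_le]; constructor <;> linarith [(p1 x).1, (p1 x).2, (p2 x).1, (p2 x).2])
  refine le_trans (le_of_eq ?_) key
  congr 1
  have hd : ∀ x, deriv (fun x => K1 x - K2 x) x = (κ k).normed volume (t - x) - (κ k).normed volume (τ - x) := by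
    intro x
    have e1 := (c1.differentiable (by norm_num) x)
    have e2 := (c2.differentiable (by norm_num) x)
    rw [← d1 x, ← d2 x]
    exact deriv_sub e1 e2
  simp only [hd]
  have hbd : ∀ t : ℝ, Integrable (fun w => M w * (κ k).normed volume (t - w)) := by
    intro t
    have hc : Continuous (fun w => (κ k).normed volume (t - w)) :=
      (κ k).continuous_normed.comp (by fun_prop)
    obtain ⟨C, hC⟩ := ((κ k).hasCompactSupport_normed (μ := volume)).exists_bound_of_continuous (κ k).continuous_normed
    exact hMi.mul_bdd (c := C) hc.aestronglyMeasurable (ae_of_all _ fun w => hC _)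
  rw [← integral_sub (hbd t) (hbd τ), ← integral_indicator measurableSet_Ioo]
  congr 1; ext w
  by_cases h : w ∈ Ioo a b
  · simp only [hM, indicator_of_mem h]; ring
  · simp only [hM, indicator_of_notMem h]; ring

lemma cutoff (n : ℕ) : ∃ C : ℝ, 1 ≤ C ∧ ∀ (x₀ : Spc n) (s : ℝ), 0 < s → ∃ η : Spc n → ℝ,
    ContDiff ℝ (⊤ : ℕ∞) η ∧ HasCompactSupport η ∧ tsupport η ⊆ ball x₀ s ∧
    (∀ x, 0 ≤ η x ∧ η x ≤ 1) ∧ (∀ x ∈ ball x₀ (s / 4), η x = 1) ∧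
    (∀ x j, |fderiv ℝ η x (EuclideanSpace.single j 1)| ≤ C / s) := by
  let b : ContDiffBump (0 : Spc n) := ⟨1 / 4, 1 / 2, by norm_num, by norm_num⟩
  have hbc : ContDiff ℝ (⊤ : ℕ∞) b := b.contDiff
  obtain ⟨C, hC⟩ := (b.hasCompactSupport.fderiv (𝕜 := ℝ)).exists_bound_of_continuous
    (hbc.continuous_fderiv (by norm_num))
  refine ⟨max C 1, le_max_right _ _, fun x₀ s hs => ?_⟩
  have haff : ContDiff ℝ (⊤ : ℕ∞) (fun x : Spc n => s⁻¹ • (x - x₀)) :=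
    (contDiff_id.sub contDiff_const).const_smul _
  have hz : ∀ x, x ∉ closedBall x₀ (s / 2) → b (s⁻¹ • (x - x₀)) = 0 := by
    intro x hx
    apply b.zero_of_le_dist
    rw [mem_closedBall, not_le, dist_eq_norm] at hx
    rw [dist_zero_right, norm_smul, norm_inv, Real.norm_of_nonneg hs.le]
    show (1:ℝ) / 2 ≤ _
    rw [inv_mul_eq_div, le_div_iff₀ hs]; linarith
  have hsup : Function.support (fun x : Spc n => b (s⁻¹ • (x - x₀))) ⊆ closedBall x₀ (s / 2) := by
    intro x hx; by_contra h; exact hx (hz x h)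
  refine ⟨fun x => b (s⁻¹ • (x - x₀)), hbc.comp haff,
    HasCompactSupport.of_support_subset_isCompact (isCompact_closedBall _ _) hsup,
    (closure_minimal hsup isClosed_closedBall).trans (closedBall_subset_ball (by linarith)),
    fun x => ⟨b.nonneg, b.le_one⟩, ?_, ?_⟩
  · intro x hx
    apply b.one_of_mem_closedBall
    rw [mem_ball, dist_eq_norm] at hx
    rw [mem_closedBall, dist_zero_right, norm_smul, norm_inv, Real.norm_of_nonneg hs.le]
    show _ ≤ (1:ℝ) / 4
    rw [inv_mul_eq_div, div_le_iff₀ hs]; linarith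
  · intro x j
    have h1 : HasFDerivAt (fun x : Spc n => s⁻¹ • (x - x₀)) (s⁻¹ • ContinuousLinearMap.id ℝ (Spc n)) x :=
      ((hasFDerivAt_id x).sub_const x₀).const_smul s⁻¹
    have h2 := (hbc.differentiable (by norm_num) (s⁻¹ • (x - x₀))).hasFDerivAt.comp x h1
    have h3 : fderiv ℝ (fun x : Spc n => b (s⁻¹ • (x - x₀))) x = _ := h2.fderiv
    rw [h3]
    have h4 := (fderiv ℝ b (s⁻¹ • (x - x₀))).le_opNorm (EuclideanSpace.single j 1)
    simp only [EuclideanSpace.norm_single, norm_one, mul_one] at h4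
    simp only [ContinuousLinearMap.comp_apply, ContinuousLinearMap.smul_apply, ContinuousLinearMap.id_apply, map_smul, smul_eq_mul]
    rw [abs_mul, abs_of_pos (inv_pos.2 hs), inv_mul_eq_div]
    gcongr
    exact (h4.trans (hC _)).trans (le_max_left _ _)

lemma Qrs_restrict {n : ℕ} (z₀ : Pt n) (s σ : ℝ) : (volume.restrict (Qrs z₀ s σ) : Measure (Pt n)) =
    (volume.restrict (ball z₀.1 s)).prod (volume.restrict (Ioo (z₀.2 - σ) (z₀.2 + σ))) := by
  rw [Measure.prod_restrict]; rfl

lemma Qrs_meas {n : ℕ} (z₀ : Pt n) (s σ : ℝ) : MeasurableSet (Qrs z₀ s σ) :=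
  measurableSet_ball.prod measurableSet_Ioo

lemma gluing {n : ℕ} {z₀ : Pt n} {s σ : ℝ} (hσ : 0 < σ) {f : Pt n → ℝ} {V : Fin n → Pt n → ℝ}
    (hf : IntegrableOn f (Qrs z₀ s σ)) (hV : ∀ j, IntegrableOn (V j) (Qrs z₀ s σ))
    (hw : ∀ Ψ : Pt n → ℝ, ContDiff ℝ (⊤ : ℕ∞) Ψ → HasCompactSupport Ψ → tsupport Ψ ⊆ Qrs z₀ s σ →
      ∫ z in Qrs z₀ s σ, f z * fderiv ℝ Ψ z (0, 1) = ∫ z in Qrs z₀ s σ, ∑ j, V j z * dxj Ψ j z)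
    {η : Spc n → ℝ} (hη : ContDiff ℝ (⊤ : ℕ∞) η) (hηc : HasCompactSupport η)
    (hηs : tsupport η ⊆ ball z₀.1 s) (hη1 : ∀ x, 0 ≤ η x ∧ η x ≤ 1) {C : ℝ}
    (hηC : ∀ x j, |fderiv ℝ η x (EuclideanSpace.single j 1)| ≤ C) :
    ∃ c : ℝ, ∀ᵐ t ∂(volume.restrict (Ioo (z₀.2 - σ) (z₀.2 + σ))),
      |(∫ x in ball z₀.1 s, η x * f (x, t)) - c| ≤ C * ∫ z in Qrs z₀ s σ, ∑ j, |V j z| := by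
  have hηf : IntegrableOn (fun z : Pt n => η z.1 * f z) (Qrs z₀ s σ) := by
    refine Integrable.bdd_mul (c := 1) hf (hη.continuous.comp continuous_fst).aestronglyMeasurable ?_
    refine ae_of_all _ fun z => ?_
    rw [Real.norm_eq_abs, abs_of_nonneg (hη1 _).1]; exact (hη1 _).2
  have hm : IntegrableOn (fun t => ∫ x in ball z₀.1 s, η x * f (x, t)) (Ioo (z₀.2 - σ) (z₀.2 + σ)) := by
    have h := hηf
    rw [IntegrableOn, Qrs_restrict] at h
    exact h.integral_prod_right
  refine osc_1d (by linarith) hm ?_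
  intro ψ hψ hψc hψs hψ1
  have hη' : ∀ z : Pt n, HasFDerivAt (fun z : Pt n => η z.1) ((fderiv ℝ η z.1).comp (ContinuousLinearMap.fst ℝ _ _)) z :=
    fun z => (hη.differentiable (by norm_num) z.1).hasFDerivAt.comp z hasFDerivAt_fst
  have hψ' : ∀ z : Pt n, HasFDerivAt (fun z : Pt n => ψ z.2) ((fderiv ℝ ψ z.2).comp (ContinuousLinearMap.snd ℝ _ _)) z :=
    fun z => (hψ.differentiable (by norm_num) z.2).hasFDerivAt.comp z hasFDerivAt_snd
  have hΨd : ∀ z : Pt n, fderiv ℝ (fun z : Pt n => η z.1 * ψ z.2) z = _ := fun z => ((hη' z).mul (hψ' z)).fderiv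
  have hsub : tsupport (fun z : Pt n => η z.1 * ψ z.2) ⊆ tsupport η ×ˢ tsupport ψ := by
    apply closure_minimal
    · intro z hz
      have := mul_ne_zero_iff.1 hz
      exact ⟨subset_tsupport _ this.1, subset_tsupport _ this.2⟩
    · exact (isClosed_tsupport _).prod (isClosed_tsupport _)
  have key := hw (fun z => η z.1 * ψ z.2)
    ((hη.comp contDiff_fst).mul (hψ.comp contDiff_snd))
    (HasCompactSupport.of_support_subset_isCompact (hηc.isCompact.prod hψc.isCompact)
      ((subset_tsupport _).trans hsub)) (hsub.trans (prod_mono hηs hψs))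
  have e1 : ∫ t in Ioo (z₀.2 - σ) (z₀.2 + σ), (∫ x in ball z₀.1 s, η x * f (x, t)) * deriv ψ t
      = ∫ z in Qrs z₀ s σ, f z * fderiv ℝ (fun z : Pt n => η z.1 * ψ z.2) z (0, 1) := by
    have e2 : (fun z : Pt n => f z * fderiv ℝ (fun z : Pt n => η z.1 * ψ z.2) z (0, 1)) =
        fun z => η z.1 * f z * deriv ψ z.2 := by
      ext z
      rw [hΨd]
      simp
      ring
    have hi : IntegrableOn (fun z : Pt n => η z.1 * f z * deriv ψ z.2) (Qrs z₀ s σ) := by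
      have hdc := hψ.continuous_deriv (by norm_num)
      obtain ⟨M, hM⟩ := hψc.deriv.exists_bound_of_continuous hdc
      refine Integrable.mul_bdd (c := M) hηf (hdc.comp continuous_snd).aestronglyMeasurable ?_
      exact ae_of_all _ fun z => hM _
    rw [e2, Qrs_restrict]
    rw [IntegrableOn, Qrs_restrict] at hi
    rw [integral_prod_symm _ hi]
    congr 1; ext t
    rw [← integral_mul_const]
  rw [e1, key, ← Real.norm_eq_abs]
  rw [← integral_const_mul]
  refine norm_integral_le_of_norm_le ?_ ?_
  · exact (integrable_finsetSum _ fun j _ => (hV j).abs).const_mul C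
  · refine ae_of_all _ fun z => ?_
    rw [Real.norm_eq_abs, Finset.mul_sum]
    refine (Finset.abs_sum_le_sum_abs _ _).trans (Finset.sum_le_sum fun j _ => ?_)
    rw [abs_mul, mul_comm]
    gcongr
    rw [dxj, hΨd]
    have : ((η z.1 • (fderiv ℝ ψ z.2).comp (ContinuousLinearMap.snd ℝ (Spc n) ℝ) + ψ z.2 • (fderiv ℝ η z.1).comp (ContinuousLinearMap.fst ℝ (Spc n) ℝ)) (EuclideanSpace.single j 1, 0)) = ψ z.2 * fderiv ℝ η z.1 (EuclideanSpace.single j 1) := by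
      simp
    rw [this, abs_mul]
    calc _ ≤ 1 * |fderiv ℝ η z.1 (EuclideanSpace.single j 1)| := by gcongr; exact hψ1 _
      _ ≤ C := by rw [one_mul]; exact hηC _ _

lemma slice_bound {n : ℕ} {x₀ : Spc n} {s : ℝ} (hs : 0 < s) {v : Spc n → ℝ}
    (hv : IntegrableOn v (ball x₀ s)) {η : Spc n → ℝ} (hη : Continuous η)
    (hη1 : ∀ x, 0 ≤ η x ∧ η x ≤ 1) (hη2 : ∀ x ∈ ball x₀ (s / 4), η x = 1) {c₀ O : ℝ}
    (hO : |(∫ x in ball x₀ s, η x * v x) - c₀| ≤ O) (x : Spc n) :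
    ‖v x - c₀ / ∫ y in ball x₀ s, η y‖ₑ ≤ ENNReal.ofReal (4 ^ n / (volume (ball x₀ s)).toReal) *
      ((∫⁻ y in ball x₀ s, ‖v x - v y‖ₑ) + ENNReal.ofReal O) := by
  set b := (volume (ball x₀ s)).toReal with hb
  have hbpos : 0 < b := ENNReal.toReal_pos (measure_ball_pos _ _ hs).ne' measure_ball_lt_top.ne
  have hO0 : 0 ≤ O := (abs_nonneg _).trans hO
  have hfin : IsFiniteMeasure (volume.restrict (ball x₀ s)) := ⟨by simpa using measure_ball_lt_top⟩
  have hηn : ∀ y, ‖η y‖ ≤ 1 := fun y => by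
    rw [Real.norm_eq_abs, abs_of_nonneg (hη1 _).1]; exact (hη1 _).2
  have hηi : IntegrableOn η (ball x₀ s) :=
    Integrable.of_bound hη.aestronglyMeasurable 1 (ae_of_all _ hηn)
  set E := ∫ y in ball x₀ s, η y with hE
  have hElow : b / 4 ^ n ≤ E := by
    have h1 : (volume (ball x₀ (s / 4))).toReal = b / 4 ^ n := by
      rw [hb, Measure.addHaar_ball_of_pos _ _ (by positivity), Measure.addHaar_ball_of_pos _ _ hs]
      simp only [ENNReal.toReal_mul, finrank_euclideanSpace, Fintype.card_fin]
      rw [ENNReal.toReal_ofReal (by positivity), ENNReal.toReal_ofReal (by positivity), div_pow]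
      ring
    rw [← h1]
    have hsub : ball x₀ (s / 4) ⊆ ball x₀ s := ball_subset_ball (by linarith)
    calc (volume (ball x₀ (s / 4))).toReal = ∫ y in ball x₀ (s / 4), (1:ℝ) := by simp [Measure.real]
      _ = ∫ y in ball x₀ (s / 4), η y := setIntegral_congr_fun measurableSet_ball fun y hy => (hη2 y hy).symm
      _ ≤ E := setIntegral_mono_set hηi (ae_of_all _ fun y => (hη1 y).1) hsub.eventuallyLE
  have hEpos : 0 < E := lt_of_lt_of_le (by positivity) hElow
  have hηv : IntegrableOn (fun y => η y * v y) (ball x₀ s) :=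
    Integrable.bdd_mul (c := 1) hv hη.aestronglyMeasurable (ae_of_all _ hηn)
  have hdi : IntegrableOn (fun y => v x - v y) (ball x₀ s) := (integrable_const _).sub hv
  have h1 : E * v x - ∫ y in ball x₀ s, η y * v y = ∫ y in ball x₀ s, η y * (v x - v y) := by
    simp only [mul_sub]
    rw [integral_sub (hηi.mul_const _) hηv, integral_mul_const]
  have h2 : |E * v x - ∫ y in ball x₀ s, η y * v y| ≤ ∫ y in ball x₀ s, ‖v x - v y‖ := by
    rw [h1, ← Real.norm_eq_abs]
    refine norm_integral_le_of_norm_le hdi.norm (ae_of_all _ fun y => ?_)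
    rw [norm_mul]
    exact mul_le_of_le_one_left (norm_nonneg _) (hηn y)
  have h3 : |v x - c₀ / E| ≤ 4 ^ n / b * ((∫ y in ball x₀ s, ‖v x - v y‖) + O) := by
    have : v x - c₀ / E = (E * v x - c₀) / E := by field_simp
    rw [this, abs_div, abs_of_pos hEpos]
    have h4 : |E * v x - c₀| ≤ (∫ y in ball x₀ s, ‖v x - v y‖) + O := by
      calc _ = |(E * v x - ∫ y in ball x₀ s, η y * v y) + ((∫ y in ball x₀ s, η y * v y) - c₀)| := by ring_nf
        _ ≤ _ := (abs_add_le _ _).trans (add_le_add h2 hO)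
    have h5 : 1 / E ≤ 4 ^ n / b := by
      rw [div_le_div_iff₀ hEpos hbpos]
      rw [div_le_iff₀ (by positivity)] at hElow; linarith
    rw [div_eq_mul_one_div, mul_comm]
    gcongr
  rw [← ofReal_norm_eq_enorm, Real.norm_eq_abs]
  refine (ENNReal.ofReal_le_ofReal h3).trans ?_
  rw [ENNReal.ofReal_mul (by positivity), ENNReal.ofReal_add (integral_nonneg fun _ => norm_nonneg _) hO0,
    ofReal_integral_norm_eq_lintegral_enorm hdi]

lemma core {n : ℕ} {z₀ : Pt n} {s σ : ℝ} (hs : 0 < s) (hσ : 0 < σ) {f : Pt n → ℝ}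
    {g : Fin n → Pt n → ℝ} {D : Pt n → ℝ} {V : Fin n → Pt n → ℝ}
    (hfm : Measurable f) (hf : IntegrableOn f (Qrs z₀ s σ)) (hDm : Measurable D)
    (hgD : ∀ j z, |g j z| ≤ D z)
    (hg : ∀ j ψ, ContDiff ℝ (⊤:ℕ∞) ψ → HasCompactSupport ψ → tsupport ψ ⊆ Qrs z₀ s σ →
      ∫ z in Qrs z₀ s σ, f z * dxj ψ j z = -∫ z in Qrs z₀ s σ, g j z * ψ z)
    (hV : ∀ j, IntegrableOn (V j) (Qrs z₀ s σ))
    (hw : ∀ Ψ : Pt n → ℝ, ContDiff ℝ (⊤ : ℕ∞) Ψ → HasCompactSupport Ψ → tsupport Ψ ⊆ Qrs z₀ s σ →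
      ∫ z in Qrs z₀ s σ, f z * fderiv ℝ Ψ z (0, 1) = ∫ z in Qrs z₀ s σ, ∑ j, V j z * dxj Ψ j z)
    {r : ℝ} (hr : 1 ≤ r) {C : ℝ}
    (hC : ∀ (x₀ : Spc n) (s : ℝ), 0 < s → ∃ η : Spc n → ℝ,
      ContDiff ℝ (⊤ : ℕ∞) η ∧ HasCompactSupport η ∧ tsupport η ⊆ ball x₀ s ∧
      (∀ x, 0 ≤ η x ∧ η x ≤ 1) ∧ (∀ x ∈ ball x₀ (s / 4), η x = 1) ∧
      (∀ x j, |fderiv ℝ η x (EuclideanSpace.single j 1)| ≤ C / s)) :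
    ∃ c : ℝ, ∫⁻ z in Qrs z₀ s σ, ‖f z - c‖ₑ ^ r ≤
      2 ^ (r - 1) * ((4 ^ n : ℝ≥0∞) ^ r * (ENNReal.ofReal (2 * s) ^ r * (2 ^ (n + 1) *
          ((n : ℝ≥0∞) ^ r * ∫⁻ w in Qrs z₀ s σ, ‖D w‖ₑ ^ r)))
        + ENNReal.ofReal (4 ^ n / (volume (ball z₀.1 s)).toReal *
            (C / s * ∫ z in Qrs z₀ s σ, ∑ j, |V j z|)) ^ r * volume (Qrs z₀ s σ)) := by
  obtain ⟨η, hη, hηc, hηs, hη1, hη2, hηC⟩ := hC z₀.1 s hs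
  obtain ⟨c₀, hc₀⟩ := gluing hσ hf hV hw hη hηc hηs hη1 hηC
  set O := C / s * ∫ z in Qrs z₀ s σ, ∑ j, |V j z| with hO
  set b := (volume (ball z₀.1 s)).toReal with hb
  have hbpos : 0 < b := ENNReal.toReal_pos (measure_ball_pos _ _ hs).ne' measure_ball_lt_top.ne
  have hbE : volume (ball z₀.1 s) = ENNReal.ofReal b := (ENNReal.ofReal_toReal measure_ball_lt_top.ne).symm
  set κ := ENNReal.ofReal (4 ^ n / b) with hκ
  have hr0 : 0 ≤ r := by linarith
  refine ⟨c₀ / ∫ y in ball z₀.1 s, η y, ?_⟩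
  set c := c₀ / ∫ y in ball z₀.1 s, η y with hc
  have hslice : ∀ᵐ t ∂(volume.restrict (Ioo (z₀.2 - σ) (z₀.2 + σ))),
      IntegrableOn (fun x => f (x, t)) (ball z₀.1 s) := by
    have h := hf
    rw [IntegrableOn, Qrs_restrict] at h
    exact h.prod_left_ae
  have hfm2 : Measurable (fun w : (ℝ × Spc n) × Spc n => ‖f (w.1.2, w.1.1) - f (w.2, w.1.1)‖ₑ ^ r) := by
    fun_prop
  have hmeasz : Measurable (fun z : Pt n => ‖f z - c‖ₑ ^ r) := by fun_prop
  have hJ : Measurable (fun w : ℝ × Spc n => ∫⁻ y in ball z₀.1 s, ‖f (w.2, w.1) - f (y, w.1)‖ₑ ^ r) :=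
    hfm2.lintegral_prod_right'
  rw [Qrs_restrict, lintegral_prod_symm _ hmeasz.aemeasurable]
  have hpt : ∀ᵐ t ∂(volume.restrict (Ioo (z₀.2 - σ) (z₀.2 + σ))),
      ∫⁻ x in ball z₀.1 s, ‖f (x, t) - c‖ₑ ^ r ≤
        2 ^ (r - 1) * (κ ^ r * (volume (ball z₀.1 s) ^ (r - 1) *
          ∫⁻ x in ball z₀.1 s, ∫⁻ y in ball z₀.1 s, ‖f (x, t) - f (y, t)‖ₑ ^ r)
          + ENNReal.ofReal (4 ^ n / b * O) ^ r * volume (ball z₀.1 s)) := by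
    filter_upwards [hslice, hc₀] with t ht1 ht2
    have hO0 : 0 ≤ O := (abs_nonneg _).trans ht2
    have hJt : Measurable (fun x => ∫⁻ y in ball z₀.1 s, ‖f (x, t) - f (y, t)‖ₑ ^ r) :=
      hJ.comp (measurable_const.prodMk measurable_id)
    have hx : ∀ x, ‖f (x, t) - c‖ₑ ^ r ≤ 2 ^ (r - 1) * (κ ^ r * (volume (ball z₀.1 s) ^ (r - 1) *
          ∫⁻ y in ball z₀.1 s, ‖f (x, t) - f (y, t)‖ₑ ^ r) + ENNReal.ofReal (4 ^ n / b * O) ^ r) := by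
      intro x
      have h1 := slice_bound hs ht1 hη.continuous hη1 hη2 ht2 x
      refine (ENNReal.rpow_le_rpow h1 hr0).trans ?_
      rw [mul_add]
      refine (ENNReal.rpow_add_le_mul_rpow_add_rpow _ _ hr).trans ?_
      rw [ENNReal.ofReal_mul (p := 4 ^ n / b) (by positivity)]
      gcongr _ * (?_ + _)
      rw [ENNReal.mul_rpow_of_nonneg _ _ hr0]
      gcongr
      have := jensen_lint (volume.restrict (ball z₀.1 s)) hr (g := fun y => ‖f (x, t) - f (y, t)‖ₑ)
        (by fun_prop)
      simpa using this
    refine (lintegral_mono hx).trans (le_of_eq ?_)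
    rw [lintegral_const_mul _ (by fun_prop), lintegral_add_right _ measurable_const, lintegral_const_mul _ (by fun_prop),
      lintegral_const_mul _ hJt]
    simp
  refine (lintegral_mono_ae hpt).trans ?_
  have hW := weak_poincare hf hDm hgD hg hfm hr
  have hJ2 : Measurable (fun t : ℝ => ∫⁻ x in ball z₀.1 s, ∫⁻ y in ball z₀.1 s, ‖f (x, t) - f (y, t)‖ₑ ^ r) :=
    hJ.lintegral_prod_right'
  rw [lintegral_const_mul _ (by fun_prop), lintegral_add_right _ measurable_const, lintegral_const_mul _ (by fun_prop),
      lintegral_const_mul _ hJ2, lintegral_const]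
  have hvol : volume (Qrs z₀ s σ) = volume (ball z₀.1 s) * volume (Ioo (z₀.2 - σ) (z₀.2 + σ)) :=
    Measure.prod_prod _ _
  rw [hvol, Measure.restrict_apply_univ, ← mul_assoc (_ ^ r) (volume (ball z₀.1 s))]
  gcongr 2 ^ (r - 1) * (?_ + _)
  refine (mul_le_mul_right (mul_le_mul_right hW _) _).trans (le_of_eq ?_)
  rw [← Qrs_restrict]
  have hB0 := (measure_ball_pos (volume : Measure (Spc n)) z₀.1 hs).ne'
  have hBt := (measure_ball_lt_top (μ := (volume : Measure (Spc n))) (x := z₀.1) (r := s)).ne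
  have e1 : κ ^ r * volume (ball z₀.1 s) ^ (r - 1) * volume (ball z₀.1 s) = (4 ^ n) ^ r := by
    have e3 : volume (ball z₀.1 s) ^ r = volume (ball z₀.1 s) ^ (r - 1) * volume (ball z₀.1 s) := by
      conv_rhs => rw [← ENNReal.rpow_one (volume (ball z₀.1 s)), ← ENNReal.rpow_mul, one_mul, ← ENNReal.rpow_add _ _ hB0 hBt]
      ring_nf
    rw [mul_assoc, ← e3, ← ENNReal.mul_rpow_of_nonneg _ _ hr0, hbE, hκ, ← ENNReal.ofReal_mul (by positivity),
      div_mul_cancel₀ _ hbpos.ne', ENNReal.ofReal_pow (by norm_num)]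
    norm_num
  rw [← e1]
  ring

lemma avg_osc {β : Type*} [MeasurableSpace β] (μ : Measure β) [IsFiniteMeasure μ] (hμ : μ ≠ 0) {f : β → ℝ}
    (hf : Integrable f μ) {r : ℝ} (hr : 1 ≤ r) (c : ℝ) :
    ∫⁻ z, ‖f z - ⨍ w, f w ∂μ‖ₑ ^ r ∂μ ≤ 2 ^ r * ∫⁻ z, ‖f z - c‖ₑ ^ r ∂μ := by
  have hr0 : 0 ≤ r := by linarith
  have hμ0 : μ univ ≠ 0 := by simpa using hμ
  have hμt : μ univ ≠ ∞ := measure_ne_top _ _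
  have hne : NeZero μ := ⟨hμ⟩
  set X := ∫⁻ z, ‖f z - c‖ₑ ^ r ∂μ with hX
  have hfc : Integrable (fun z => f z - c) μ := hf.sub (integrable_const c)
  have h1 : ‖c - ⨍ w, f w ∂μ‖ₑ ^ r * μ univ ≤ X := by
    have e1 : (c - ⨍ w, f w ∂μ) = - ((μ.real univ)⁻¹ * ∫ z, (f z - c) ∂μ) := by
      rw [integral_sub hf (integrable_const c), average_eq, integral_const]
      have : μ.real univ ≠ 0 := by simp [Measure.real, ENNReal.toReal_eq_zero_iff, hμ0, hμt]
      simp only [smul_eq_mul]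
      field_simp
      ring
    have e2 : ‖c - ⨍ w, f w ∂μ‖ₑ ≤ (μ univ)⁻¹ * ∫⁻ z, ‖f z - c‖ₑ ∂μ := by
      rw [e1, enorm_neg, enorm_mul]
      refine mul_le_mul' (le_of_eq ?_) (enorm_integral_le_lintegral_enorm _)
      rw [← ofReal_norm, Real.norm_of_nonneg (by positivity), Measure.real, ENNReal.ofReal_inv_of_pos
        (ENNReal.toReal_pos hμ0 hμt), ENNReal.ofReal_toReal hμt]
    have e3 := jensen_lint μ hr (g := fun z => ‖f z - c‖ₑ) (by
      exact hfc.aestronglyMeasurable.aemeasurable.enorm)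
    calc ‖c - ⨍ w, f w ∂μ‖ₑ ^ r * μ univ ≤ ((μ univ)⁻¹ * ∫⁻ z, ‖f z - c‖ₑ ∂μ) ^ r * μ univ := by gcongr
      _ = ((μ univ)⁻¹) ^ r * (∫⁻ z, ‖f z - c‖ₑ ∂μ) ^ r * μ univ := by rw [ENNReal.mul_rpow_of_nonneg _ _ hr0]
      _ ≤ ((μ univ)⁻¹) ^ r * (μ univ ^ (r - 1) * X) * μ univ := by gcongr
      _ = (((μ univ)⁻¹) ^ r * (μ univ ^ (r - 1) * μ univ)) * X := by ring
      _ = X := by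
        have e4 : μ univ ^ (r - 1) * μ univ = μ univ ^ r := by
          conv_lhs => rw [← ENNReal.rpow_one (μ univ), ← ENNReal.rpow_mul, one_mul, ← ENNReal.rpow_add _ _ hμ0 hμt]
          ring_nf
        rw [e4, ← ENNReal.mul_rpow_of_nonneg _ _ hr0, ENNReal.inv_mul_cancel hμ0 hμt, ENNReal.one_rpow, one_mul]
  have h2 : ∀ z, ‖f z - ⨍ w, f w ∂μ‖ₑ ^ r ≤ 2 ^ (r - 1) * (‖f z - c‖ₑ ^ r + ‖c - ⨍ w, f w ∂μ‖ₑ ^ r) := by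
    intro z
    refine le_trans ?_ (ENNReal.rpow_add_le_mul_rpow_add_rpow _ _ hr)
    gcongr
    rw [← sub_add_sub_cancel (f z) c]
    exact enorm_add_le _ _
  refine (lintegral_mono h2).trans ?_
  have hm : AEMeasurable (fun z => ‖f z - c‖ₑ ^ r) μ :=
    (hfc.aestronglyMeasurable.aemeasurable.enorm).pow_const r
  rw [lintegral_const_mul'' _ (hm.add_const _), lintegral_add_right _ measurable_const, lintegral_const]
  calc _ ≤ (2:ℝ≥0∞) ^ (r - 1) * (X + X) := by gcongr
    _ = (2 ^ (r - 1) * 2) * X := by ring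
    _ = 2 ^ r * X := by
      congr 1
      conv_lhs => rw [← ENNReal.rpow_one 2, ← ENNReal.rpow_mul, one_mul, ← ENNReal.rpow_add _ _ (by norm_num) (by norm_num)]
      ring_nf

lemma core_avg {n : ℕ} {z₀ : Pt n} {s σ : ℝ} (hs : 0 < s) (hσ : 0 < σ) {f : Pt n → ℝ}
    {g : Fin n → Pt n → ℝ} {D : Pt n → ℝ} {V : Fin n → Pt n → ℝ}
    (hfm : Measurable f) (hf : IntegrableOn f (Qrs z₀ s σ)) (hDm : Measurable D)
    (hgD : ∀ j z, |g j z| ≤ D z) (hD0 : ∀ z, 0 ≤ D z)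
    (hg : ∀ j ψ, ContDiff ℝ (⊤:ℕ∞) ψ → HasCompactSupport ψ → tsupport ψ ⊆ Qrs z₀ s σ →
      ∫ z in Qrs z₀ s σ, f z * dxj ψ j z = -∫ z in Qrs z₀ s σ, g j z * ψ z)
    (hV : ∀ j, IntegrableOn (V j) (Qrs z₀ s σ))
    (hw : ∀ Ψ : Pt n → ℝ, ContDiff ℝ (⊤ : ℕ∞) Ψ → HasCompactSupport Ψ → tsupport Ψ ⊆ Qrs z₀ s σ →
      ∫ z in Qrs z₀ s σ, f z * fderiv ℝ Ψ z (0, 1) = ∫ z in Qrs z₀ s σ, ∑ j, V j z * dxj Ψ j z)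
    {r : ℝ} (hr : 1 ≤ r) (hDr : IntegrableOn (fun z => D z ^ r) (Qrs z₀ s σ)) {C : ℝ} (hC1 : 1 ≤ C)
    (hC : ∀ (x₀ : Spc n) (s : ℝ), 0 < s → ∃ η : Spc n → ℝ,
      ContDiff ℝ (⊤ : ℕ∞) η ∧ HasCompactSupport η ∧ tsupport η ⊆ ball x₀ s ∧
      (∀ x, 0 ≤ η x ∧ η x ≤ 1) ∧ (∀ x ∈ ball x₀ (s / 4), η x = 1) ∧
      (∀ x j, |fderiv ℝ η x (EuclideanSpace.single j 1)| ≤ C / s)) :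
    IntegrableOn (fun z => |f z - ⨍ w in Qrs z₀ s σ, f w| ^ r) (Qrs z₀ s σ) ∧
    ⨍ z in Qrs z₀ s σ, |f z - ⨍ w in Qrs z₀ s σ, f w| ^ r ≤
      (8 * 4 ^ n * 2 ^ (n + 1) * (n + 1) * C) ^ r * (s ^ r * (⨍ z in Qrs z₀ s σ, D z ^ r) +
        (s⁻¹ * (σ * ⨍ z in Qrs z₀ s σ, ∑ j, |V j z|)) ^ r) := by
  have hr0 : 0 ≤ r := by linarith
  obtain ⟨c, hc⟩ := core hs hσ hfm hf hDm hgD hg hV hw hr hC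
  set Q := Qrs z₀ s σ with hQ
  set b := (volume (ball z₀.1 s)).toReal with hb
  have hbpos : 0 < b := ENNReal.toReal_pos (measure_ball_pos _ _ hs).ne' measure_ball_lt_top.ne
  have hbE : volume (ball z₀.1 s) = ENNReal.ofReal b := (ENNReal.ofReal_toReal measure_ball_lt_top.ne).symm
  have hvol : volume Q = ENNReal.ofReal (b * (2 * σ)) := by
    have : volume Q = volume (ball z₀.1 s) * volume (Ioo (z₀.2 - σ) (z₀.2 + σ)) :=
      Measure.prod_prod _ _
    rw [this, hbE, Real.volume_Ioo, ENNReal.ofReal_mul hbpos.le]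
    ring_nf
  have hQpos : 0 < b * (2 * σ) := by positivity
  have hvolr : volume.real Q = b * (2 * σ) := by rw [Measure.real, hvol, ENNReal.toReal_ofReal hQpos.le]
  have hfin : IsFiniteMeasure (volume.restrict Q) := ⟨by rw [Measure.restrict_apply_univ, hvol]; exact ENNReal.ofReal_lt_top⟩
  have hne : volume.restrict Q ≠ 0 := by
    rw [Ne, Measure.restrict_eq_zero, hvol]; simpa using hQpos
  have hosc := (avg_osc (volume.restrict Q) hne hf hr c).trans (mul_le_mul_right hc _)
  set IV := ∫ z in Q, ∑ j, |V j z| with hIV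
  have hIV0 : 0 ≤ IV := integral_nonneg fun z => Finset.sum_nonneg fun j _ => abs_nonneg _
  set ID := ∫ z in Q, D z ^ r with hID
  have hID0 : 0 ≤ ID := integral_nonneg fun z => Real.rpow_nonneg (hD0 z) _
  have eD : ∫⁻ w in Q, ‖D w‖ₑ ^ r = ENNReal.ofReal ID := by
    rw [hID, ofReal_integral_eq_lintegral_ofReal hDr (ae_of_all _ fun z => Real.rpow_nonneg (hD0 z) _)]
    congr 1; ext z
    rw [← ofReal_norm, Real.norm_of_nonneg (hD0 z), ENNReal.ofReal_rpow_of_nonneg (hD0 z) hr0]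
  have eL : ∀ z, ‖f z - ⨍ w in Q, f w‖ₑ ^ r = ENNReal.ofReal (|f z - ⨍ w in Q, f w| ^ r) := by
    intro z
    rw [← ofReal_norm, Real.norm_eq_abs, ENNReal.ofReal_rpow_of_nonneg (abs_nonneg _) hr0]
  simp only [eL] at hosc
  have e4n : (4 : ℝ≥0∞) ^ n = ENNReal.ofReal (4 ^ n) := by rw [ENNReal.ofReal_pow (by norm_num)]; norm_num
  have e2n : (2 : ℝ≥0∞) ^ (n + 1) = ENNReal.ofReal (2 ^ (n + 1)) := by rw [ENNReal.ofReal_pow (by norm_num)]; norm_num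
  have e2 : (2 : ℝ≥0∞) = ENNReal.ofReal 2 := by norm_num
  have hR : (2:ℝ≥0∞) ^ r * (2 ^ (r - 1) * ((4 ^ n : ℝ≥0∞) ^ r * (ENNReal.ofReal (2 * s) ^ r * (2 ^ (n + 1) *
          ((n : ℝ≥0∞) ^ r * ∫⁻ w in Q, ‖D w‖ₑ ^ r)))
        + ENNReal.ofReal (4 ^ n / b * (C / s * IV)) ^ r * volume Q)) =
      ENNReal.ofReal ((2:ℝ) ^ r * (2 ^ (r - 1) * ((4 ^ n : ℝ) ^ r * ((2 * s) ^ r * (2 ^ (n + 1) *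
          ((n : ℝ) ^ r * ID)))
        + (4 ^ n / b * (C / s * IV)) ^ r * (b * (2 * σ))))) := by
    have hb0 := hbpos.le
    rw [eD, hvol, e2n, e4n, e2, ← ENNReal.ofReal_natCast,
      ENNReal.ofReal_rpow_of_nonneg (by positivity) hr0,
      ENNReal.ofReal_rpow_of_nonneg (by positivity) (by linarith),
      ENNReal.ofReal_rpow_of_nonneg (by positivity) hr0,
      ENNReal.ofReal_rpow_of_nonneg (by positivity) hr0,
      ENNReal.ofReal_rpow_of_nonneg (by positivity) hr0,
      ENNReal.ofReal_rpow_of_nonneg (by positivity) hr0]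
    repeat rw [← ENNReal.ofReal_mul (by positivity)]
    rw [← ENNReal.ofReal_add (by positivity) (by positivity)]
    repeat rw [← ENNReal.ofReal_mul (by positivity)]
  rw [hR] at hosc
  have hm : Measurable (fun z => |f z - ⨍ w in Q, f w| ^ r) :=
    ((hfm.sub_const _).abs).pow_const r
  have hi : IntegrableOn (fun z => |f z - ⨍ w in Q, f w| ^ r) Q := by
    refine ⟨hm.aestronglyMeasurable, ?_⟩
    rw [hasFiniteIntegral_iff_ofReal (ae_of_all _ fun z => Real.rpow_nonneg (abs_nonneg _) _)]
    exact lt_of_le_of_lt hosc ENNReal.ofReal_lt_top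
  refine ⟨hi, ?_⟩
  have hI : ∫ z in Q, |f z - ⨍ w in Q, f w| ^ r ≤ (2:ℝ) ^ r * (2 ^ (r - 1) * ((4 ^ n : ℝ) ^ r * ((2 * s) ^ r * (2 ^ (n + 1) *
          ((n : ℝ) ^ r * ID)))
        + (4 ^ n / b * (C / s * IV)) ^ r * (b * (2 * σ)))) := by
    rw [← ENNReal.ofReal_le_ofReal_iff (by positivity), ofReal_integral_eq_lintegral_ofReal hi
      (ae_of_all _ fun z => Real.rpow_nonneg (abs_nonneg _) _)]
    exact hosc
  have hav : ∀ h : Pt n → ℝ, ⨍ z in Q, h z = (b * (2 * σ))⁻¹ * ∫ z in Q, h z := by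
    intro h; rw [setAverage_eq, hvolr, smul_eq_mul]
  rw [hav, hav (fun z => D z ^ r), hav (fun z => ∑ j, |V j z|), ← hIV, ← hID, inv_mul_le_iff₀ hQpos]
  refine hI.trans ?_
  set M := 8 * 4 ^ n * 2 ^ (n + 1) * ((n:ℝ) + 1) * C with hM
  have hC0 : 0 < C := by linarith
  have k4 : (1:ℝ) ≤ 4 ^ n := one_le_pow₀ (by norm_num)
  have k2 : (1:ℝ) ≤ 2 ^ (n + 1) := one_le_pow₀ (by norm_num)
  have kn : (1:ℝ) ≤ n + 1 := by have : (0:ℝ) ≤ n := by positivity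
                                linarith
  have t1 : (2:ℝ) ^ r * (2 ^ (r - 1) * ((4 ^ n : ℝ) ^ r * ((2 * s) ^ r * (2 ^ (n + 1) * ((n : ℝ) ^ r * ID))))) ≤
      M ^ r * (s ^ r * ID) := by
    have : (2:ℝ) ^ (n + 1) ≤ (2 ^ (n + 1)) ^ r := by
      conv_lhs => rw [← Real.rpow_one (2 ^ (n + 1))]
      exact Real.rpow_le_rpow_of_exponent_le k2 hr
    calc _ ≤ (2:ℝ) ^ r * (2 ^ r * ((4 ^ n : ℝ) ^ r * ((2 * s) ^ r * ((2 ^ (n + 1)) ^ r * (((n : ℝ) + 1) ^ r * ID))))) := by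
          gcongr
          · norm_num
          · linarith
          · linarith
      _ = (2 * 2 * 4 ^ n * 2 * 2 ^ (n + 1) * ((n:ℝ) + 1)) ^ r * (s ^ r * ID) := by
          repeat rw [Real.mul_rpow (by positivity) (by positivity)]
          ring
      _ ≤ M ^ r * (s ^ r * ID) := by
          gcongr
          rw [hM]
          calc _ = (8 * 4 ^ n * 2 ^ (n + 1) * ((n:ℝ) + 1)) * 1 := by ring
            _ ≤ _ := by gcongr
  have t2 : (2:ℝ) ^ r * (2 ^ (r - 1) * ((4 ^ n / b * (C / s * IV)) ^ r * (b * (2 * σ)))) ≤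
      M ^ r * ((s⁻¹ * (σ * ((b * (2 * σ))⁻¹ * IV))) ^ r * (b * (2 * σ))) := by
    have e : 4 ^ n / b * (C / s * IV) = (2 * 4 ^ n * C) * (s⁻¹ * (σ * ((b * (2 * σ))⁻¹ * IV))) := by
      field_simp
    rw [e]
    set Y := s⁻¹ * (σ * ((b * (2 * σ))⁻¹ * IV)) with hY
    have hY0 : 0 ≤ Y := by positivity
    calc _ ≤ (2:ℝ) ^ r * (2 ^ r * (((2 * 4 ^ n * C) * Y) ^ r * (b * (2 * σ)))) := by
          gcongr
          · norm_num
          · linarith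
      _ = (8 * 4 ^ n * 1 * 1 * C) ^ r * (Y ^ r * (b * (2 * σ))) := by
          rw [show (8 * 4 ^ n * 1 * 1 * C) = 2 * (2 * (2 * 4 ^ n * C)) by ring]
          rw [Real.mul_rpow (x := 2) (by positivity) (by positivity), Real.mul_rpow (x := 2) (y := 2 * 4 ^ n * C) (by positivity) (by positivity),
            Real.mul_rpow (x := 2 * 4 ^ n * C) (by positivity) hY0]
          ring
      _ ≤ _ := by
          gcongr
          rw [hM]
          gcongr
  calc _ = (2:ℝ) ^ r * (2 ^ (r - 1) * ((4 ^ n : ℝ) ^ r * ((2 * s) ^ r * (2 ^ (n + 1) * ((n : ℝ) ^ r * ID))))) +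
      (2:ℝ) ^ r * (2 ^ (r - 1) * ((4 ^ n / b * (C / s * IV)) ^ r * (b * (2 * σ)))) := by ring
    _ ≤ _ := add_le_add t1 t2
    _ = _ := by field_simp

lemma abs_le_mnorm {N n : ℕ} (A : Mat N n) (i : Fin N) (j : Fin n) : |A i j| ≤ mnorm A := by
  rw [mnorm, ← Real.sqrt_sq_eq_abs, mdot]
  apply Real.sqrt_le_sqrt
  calc A i j ^ 2 = A i j * A i j := by ring
    _ ≤ ∑ j, A i j * A i j := Finset.single_le_sum (f := fun j => A i j * A i j) (fun j _ => mul_self_nonneg _) (Finset.mem_univ j)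
    _ ≤ _ := Finset.single_le_sum (f := fun i => ∑ j, A i j * A i j)
      (fun i _ => Finset.sum_nonneg fun j _ => mul_self_nonneg _) (Finset.mem_univ i)

lemma mnorm_nonneg {N n : ℕ} (A : Mat N n) : 0 ≤ mnorm A := Real.sqrt_nonneg _

lemma abs_le_vnorm {N : ℕ} (v : Vec N) (i : Fin N) : |v i| ≤ vnorm v := by
  rw [vnorm, ← Real.sqrt_sq_eq_abs, vdot]
  apply Real.sqrt_le_sqrt
  calc v i ^ 2 = v i * v i := by ring
    _ ≤ _ := Finset.single_le_sum (f := fun j => v j * v j) (fun j _ => mul_self_nonneg _) (Finset.mem_univ i)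

lemma vnorm_le_sum {N : ℕ} (v : Vec N) : vnorm v ≤ ∑ i, |v i| := by
  have h0 : 0 ≤ ∑ i, |v i| := Finset.sum_nonneg fun i _ => abs_nonneg _
  rw [vnorm, Real.sqrt_le_left h0, vdot, sq, Finset.sum_mul]
  refine Finset.sum_le_sum fun i _ => ?_
  calc v i * v i = |v i| * |v i| := (abs_mul_abs_self _).symm
    _ ≤ _ := by
      gcongr
      exact Finset.single_le_sum (f := fun j => |v j|) (fun j _ => abs_nonneg _) (Finset.mem_univ i)

lemma mnorm_meas {N n : ℕ} : Measurable (mnorm : Mat N n → ℝ) := by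
  unfold mnorm mdot
  fun_prop

lemma vnorm_meas {N : ℕ} : Measurable (vnorm : Vec N → ℝ) := by
  unfold vnorm vdot
  fun_prop

section
variable {n N : ℕ} {p q α L₁ L₂ aH : ℝ}

/-- The total density. -/
def KK (S : Setting n N p q α L₁ L₂ aH) (Du : Pt n → Mat N n) (z : Pt n) : ℝ := HDu S Du z + HFf S z

lemma Hf_nonneg' (S : Setting n N p q α L₁ L₂ aH) (z : Pt n) {t : ℝ} (ht : 0 ≤ t) : 0 ≤ Hf S.a p q z t := by
  have := S.ha0 z
  unfold Hf; positivity

lemma HDu_nonneg (S : Setting n N p q α L₁ L₂ aH) (Du : Pt n → Mat N n) (z : Pt n) : 0 ≤ HDu S Du z :=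
  Hf_nonneg' S z (mnorm_nonneg _)

lemma HFf_nonneg (S : Setting n N p q α L₁ L₂ aH) (z : Pt n) : 0 ≤ HFf S z :=
  Hf_nonneg' S z (mnorm_nonneg _)

lemma KK_nonneg (S : Setting n N p q α L₁ L₂ aH) (Du : Pt n → Mat N n) (z : Pt n) : 0 ≤ KK S Du z :=
  add_nonneg (HDu_nonneg S Du z) (HFf_nonneg S z)

lemma HDu_meas (S : Setting n N p q α L₁ L₂ aH) {Du : Pt n → Mat N n} (h : Measurable Du) :
    Measurable (HDu S Du) := by
  have h1 : Measurable (fun z => mnorm (Du z)) := mnorm_meas.comp h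
  have h2 := S.haM
  unfold HDu Hf
  fun_prop

lemma HFf_meas (S : Setting n N p q α L₁ L₂ aH) : Measurable (HFf S) := by
  have h1 : Measurable (fun z => mnorm (S.F z)) := mnorm_meas.comp S.hFM
  have h2 := S.haM
  unfold HFf Hf
  fun_prop

lemma KK_meas (S : Setting n N p q α L₁ L₂ aH) {Du : Pt n → Mat N n} (h : Measurable Du) :
    Measurable (KK S Du) := (HDu_meas S h).add (HFf_meas S)

lemma rpow_le_one_add {x e θ : ℝ} (hx : 0 ≤ x) (he : 0 ≤ e) (hθ : e ≤ θ) : x ^ e ≤ 1 + x ^ θ := by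
  rcases le_total x 1 with h | h
  · have := Real.rpow_le_one hx h he
    have := Real.rpow_nonneg hx θ
    linarith
  · have := Real.rpow_le_rpow_of_exponent_le h hθ
    linarith

lemma KK_int (S : Setting n N p q α L₁ L₂ aH) {u : Pt n → Vec N} {Du : Pt n → Mat N n} {δ : ℝ}
    (hu : VeryWeakSolution S u Du δ) {Q : Set (Pt n)} (hQ : Q ⊆ cyl S.Ω S.T) (hQf : volume Q ≠ ∞)
    {e : ℝ} (he : 0 ≤ e) (heδ : e ≤ δ) : IntegrableOn (fun z => KK S Du z ^ e) Q := by
  have hfin : IsFiniteMeasure (volume.restrict Q) := ⟨by rw [Measure.restrict_apply_univ]; exact hQf.lt_top⟩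
  have h1 : IntegrableOn (fun z => HDu S Du z ^ δ) Q := hu.henergy.mono_set hQ
  have h2 : IntegrableOn (fun z => HFf S z) Q := S.hFint.mono_set hQ
  refine Integrable.mono' (g := fun z => 1 + (2 ^ δ * HDu S Du z ^ δ + 2 ^ δ * (1 + HFf S z)))
    ((integrable_const 1).add ((h1.const_mul _).add (((integrable_const 1).add h2).const_mul _)))
    ((KK_meas S hu.hDuM).pow_const e).aestronglyMeasurable (ae_of_all _ fun z => ?_)
  have k1 := HDu_nonneg S Du z
  have k2 := HFf_nonneg S z
  have k3 := KK_nonneg S Du z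
  rw [Real.norm_of_nonneg (Real.rpow_nonneg k3 _)]
  have hδ0 := hu.hδ.1.le
  have k4 : HFf S z ^ δ ≤ 1 + HFf S z := by
    have := rpow_le_one_add k2 hδ0 hu.hδ.2.le
    rwa [Real.rpow_one] at this
  have k5 : KK S Du z ^ δ ≤ 2 ^ δ * HDu S Du z ^ δ + 2 ^ δ * HFf S z ^ δ := by
    rw [← Real.mul_rpow (by norm_num) k1, ← Real.mul_rpow (by norm_num) k2]
    have a1 : 0 ≤ (2 * HDu S Du z) ^ δ := by positivity
    have a2 : 0 ≤ (2 * HFf S z) ^ δ := by positivity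
    rcases le_total (HDu S Du z) (HFf S z) with h | h
    · have : KK S Du z ^ δ ≤ (2 * HFf S z) ^ δ := Real.rpow_le_rpow k3 (by unfold KK; linarith) hδ0
      linarith
    · have : KK S Du z ^ δ ≤ (2 * HDu S Du z) ^ δ := Real.rpow_le_rpow k3 (by unfold KK; linarith) hδ0
      linarith
  have k6 := rpow_le_one_add k3 he heδ
  have : 2 ^ δ * HFf S z ^ δ ≤ 2 ^ δ * (1 + HFf S z) := by gcongr
  linarith

lemma pow_le_KK (S : Setting n N p q α L₁ L₂ aH) (Du : Pt n → Mat N n) (z : Pt n) {e : ℝ} (he : 0 ≤ e) :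
    mnorm (Du z) ^ e ≤ KK S Du z ^ (e / p) ∧ mnorm (S.F z) ^ e ≤ KK S Du z ^ (e / p) := by
  have hp : 0 < p := by linarith [S.hp2]
  have ha := S.ha0 z
  have g0 := mnorm_nonneg (Du z)
  have f0 := mnorm_nonneg (S.F z)
  have k1 := HDu_nonneg S Du z
  have k2 := HFf_nonneg S z
  have key : ∀ t : ℝ, 0 ≤ t → t ^ p ≤ KK S Du z → t ^ e ≤ KK S Du z ^ (e / p) := by
    intro t ht h
    calc t ^ e = (t ^ p) ^ (e / p) := by rw [← Real.rpow_mul ht]; congr 1; field_simp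
      _ ≤ _ := Real.rpow_le_rpow (by positivity) h (by positivity)
  constructor
  · apply key _ g0
    have : 0 ≤ S.a z * mnorm (Du z) ^ q := by positivity
    have : mnorm (Du z) ^ p ≤ HDu S Du z := by unfold HDu Hf; linarith
    unfold KK; linarith
  · apply key _ f0
    have : 0 ≤ S.a z * mnorm (S.F z) ^ q := by positivity
    have : mnorm (S.F z) ^ p ≤ HFf S z := by unfold HFf Hf; linarith
    unfold KK; linarith

lemma rhsF_bound (S : Setting n N p q α L₁ L₂ aH) (z : Pt n) (i : Fin N) (j : Fin n) :
    |rhsF S z i j| ≤ mnorm (S.F z) ^ (p - 1) + S.a z * mnorm (S.F z) ^ (q - 1) := by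
  have ha := S.ha0 z
  have f0 := mnorm_nonneg (S.F z)
  have hp := S.hp2
  have hq := S.hpq
  have hF := abs_le_mnorm (S.F z) i j
  have e : ∀ t : ℝ, 2 < t → mnorm (S.F z) ^ (t - 1) = mnorm (S.F z) ^ (t - 2) * mnorm (S.F z) := by
    intro t ht
    conv_rhs => rw [← Real.rpow_one (mnorm (S.F z)), ← Real.rpow_mul f0, one_mul]
    rw [← Real.rpow_add_of_nonneg f0 (by linarith) (by norm_num)]
    congr 1; ring
  rw [e p hp, e q (by linarith), rhsF]
  refine (abs_add_le _ _).trans ?_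
  rw [abs_mul, abs_mul, abs_mul, abs_of_nonneg ha, abs_of_nonneg (Real.rpow_nonneg f0 _), abs_of_nonneg (Real.rpow_nonneg f0 _), mul_assoc]
  gcongr

lemma flux_bound (S : Setting n N p q α L₁ L₂ aH) (Du : Pt n → Mat N n) :
    ∀ᵐ z ∂(volume.restrict (cyl S.Ω S.T)), ∀ i j,
      |S.A z (Du z) i j| ≤ L₂ * (KK S Du z ^ ((p - 1) / p) + S.a z * KK S Du z ^ ((q - 1) / p)) ∧
      |rhsF S z i j| ≤ KK S Du z ^ ((p - 1) / p) + S.a z * KK S Du z ^ ((q - 1) / p) := by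
  have hp := S.hp2
  have hq := S.hpq
  have hL : 0 < L₂ := lt_of_lt_of_le S.hL₁ S.hL₁₂
  filter_upwards [S.hAgrow] with z hz i j
  have ha := S.ha0 z
  obtain ⟨h1, h2⟩ := pow_le_KK S Du z (e := p - 1) (by linarith)
  obtain ⟨h3, h4⟩ := pow_le_KK S Du z (e := q - 1) (by linarith)
  constructor
  · refine (abs_le_mnorm _ i j).trans ((hz (Du z)).trans ?_)
    gcongr
  · refine (rhsF_bound S z i j).trans ?_
    gcongr

lemma A_meas (S : Setting n N p q α L₁ L₂ aH) {Du : Pt n → Mat N n} (h : Measurable Du) (i : Fin N) (j : Fin n) :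
    Measurable (fun z => S.A z (Du z) i j) := by
  have h1 : Measurable (fun z => S.A z (Du z)) := S.hAM.comp (measurable_id.prodMk h)
  fun_prop

lemma rhsF_meas (S : Setting n N p q α L₁ L₂ aH) (i : Fin N) (j : Fin n) :
    Measurable (fun z => rhsF S z i j) := by
  have h1 : Measurable (fun z => mnorm (S.F z)) := mnorm_meas.comp S.hFM
  have h2 := S.haM
  have h3 := S.hFM
  unfold rhsF
  fun_prop

lemma flux_int (S : Setting n N p q α L₁ L₂ aH) {u : Pt n → Vec N} {Du : Pt n → Mat N n} {δ : ℝ}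
    (hu : VeryWeakSolution S u Du δ) {Q : Set (Pt n)} (hQ : Q ⊆ cyl S.Ω S.T) (hQf : volume Q ≠ ∞)
    (hδ : (q - 1) / p ≤ δ) (i : Fin N) (j : Fin n) :
    IntegrableOn (fun z => S.A z (Du z) i j) Q ∧ IntegrableOn (fun z => rhsF S z i j) Q := by
  have hp := S.hp2
  have hq := S.hpq
  have hL : 0 < L₂ := lt_of_lt_of_le S.hL₁ S.hL₁₂
  obtain ⟨M, hM⟩ := S.haB
  have hM' : ∀ z, S.a z ≤ M := fun z => hM ⟨z, rfl⟩
  have hpq' : (p - 1) / p ≤ (q - 1) / p := by gcongr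
  have i1 := KK_int S hu hQ hQf (e := (p - 1) / p) (by apply div_nonneg <;> linarith) (hpq'.trans hδ)
  have i2 := KK_int S hu hQ hQf (e := (q - 1) / p) (by apply div_nonneg <;> linarith) hδ
  have i3 : IntegrableOn (fun z => KK S Du z ^ ((p - 1) / p) + M * KK S Du z ^ ((q - 1) / p)) Q := i1.add (i2.const_mul M)
  have hfb := ae_restrict_of_ae_restrict_of_subset hQ (flux_bound S Du)
  have hb : ∀ z, KK S Du z ^ ((p - 1) / p) + S.a z * KK S Du z ^ ((q - 1) / p) ≤
      KK S Du z ^ ((p - 1) / p) + M * KK S Du z ^ ((q - 1) / p) := by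
    intro z
    have := Real.rpow_nonneg (KK_nonneg S Du z) ((q - 1) / p)
    have := hM' z
    gcongr
  constructor
  · refine Integrable.mono' (i3.const_mul L₂) (A_meas S hu.hDuM i j).aestronglyMeasurable ?_
    filter_upwards [hfb] with z hz
    refine (hz i j).1.trans ?_
    have := hb z
    gcongr
  · refine Integrable.mono' i3 (rhsF_meas S i j).aestronglyMeasurable ?_
    filter_upwards [hfb] with z hz
    exact (hz i j).2.trans (hb z)

end

lemma dxj_zero_off {n : ℕ} {ψ : Pt n → ℝ} {Q : Set (Pt n)} (hs : tsupport ψ ⊆ Q) {z : Pt n} (hz : z ∉ Q) :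
    fderiv ℝ ψ z = 0 := by
  have h1 : z ∉ tsupport (fderiv ℝ ψ) := fun h => hz (hs (tsupport_fderiv_subset ℝ h))
  exact image_eq_zero_of_notMem_tsupport h1

lemma fderiv_bdd {n : ℕ} {ψ : Pt n → ℝ} (h : ContDiff ℝ (⊤ : ℕ∞) ψ) (hc : HasCompactSupport ψ) (v : Pt n) :
    Continuous (fun z => fderiv ℝ ψ z v) ∧ ∃ M : ℝ, ∀ z, ‖fderiv ℝ ψ z v‖ ≤ M := by
  have h1 := h.continuous_fderiv (by norm_num)
  obtain ⟨M, hM⟩ := (hc.fderiv (𝕜 := ℝ)).exists_bound_of_continuous h1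
  refine ⟨by fun_prop, M * ‖v‖, fun z => ((fderiv ℝ ψ z).le_opNorm v).trans ?_⟩
  gcongr
  exact hM z

section
variable {n N : ℕ} {p q α L₁ L₂ aH : ℝ}

lemma weak_component (S : Setting n N p q α L₁ L₂ aH) {u : Pt n → Vec N} {Du : Pt n → Mat N n} {δ : ℝ}
    (hu : VeryWeakSolution S u Du δ) {Q : Set (Pt n)} (hQm : MeasurableSet Q)
    (hQ : Q ⊆ cyl S.Ω S.T) (hQf : volume Q ≠ ∞) (hδ : (q - 1) / p ≤ δ) (i : Fin N)
    (hui : IntegrableOn (fun z => u z i) Q)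
    (Ψ : Pt n → ℝ) (h1 : ContDiff ℝ (⊤ : ℕ∞) Ψ) (h2 : HasCompactSupport Ψ) (h3 : tsupport Ψ ⊆ Q) :
    ∫ z in Q, u z i * fderiv ℝ Ψ z (0, 1) =
      ∫ z in Q, ∑ j, (S.A z (Du z) i j - rhsF S z i j) * dxj Ψ j z := by
  have hcm : MeasurableSet (cyl S.Ω S.T) := S.hΩo.measurableSet.prod measurableSet_Ioo
  let L := ContinuousLinearMap.single ℝ (fun _ : Fin N => ℝ) i
  let φ : Pt n → Vec N := fun z => L (Ψ z)
  have hφ : ContDiff ℝ (⊤ : ℕ∞) φ := L.contDiff.comp h1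
  have hsup : Function.support φ ⊆ Function.support Ψ := by
    intro z hz hz2
    apply hz
    show L (Ψ z) = 0
    rw [show Ψ z = 0 from hz2, map_zero]
  have hφs : tsupport φ ⊆ tsupport Ψ := closure_mono hsup
  have hφc : HasCompactSupport φ := h2.mono hsup
  have key := hu.hweak φ hφ hφc (hφs.trans (h3.trans hQ))
  have hΨd : ∀ z, HasFDerivAt Ψ (fderiv ℝ Ψ z) z := fun z => (h1.differentiable (by norm_num) z).hasFDerivAt
  have edt : ∀ z, vdot (u z) (dtd φ z) = u z i * fderiv ℝ Ψ z (0, 1) := by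
    intro z
    have : fderiv ℝ φ z = L.comp (fderiv ℝ Ψ z) := (L.hasFDerivAt.comp z (hΨd z)).fderiv
    rw [vdot, dtd, this]
    rw [Finset.sum_eq_single i]
    · simp [L]
    · intro k _ hk
      simp [L, Pi.single_eq_of_ne hk]
    · simp
  have egr : ∀ (B : Mat N n) z, mdot B (gradm φ z) = ∑ j, B i j * dxj Ψ j z := by
    intro B z
    rw [mdot, Finset.sum_eq_single i]
    · refine Finset.sum_congr rfl fun j _ => ?_
      have : (fun w => φ w i) = Ψ := by ext w; simp [φ, L]
      rw [gradm, this, dxj]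
    · intro k _ hk
      refine Finset.sum_eq_zero fun j _ => ?_
      have : (fun w => φ w k) = fun _ => (0:ℝ) := by ext w; simp [φ, L, Pi.single_eq_of_ne hk]
      rw [gradm, this]; simp
    · simp
  simp only [edt, egr] at key
  have hoff : ∀ z ∉ Q, fderiv ℝ Ψ z = 0 := fun z hz => dxj_zero_off h3 hz
  have hloc : ∀ h : Pt n → ℝ, (∀ z ∉ Q, h z = 0) → ∫ z in cyl S.Ω S.T, h z = ∫ z in Q, h z :=
    fun h h0 => setIntegral_eq_of_subset_of_forall_sdiff_eq_zero hcm hQ fun z hz => h0 z hz.2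
  rw [hloc (fun z => -(u z i * (fderiv ℝ Ψ z) (0, 1)) + ∑ j, S.A z (Du z) i j * dxj Ψ j z)
      (fun z hz => by simp [dxj, hoff z hz]),
    hloc (fun z => ∑ j, rhsF S z i j * dxj Ψ j z) (fun z hz => by simp [dxj, hoff z hz])] at key
  have hfi := fun j => flux_int S hu hQ hQf hδ i j
  have hmul : ∀ (h : Pt n → ℝ), IntegrableOn h Q → ∀ v, IntegrableOn (fun z => h z * fderiv ℝ Ψ z v) Q := by
    intro h hh v
    obtain ⟨hc, M, hM⟩ := fderiv_bdd h1 h2 v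
    exact Integrable.mul_bdd (c := M) hh hc.aestronglyMeasurable (ae_of_all _ hM)
  have iA : IntegrableOn (fun z => ∑ j, S.A z (Du z) i j * dxj Ψ j z) Q :=
    integrable_finsetSum _ fun j _ => hmul _ (hfi j).1 _
  have iR : IntegrableOn (fun z => ∑ j, rhsF S z i j * dxj Ψ j z) Q :=
    integrable_finsetSum _ fun j _ => hmul _ (hfi j).2 _
  have iU := hmul _ hui (0, 1)
  rw [integral_add (f := fun z => -(u z i * (fderiv ℝ Ψ z) (0, 1))) iU.neg iA, integral_neg] at key
  simp only [sub_mul, Finset.sum_sub_distrib]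
  rw [integral_sub iA iR]
  linarith

lemma grad_component (S : Setting n N p q α L₁ L₂ aH) {u : Pt n → Vec N} {Du : Pt n → Mat N n} {δ : ℝ}
    (hu : VeryWeakSolution S u Du δ) {Q : Set (Pt n)}
    (hQ : Q ⊆ cyl S.Ω S.T) (i : Fin N) (j : Fin n)
    (Ψ : Pt n → ℝ) (h1 : ContDiff ℝ (⊤ : ℕ∞) Ψ) (h2 : HasCompactSupport Ψ) (h3 : tsupport Ψ ⊆ Q) :
    ∫ z in Q, u z i * dxj Ψ j z = -∫ z in Q, Du z i j * Ψ z := by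
  have hcm : MeasurableSet (cyl S.Ω S.T) := S.hΩo.measurableSet.prod measurableSet_Ioo
  have key := hu.hgrad i j Ψ h1 h2 (h3.trans hQ)
  have hloc : ∀ h : Pt n → ℝ, (∀ z ∉ Q, h z = 0) → ∫ z in cyl S.Ω S.T, h z = ∫ z in Q, h z :=
    fun h h0 => setIntegral_eq_of_subset_of_forall_sdiff_eq_zero hcm hQ fun z hz => h0 z hz.2
  rwa [hloc (fun z => u z i * dxj Ψ j z) (fun z hz => by simp [dxj, dxj_zero_off h3 hz]),
    hloc (fun z => Du z i j * Ψ z) (fun z hz => by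
        have : Ψ z = 0 := image_eq_zero_of_notMem_tsupport fun h => hz (h3 h)
        simp [this])] at key

lemma comp_est (S : Setting n N p q α L₁ L₂ aH) {u : Pt n → Vec N} {Du : Pt n → Mat N n} {δ : ℝ}
    (hu : VeryWeakSolution S u Du δ) {z₀ : Pt n} {s σ : ℝ} (hs : 0 < s) (hσ : 0 < σ)
    (hQ : Qrs z₀ s σ ⊆ cyl S.Ω S.T) (hδ : (q - 1) / p ≤ δ) {r : ℝ} (hr : 1 ≤ r)
    (hDr : IntegrableOn (fun z => mnorm (Du z) ^ r) (Qrs z₀ s σ)) {C : ℝ} (hC1 : 1 ≤ C)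
    (hC : ∀ (x₀ : Spc n) (s : ℝ), 0 < s → ∃ η : Spc n → ℝ,
      ContDiff ℝ (⊤ : ℕ∞) η ∧ HasCompactSupport η ∧ tsupport η ⊆ ball x₀ s ∧
      (∀ x, 0 ≤ η x ∧ η x ≤ 1) ∧ (∀ x ∈ ball x₀ (s / 4), η x = 1) ∧
      (∀ x j, |fderiv ℝ η x (EuclideanSpace.single j 1)| ≤ C / s)) (i : Fin N) :
    IntegrableOn (fun z => |u z i - ⨍ w in Qrs z₀ s σ, u w i| ^ r) (Qrs z₀ s σ) ∧
    ⨍ z in Qrs z₀ s σ, |u z i - ⨍ w in Qrs z₀ s σ, u w i| ^ r ≤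
      (8 * 4 ^ n * 2 ^ (n + 1) * (n + 1) * C) ^ r * (s ^ r * (⨍ z in Qrs z₀ s σ, mnorm (Du z) ^ r) +
        (s⁻¹ * (σ * ⨍ z in Qrs z₀ s σ, ∑ j, |S.A z (Du z) i j - rhsF S z i j|)) ^ r) := by
  have hQm := Qrs_meas z₀ s σ
  have hQf : volume (Qrs z₀ s σ) ≠ ∞ := by
    have : volume (Qrs z₀ s σ) = volume (ball z₀.1 s) * volume (Ioo (z₀.2 - σ) (z₀.2 + σ)) :=
      Measure.prod_prod _ _
    rw [this, Real.volume_Ioo]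
    exact ENNReal.mul_ne_top measure_ball_lt_top.ne ENNReal.ofReal_ne_top
  have hum : Measurable (fun z => u z i) := (measurable_pi_apply i).comp hu.huM
  have hui : IntegrableOn (fun z => u z i) (Qrs z₀ s σ) :=
    Integrable.mono' (hu.huL1.mono_set hQ) hum.aestronglyMeasurable (ae_of_all _ fun z => abs_le_vnorm _ i)
  have hfi := fun j => flux_int S hu hQ hQf hδ i j
  exact core_avg hs hσ hum hui (mnorm_meas.comp hu.hDuM) (g := fun j z => Du z i j)
    (fun j z => abs_le_mnorm _ i j) (fun z => mnorm_nonneg _)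
    (fun j ψ a b c => grad_component S hu hQ i j ψ a b c)
    (V := fun j z => S.A z (Du z) i j - rhsF S z i j)
    (fun j => (hfi j).1.sub (hfi j).2)
    (fun Ψ a b c => weak_component S hu hQm hQ hQf hδ i hui Ψ a b c) hr hDr hC1 hC
end

lemma jensen_avg {β : Type*} [MeasurableSpace β] (μ : Measure β) [IsFiniteMeasure μ] [NeZero μ] {K : β → ℝ}
    (hK : ∀ z, 0 ≤ K z) {e θ : ℝ} (he : 0 < e) (heθ : e ≤ θ) (h1 : Integrable (fun z => K z ^ e) μ)
    (h2 : Integrable (fun z => K z ^ θ) μ) :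
    ⨍ z, K z ^ e ∂μ ≤ (⨍ z, K z ^ θ ∂μ) ^ (e / θ) := by
  have hθ : 0 < θ := he.trans_le heθ
  have hc := Real.concaveOn_rpow (p := e / θ) (by positivity) ((div_le_one hθ).2 heθ)
  have hpt : ∀ z, (K z ^ θ) ^ (e / θ) = K z ^ e := by
    intro z; rw [← Real.rpow_mul (hK z)]; congr 1; field_simp
  have := hc.le_map_average (μ := μ) (f := fun z => K z ^ θ)
    (Real.continuous_rpow_const (by positivity)).continuousOn isClosed_Ici
    (ae_of_all _ fun z => Real.rpow_nonneg (hK z) _) h2 (by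
      simpa [Function.comp_def, hpt] using h1)
  simpa only [hpt] using this

lemma num1 {π p q y M X G B : ℝ} (hπ : 1 < π) (hp : 2 < p) (hpq : p < q) (hy : 0 ≤ y) (hM : 1 ≤ M)
    (hyM : y ≤ M * π) (hG : 0 ≤ G) (hB : 0 ≤ B)
    (hX : X ≤ G * (y ^ (p - 1) + π ^ (p - q) * B * y ^ (q - 1))) :
    π ^ (2 - p) * X ≤ G * (1 + B) * M ^ q * y := by
  have hπ0 : 0 < π := by linarith
  have hM0 : 0 < M := by linarith
  have key : ∀ t, 2 < t → t ≤ q → y ^ (t - 1) ≤ M ^ q * π ^ (t - 2) * y := by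
    intro t ht htq
    have : y ^ (t - 1) = y ^ (t - 2) * y := by
      conv_rhs => rw [← Real.rpow_one y, ← Real.rpow_mul hy, one_mul]
      rw [← Real.rpow_add_of_nonneg hy (by linarith) (by norm_num)]
      congr 1; ring
    rw [this]
    gcongr
    calc y ^ (t - 2) ≤ (M * π) ^ (t - 2) := Real.rpow_le_rpow hy hyM (by linarith)
      _ = M ^ (t - 2) * π ^ (t - 2) := Real.mul_rpow hM0.le hπ0.le
      _ ≤ _ := by gcongr; linarith
  have k1 := key p hp hpq.le
  have k2 := key q (by linarith) le_rfl
  have e1 : π ^ (2 - p) * π ^ (p - 2) = 1 := by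
    rw [← Real.rpow_add hπ0]; simp
  have e2 : π ^ (p - q) * π ^ (q - 2) = π ^ (p - 2) := by
    rw [← Real.rpow_add hπ0]; congr 1; ring
  calc π ^ (2 - p) * X ≤ π ^ (2 - p) * (G * (y ^ (p - 1) + π ^ (p - q) * B * y ^ (q - 1))) := by gcongr
    _ ≤ π ^ (2 - p) * (G * (M ^ q * π ^ (p - 2) * y + π ^ (p - q) * B * (M ^ q * π ^ (q - 2) * y))) := by gcongr
    _ = π ^ (2 - p) * (G * (M ^ q * π ^ (p - 2) * y + (π ^ (p - q) * π ^ (q - 2)) * B * (M ^ q * y))) := by ring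
    _ = (π ^ (2 - p) * π ^ (p - 2)) * (G * (1 + B) * M ^ q * y) := by rw [e2]; ring
    _ = _ := by rw [e1, one_mul]

lemma num2 {π p q y M b W θ Y : ℝ} (hπ : 1 < π) (hp : 2 < p) (hpq : p < q) (hY : 0 ≤ Y) (hθ : 0 < θ) (hθ1 : θ ≤ 1)
    (hy : y = Y ^ (1 / (θ * p))) (hM : 1 ≤ M)
    (hyM : y ≤ M * π) (hb : 0 ≤ b) (hbπ : b ≤ π ^ (p - q)) (hW : 1 ≤ W) :
    b ^ θ * (W * y) ^ (θ * q) ≤ W ^ q * M ^ q * Y := by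
  have hπ0 : 0 < π := by linarith
  have hM0 : 0 < M := by linarith
  have hW0 : 0 < W := by linarith
  have hy0 : 0 ≤ y := by rw [hy]; positivity
  have hp0 : 0 < p := by linarith
  have hq0 : 0 < q := by linarith
  have e1 : (y ^ p) ^ θ = Y := by
    rw [← Real.rpow_mul hy0, hy, ← Real.rpow_mul hY]
    have : 1 / (θ * p) * (p * θ) = 1 := by field_simp
    rw [this, Real.rpow_one]
  have h1 : b * y ^ q ≤ M ^ q * y ^ p := by
    have : y ^ q = y ^ (q - p) * y ^ p := by
      rw [← Real.rpow_add_of_nonneg hy0 (by linarith) hp0.le]; congr 1; ring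
    rw [this, ← mul_assoc]
    gcongr
    have e3 : π ^ (p - q) * π ^ (q - p) = 1 := by
      rw [← Real.rpow_add hπ0]; simp
    calc b * y ^ (q - p) ≤ π ^ (p - q) * (M * π) ^ (q - p) := by gcongr
      _ = (π ^ (p - q) * π ^ (q - p)) * M ^ (q - p) := by rw [Real.mul_rpow hM0.le hπ0.le]; ring
      _ = M ^ (q - p) := by rw [e3, one_mul]
      _ ≤ M ^ q := Real.rpow_le_rpow_of_exponent_le hM (by linarith)
  calc b ^ θ * (W * y) ^ (θ * q) = W ^ (θ * q) * (b * y ^ q) ^ θ := by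
        rw [Real.mul_rpow hW0.le hy0, Real.mul_rpow hb (by positivity), ← Real.rpow_mul hy0, mul_comm q θ]; ring
    _ ≤ W ^ q * (M ^ q * y ^ p) ^ θ := by
        gcongr
        nlinarith
    _ = W ^ q * (M ^ (q * θ) * Y) := by
        rw [Real.mul_rpow (by positivity) (by positivity), e1, ← Real.rpow_mul hM0.le]
    _ ≤ W ^ q * (M ^ q * Y) := by
        gcongr
        nlinarith
    _ = _ := by ring

lemma Qp_vol {n : ℕ} {p : ℝ} {z₀ : Pt n} {π R : ℝ} (hR : 0 < R) (hπ : 0 < π) :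
    volume (Qp p z₀ π R) = ENNReal.ofReal (R ^ n * (volume (ball (0 : Spc n) 1)).toReal * (2 * (π ^ (2 - p) * R ^ 2))) := by
  have : volume (Qp p z₀ π R) = volume (ball z₀.1 R) * volume (Ioo (z₀.2 - π ^ (2 - p) * R ^ 2) (z₀.2 + π ^ (2 - p) * R ^ 2)) :=
    Measure.prod_prod _ _
  rw [this, Measure.addHaar_ball_of_pos _ _ hR, Real.volume_Ioo, ENNReal.ofReal_mul (by positivity), ENNReal.ofReal_mul (by positivity),
    ENNReal.ofReal_toReal measure_ball_lt_top.ne]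
  simp only [finrank_euclideanSpace, Fintype.card_fin]
  ring_nf

section
variable {n N : ℕ} {p q α L₁ L₂ aH : ℝ}

lemma Qp_mono {p : ℝ} {z₀ : Pt n} {π R R' : ℝ} (hπ : 0 < π) (hR : 0 ≤ R) (h : R ≤ R') : Qp p z₀ π R ⊆ Qp p z₀ π R' := by
  have : π ^ (2 - p) * R ^ 2 ≤ π ^ (2 - p) * R' ^ 2 := by gcongr
  exact prod_mono (ball_subset_ball h) (Ioo_subset_Ioo (by linarith) (by linarith))

lemma a_bound (S : Setting n N p q α L₁ L₂ aH) {Du : Pt n → Mat N n} {z₀ : Pt n} {π ρ δ s : ℝ}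
    (h : PHyp S Du z₀ π ρ δ) (hs0 : 0 < s) (hs : s ≤ 4 * ρ) : S.a z₀ ≤ π ^ (p - q) ∧
      ∀ z ∈ Qp p z₀ π s, S.a z ≤ π ^ (p - q) * (1 + 4 * aH) := by
  have hπ := h.hπ
  have hπ0 : 0 < π := by linarith
  have hα := S.hα
  have hρ := h.hρ
  have h1 : S.a z₀ ≤ π ^ (p - q) := by
    rw [Real.rpow_sub hπ0, le_div_iff₀ (by positivity)]; exact h.hcase
  refine ⟨h1, fun z hz => ?_⟩
  have hsα : s ^ α ≤ 4 * π ^ (p - q) := by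
    calc s ^ α ≤ (4 * ρ) ^ α := Real.rpow_le_rpow hs0.le hs hα.1.le
      _ = 4 ^ α * ρ ^ α := Real.mul_rpow (by norm_num) hρ.1.le
      _ ≤ 4 ^ (1:ℝ) * π ^ (p - q) := by
        gcongr
        · exact Real.rpow_nonneg hρ.1.le _
        · norm_num
        · exact hα.2
        · exact h.hdecay
      _ = _ := by rw [Real.rpow_one]
  have hzc : z ∈ cyl S.Ω S.T := h.hsub (Qp_mono hπ0 hs0.le (by linarith [hρ.1]) hz)
  have hHol := S.haHol z.1 hzc.1 z₀.1 h.hz₀.1 z.2 hzc.2 z₀.2 h.hz₀.2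
  have hx : ‖z.1 - z₀.1‖ ^ α ≤ s ^ α := by
    have := hz.1
    rw [mem_ball, dist_eq_norm] at this
    exact Real.rpow_le_rpow (norm_nonneg _) this.le hα.1.le
  have ht : |z.2 - z₀.2| ^ (α / 2) ≤ s ^ α := by
    have h2 : |z.2 - z₀.2| ≤ s ^ 2 := by
      have h3 : π ^ (2 - p) ≤ 1 := Real.rpow_le_one_of_one_le_of_nonpos hπ.le (by linarith [S.hp2])
      have h4 : π ^ (2 - p) * s ^ 2 ≤ s ^ 2 := mul_le_of_le_one_left (by positivity) h3
      have h5 := hz.2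
      rw [abs_le]; constructor <;> linarith [h5.1, h5.2]
    calc |z.2 - z₀.2| ^ (α / 2) ≤ (s ^ 2) ^ (α / 2) := Real.rpow_le_rpow (abs_nonneg _) h2 (by linarith [hα.1])
      _ = s ^ α := by
        rw [← Real.rpow_natCast, ← Real.rpow_mul hs0.le]; congr 1; push_cast; ring
  have hm : max (‖z.1 - z₀.1‖ ^ α) (|z.2 - z₀.2| ^ (α / 2)) ≤ 4 * π ^ (p - q) :=
    (max_le hx ht).trans hsα
  have h6 : aH * max (‖z.1 - z₀.1‖ ^ α) (|z.2 - z₀.2| ^ (α / 2)) ≤ aH * (4 * π ^ (p - q)) := by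
    have := S.haH
    gcongr
  have h7 := le_abs_self (S.a z - S.a z₀)
  have h8 : |S.a z - S.a z₀| ≤ aH * max (‖z.1 - z₀.1‖ ^ α) (|z.2 - z₀.2| ^ (α / 2)) := hHol
  nlinarith

lemma y_bound (S : Setting n N p q α L₁ L₂ aH) {u : Pt n → Vec N} {Du : Pt n → Mat N n} {z₀ : Pt n} {π ρ δ s θ : ℝ}
    (hu : VeryWeakSolution S u Du δ) (h : PHyp S Du z₀ π ρ δ) (hs2 : 2 * ρ ≤ s) (hs : s ≤ 4 * ρ)
    (hθ : (q - 1) / p < θ) (hθδ : θ ≤ δ) :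
    (⨍ z in Qp p z₀ π s, KK S Du z ^ θ) ^ (1 / (θ * p)) ≤ 8 ^ (n + 2) * π := by
  have hπ0 : 0 < π := by linarith [h.hπ]
  have hρ0 := h.hρ.1
  have hs0 : 0 < s := by linarith
  have hp := S.hp2
  have hq := S.hpq
  have hp0 : 0 < p := by linarith
  have hθp : q - 1 < θ * p := by rwa [div_lt_iff₀ hp0] at hθ
  have hθ0 : 0 < θ := by
    have : 0 < θ * p := by linarith
    exact pos_of_mul_pos_left this hp0.le
  have hδ0 := hu.hδ.1
  have hb : 0 < (volume (ball (0 : Spc n) 1)).toReal :=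
    ENNReal.toReal_pos (measure_ball_pos _ _ (by norm_num)).ne' measure_ball_lt_top.ne
  set b := (volume (ball (0 : Spc n) 1)).toReal with hbdef
  have hsub := Qp_mono (p := p) (z₀ := z₀) hπ0 hs0.le (show s ≤ 16 * ρ by linarith)
  have hvs : volume (Qp p z₀ π s) = ENNReal.ofReal (s ^ n * b * (2 * (π ^ (2 - p) * s ^ 2))) := Qp_vol hs0 hπ0
  have hv16 : volume (Qp p z₀ π (16 * ρ)) = ENNReal.ofReal ((16 * ρ) ^ n * b * (2 * (π ^ (2 - p) * (16 * ρ) ^ 2))) :=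
    Qp_vol (by positivity) hπ0
  have hfs : volume (Qp p z₀ π s) ≠ ∞ := by rw [hvs]; exact ENNReal.ofReal_ne_top
  have hf16 : volume (Qp p z₀ π (16 * ρ)) ≠ ∞ := by rw [hv16]; exact ENNReal.ofReal_ne_top
  have hps : 0 < s ^ n * b * (2 * (π ^ (2 - p) * s ^ 2)) := by positivity
  have hp16 : 0 < (16 * ρ) ^ n * b * (2 * (π ^ (2 - p) * (16 * ρ) ^ 2)) := by positivity
  have hfin : IsFiniteMeasure (volume.restrict (Qp p z₀ π s)) :=
    ⟨by rw [Measure.restrict_apply_univ]; exact hfs.lt_top⟩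
  have hnz : NeZero (volume.restrict (Qp p z₀ π s)) := ⟨by
    rw [Ne, Measure.restrict_eq_zero, hvs]; simpa using hps⟩
  have K0 := KK_nonneg S Du
  have iθ := KK_int S hu (hsub.trans h.hsub) hfs hθ0.le hθδ
  have iδ := KK_int S hu (hsub.trans h.hsub) hfs hδ0.le le_rfl
  have i16 := KK_int S hu h.hsub hf16 hδ0.le le_rfl
  have j := jensen_avg (volume.restrict (Qp p z₀ π s)) K0 hθ0 hθδ iθ iδ
  have hsm : MeasurableSet (Qp p z₀ π (16 * ρ)) := Qrs_meas _ _ _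
  have hδb : ⨍ z in Qp p z₀ π s, KK S Du z ^ δ ≤ 8 ^ (n + 2) * π ^ (δ * p) := by
    have h1 : ∫ z in Qp p z₀ π s, KK S Du z ^ δ ≤ ∫ z in Qp p z₀ π (16 * ρ), KK S Du z ^ δ :=
      setIntegral_mono_set i16 (ae_of_all _ fun z => Real.rpow_nonneg (K0 z) _) hsub.eventuallyLE
    have h2 : ⨍ z in Qp p z₀ π (16 * ρ), KK S Du z ^ δ ≤ π ^ (δ * p) := h.hup
    rw [setAverage_eq, Measure.real, hv16, ENNReal.toReal_ofReal hp16.le, smul_eq_mul, inv_mul_le_iff₀ hp16] at h2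
    rw [setAverage_eq, Measure.real, hvs, ENNReal.toReal_ofReal hps.le, smul_eq_mul, inv_mul_le_iff₀ hps]
    refine (h1.trans h2).trans ?_
    have h3 : (16 * ρ) ^ n * b * (2 * (π ^ (2 - p) * (16 * ρ) ^ 2)) ≤ (s ^ n * b * (2 * (π ^ (2 - p) * s ^ 2))) * 8 ^ (n + 2) := by
      calc (16 * ρ) ^ n * b * (2 * (π ^ (2 - p) * (16 * ρ) ^ 2)) ≤ (8 * s) ^ n * b * (2 * (π ^ (2 - p) * (8 * s) ^ 2)) := by
            have h4 : 16 * ρ ≤ 8 * s := by linarith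
            have h5 : 0 < 16 * ρ := by linarith
            generalize 16 * ρ = A at h4 h5 ⊢
            gcongr
        _ = _ := by rw [mul_pow, pow_add]; ring
    calc _ ≤ (s ^ n * b * (2 * (π ^ (2 - p) * s ^ 2)) * 8 ^ (n + 2)) * π ^ (δ * p) := by gcongr
      _ = _ := by ring
  have hYδ0 : 0 ≤ ⨍ z in Qp p z₀ π s, KK S Du z ^ δ := by
    rw [setAverage_eq]
    exact mul_nonneg (by positivity) (integral_nonneg fun z => Real.rpow_nonneg (K0 z) _)
  have hY0 : 0 ≤ ⨍ z in Qp p z₀ π s, KK S Du z ^ θ := by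
    rw [setAverage_eq]
    exact mul_nonneg (by positivity) (integral_nonneg fun z => Real.rpow_nonneg (K0 z) _)
  have hδp : 1 ≤ δ * p := by nlinarith
  calc _ ≤ ((⨍ z in Qp p z₀ π s, KK S Du z ^ δ) ^ (θ / δ)) ^ (1 / (θ * p)) :=
        Real.rpow_le_rpow hY0 j (by positivity)
    _ = (⨍ z in Qp p z₀ π s, KK S Du z ^ δ) ^ (1 / (δ * p)) := by
        rw [← Real.rpow_mul hYδ0]; congr 1; field_simp
    _ ≤ (8 ^ (n + 2) * π ^ (δ * p)) ^ (1 / (δ * p)) := Real.rpow_le_rpow hYδ0 hδb (by positivity)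
    _ = (8 ^ (n + 2)) ^ (1 / (δ * p)) * π := by
        rw [Real.mul_rpow (by positivity) (by positivity), ← Real.rpow_mul hπ0.le]
        have : δ * p * (1 / (δ * p)) = 1 := by field_simp
        rw [this, Real.rpow_one]
    _ ≤ (8 ^ (n + 2)) ^ (1:ℝ) * π := by
        gcongr
        · exact one_le_pow₀ (by norm_num)
        · rw [div_le_one (by linarith)]; exact hδp
    _ = _ := by rw [Real.rpow_one]

lemma V_bound (S : Setting n N p q α L₁ L₂ aH) {u : Pt n → Vec N} {Du : Pt n → Mat N n} {z₀ : Pt n} {π ρ δ s θ : ℝ}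
    (hu : VeryWeakSolution S u Du δ) (h : PHyp S Du z₀ π ρ δ) (hs2 : 2 * ρ ≤ s) (hs : s ≤ 4 * ρ)
    (hθ : (q - 1) / p < θ) (hθδ : θ ≤ δ) (i : Fin N) :
    π ^ (2 - p) * ⨍ z in Qp p z₀ π s, ∑ j, |S.A z (Du z) i j - rhsF S z i j| ≤
      (n * (L₂ + 1)) * (1 + (1 + 4 * aH)) * (8 ^ (n + 2) : ℝ) ^ q *
        (⨍ z in Qp p z₀ π s, KK S Du z ^ θ) ^ (1 / (θ * p)) := by
  have hy := y_bound S hu h hs2 hs hθ hθδ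
  have hπ0 : 0 < π := by linarith [h.hπ]
  have hρ0 := h.hρ.1
  have hs0 : 0 < s := by linarith
  have hp := S.hp2
  have hq := S.hpq
  have hp0 : 0 < p := by linarith
  have hL : 0 < L₂ := lt_of_lt_of_le S.hL₁ S.hL₁₂
  have haH := S.haH
  have hθp : q - 1 < θ * p := by rwa [div_lt_iff₀ hp0] at hθ
  have hθ0 : 0 < θ := by
    have : 0 < θ * p := by linarith
    exact pos_of_mul_pos_left this hp0.le
  have hb : 0 < (volume (ball (0 : Spc n) 1)).toReal :=
    ENNReal.toReal_pos (measure_ball_pos _ _ (by norm_num)).ne' measure_ball_lt_top.ne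
  have hsub := (Qp_mono (p := p) (z₀ := z₀) hπ0 hs0.le (show s ≤ 16 * ρ by linarith)).trans h.hsub
  have hvs := Qp_vol (p := p) (z₀ := z₀) hs0 hπ0
  have hfs : volume (Qp p z₀ π s) ≠ ∞ := by rw [hvs]; exact ENNReal.ofReal_ne_top
  have hfin : IsFiniteMeasure (volume.restrict (Qp p z₀ π s)) :=
    ⟨by rw [Measure.restrict_apply_univ]; exact hfs.lt_top⟩
  have hps : 0 < s ^ n * (volume (ball (0 : Spc n) 1)).toReal * (2 * (π ^ (2 - p) * s ^ 2)) := by positivity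
  have hnz : NeZero (volume.restrict (Qp p z₀ π s)) := ⟨by
    rw [Ne, Measure.restrict_eq_zero, hvs]; simpa using hps⟩
  have K0 := KK_nonneg S Du
  have hY0 : 0 ≤ ⨍ z in Qp p z₀ π s, KK S Du z ^ θ := by
    rw [setAverage_eq]
    exact mul_nonneg (by positivity) (integral_nonneg fun z => Real.rpow_nonneg (K0 z) _)
  have hpq' : (p - 1) / p ≤ (q - 1) / p := by gcongr
  have hp1 : 0 < (p - 1) / p := div_pos (by linarith) hp0
  have hq1 : 0 < (q - 1) / p := div_pos (by linarith) hp0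
  have iθ := KK_int S hu hsub hfs hθ0.le hθδ
  have i1 := KK_int S hu hsub hfs hp1.le (hpq'.trans (hθ.le.trans hθδ))
  have i2 := KK_int S hu hsub hfs hq1.le (hθ.le.trans hθδ)
  have j1 := jensen_avg (volume.restrict (Qp p z₀ π s)) K0 hp1 (hpq'.trans hθ.le) i1 iθ
  have j2 := jensen_avg (volume.restrict (Qp p z₀ π s)) K0 hq1 hθ.le i2 iθ
  set Y := ⨍ z in Qp p z₀ π s, KK S Du z ^ θ with hYdef
  have ey : ∀ t : ℝ, Y ^ ((t - 1) / p / θ) = (Y ^ (1 / (θ * p))) ^ (t - 1) := by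
    intro t; rw [← Real.rpow_mul hY0]; congr 1; field_simp
  rw [ey] at j1 j2
  obtain ⟨_, hab⟩ := a_bound S h hs0 hs
  refine num1 (B := 1 + 4 * aH) h.hπ hp hq (by positivity) (one_le_pow₀ (by norm_num)) hy (by positivity) (by positivity) ?_
  set y := Y ^ (1 / (θ * p)) with hydef
  have hfb := ae_restrict_of_ae_restrict_of_subset hsub (flux_bound S Du)
  have hQm : MeasurableSet (Qp p z₀ π s) := Qrs_meas _ _ _
  have hVint : IntegrableOn (fun z => ∑ j, |S.A z (Du z) i j - rhsF S z i j|) (Qp p z₀ π s) := by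
    refine integrable_finsetSum _ fun j _ => ?_
    have := flux_int S hu hsub hfs (hθ.le.trans hθδ) i j
    exact (this.1.sub this.2).abs
  have hbig : ∫ z in Qp p z₀ π s, ∑ j, |S.A z (Du z) i j - rhsF S z i j| ≤
      ∫ z in Qp p z₀ π s, (n * (L₂ + 1)) * (KK S Du z ^ ((p - 1) / p) + π ^ (p - q) * (1 + 4 * aH) * KK S Du z ^ ((q - 1) / p)) := by
    refine integral_mono_ae hVint ((i1.add (i2.const_mul _)).const_mul _) ?_
    filter_upwards [hfb, ae_restrict_mem hQm] with z hz hzQ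
    have haz := hab z hzQ
    have k2 := Real.rpow_nonneg (K0 z) ((q - 1) / p)
    have hsum : ∀ j, |S.A z (Du z) i j - rhsF S z i j| ≤ (L₂ + 1) * (KK S Du z ^ ((p - 1) / p) + π ^ (p - q) * (1 + 4 * aH) * KK S Du z ^ ((q - 1) / p)) := by
      intro j
      calc _ ≤ |S.A z (Du z) i j| + |rhsF S z i j| := abs_sub _ _
        _ ≤ (L₂ + 1) * (KK S Du z ^ ((p - 1) / p) + S.a z * KK S Du z ^ ((q - 1) / p)) := by
          linarith [(hz i j).1, (hz i j).2]
        _ ≤ _ := by gcongr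
    refine (Finset.sum_le_sum fun j _ => hsum j).trans (le_of_eq ?_)
    simp [mul_assoc]
  have hav : ∀ f : Pt n → ℝ, ⨍ z in Qp p z₀ π s, f z = (volume.real (Qp p z₀ π s))⁻¹ * ∫ z in Qp p z₀ π s, f z :=
    fun f => by rw [setAverage_eq, smul_eq_mul]
  calc ⨍ z in Qp p z₀ π s, ∑ j, |S.A z (Du z) i j - rhsF S z i j| ≤
      (volume.real (Qp p z₀ π s))⁻¹ * ∫ z in Qp p z₀ π s, (n * (L₂ + 1)) * (KK S Du z ^ ((p - 1) / p) + π ^ (p - q) * (1 + 4 * aH) * KK S Du z ^ ((q - 1) / p)) := by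
        rw [hav]; gcongr
    _ = (n * (L₂ + 1)) * ((⨍ z in Qp p z₀ π s, KK S Du z ^ ((p - 1) / p)) + π ^ (p - q) * (1 + 4 * aH) * ⨍ z in Qp p z₀ π s, KK S Du z ^ ((q - 1) / p)) := by
        rw [integral_const_mul, integral_add i1 (i2.const_mul _), integral_const_mul, hav, hav (fun z => KK S Du z ^ ((q - 1) / p))]
        ring
    _ ≤ _ := by gcongr
end

section
variable {n N : ℕ} {p q α L₁ L₂ aH : ℝ}

lemma D_bound (S : Setting n N p q α L₁ L₂ aH) {Du : Pt n → Mat N n} {z : Pt n} {b θ : ℝ}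
    (hb : 0 ≤ b) (hba : b ≤ S.a z) (hθ : 0 < θ) :
    b ^ θ * mnorm (Du z) ^ (θ * q) ≤ KK S Du z ^ θ := by
  have h0 := mnorm_nonneg (Du z)
  have e : b ^ θ * mnorm (Du z) ^ (θ * q) = (b * mnorm (Du z) ^ q) ^ θ := by
    rw [Real.mul_rpow hb (by positivity), ← Real.rpow_mul h0, mul_comm q θ]
  rw [e]
  have h1 : b * mnorm (Du z) ^ q ≤ KK S Du z := by
    have k1 : b * mnorm (Du z) ^ q ≤ S.a z * mnorm (Du z) ^ q := by gcongr
    have k2 : 0 ≤ mnorm (Du z) ^ p := by positivity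
    have k3 := HFf_nonneg S z
    have k4 : KK S Du z = mnorm (Du z) ^ p + S.a z * mnorm (Du z) ^ q + HFf S z := rfl
    linarith
  exact Real.rpow_le_rpow (by positivity) h1 hθ.le

lemma final_est (S : Setting n N p q α L₁ L₂ aH) {u : Pt n → Vec N} {Du : Pt n → Mat N n} {δ : ℝ}
    (hu : VeryWeakSolution S u Du δ) {z₀ : Pt n} {π ρ θ s : ℝ} (h : PHyp S Du z₀ π ρ δ)
    (hs2 : 2 * ρ ≤ s) (hs : s ≤ 4 * ρ)
    (hθ : (q - 1) / p < θ) (hθδ : θ ≤ δ) {C : ℝ} (hC1 : 1 ≤ C)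
    (hC : ∀ (x₀ : Spc n) (s : ℝ), 0 < s → ∃ η : Spc n → ℝ,
      ContDiff ℝ (⊤ : ℕ∞) η ∧ HasCompactSupport η ∧ tsupport η ⊆ ball x₀ s ∧
      (∀ x, 0 ≤ η x ∧ η x ≤ 1) ∧ (∀ x ∈ ball x₀ (s / 4), η x = 1) ∧
      (∀ x j, |fderiv ℝ η x (EuclideanSpace.single j 1)| ≤ C / s)) {b : ℝ} (hb : 0 < b)
    (hba : ∀ z ∈ Qp p z₀ π s, b ≤ S.a z) {Cm W M : ℝ} (hCm : Cm = 8 * 4 ^ n * 2 ^ (n + 1) * (n + 1) * C)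
    (hW : W = (n * (L₂ + 1)) * (1 + (1 + 4 * aH)) * (8 ^ (n + 2) : ℝ) ^ q) (hM : M = 8 ^ (n + 2)) :
    (⨍ z in Qp p z₀ π s, b ^ θ * (vnorm (u z - vavg u (Qp p z₀ π s)) ^ (θ * q) / s ^ (θ * q)))
      ≤ (N * Cm) ^ q * (1 + W ^ q * M ^ q) * ⨍ z in Qp p z₀ π s, KK S Du z ^ θ := by
  have hπ := h.hπ
  have hπ0 : 0 < π := by linarith
  have hρ0 := h.hρ.1
  have hs0 : 0 < s := by linarith
  have hp := S.hp2
  have hq := S.hpq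
  have hp0 : 0 < p := by linarith
  have hq0 : 0 < q := by linarith
  have hL : 0 < L₂ := lt_of_lt_of_le S.hL₁ S.hL₁₂
  have haH := S.haH
  have hθp : q - 1 < θ * p := by rwa [div_lt_iff₀ hp0] at hθ
  have hθ0 : 0 < θ := by
    have : 0 < θ * p := by linarith
    exact pos_of_mul_pos_left this hp0.le
  have hθ1 : θ ≤ 1 := hθδ.trans hu.hδ.2.le
  have hr1 : 1 ≤ θ * q := by nlinarith
  have hrq : θ * q ≤ q := by nlinarith
  have hn1 : (1:ℝ) ≤ n := by exact_mod_cast (by linarith [S.hn] : 1 ≤ n)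
  have hN1 : (1:ℝ) ≤ N := by exact_mod_cast S.hN
  have hM1 : 1 ≤ M := by rw [hM]; exact one_le_pow₀ (by norm_num)
  have hW1 : 1 ≤ W := by
    rw [hW, ← hM]
    have := Real.one_le_rpow hM1 hq0.le
    have h2 : 1 ≤ n * (L₂ + 1) := one_le_mul_of_one_le_of_one_le hn1 (by linarith)
    exact one_le_mul_of_one_le_of_one_le (one_le_mul_of_one_le_of_one_le h2 (by linarith)) this
  have hCm1 : 1 ≤ Cm := by
    rw [hCm]
    have h4 : (1:ℝ) ≤ 4 ^ n := one_le_pow₀ (by norm_num)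
    have h5 : (1:ℝ) ≤ 2 ^ (n + 1) := one_le_pow₀ (by norm_num)
    exact one_le_mul_of_one_le_of_one_le (one_le_mul_of_one_le_of_one_le
      (one_le_mul_of_one_le_of_one_le (one_le_mul_of_one_le_of_one_le (by norm_num) h4) h5) (by linarith)) hC1
  have hsub := (Qp_mono (p := p) (z₀ := z₀) hπ0 hs0.le (show s ≤ 16 * ρ by linarith)).trans h.hsub
  have hbv : 0 < (volume (ball (0 : Spc n) 1)).toReal :=
    ENNReal.toReal_pos (measure_ball_pos _ _ (by norm_num)).ne' measure_ball_lt_top.ne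
  have hvs := Qp_vol (p := p) (z₀ := z₀) hs0 hπ0
  have hfs : volume (Qp p z₀ π s) ≠ ∞ := by rw [hvs]; exact ENNReal.ofReal_ne_top
  have hQm : MeasurableSet (Qp p z₀ π s) := Qrs_meas _ _ _
  have K0 := KK_nonneg S Du
  have iθ := KK_int S hu hsub hfs hθ0.le hθδ
  have hbθ : 0 < b ^ θ := Real.rpow_pos_of_pos hb _
  have hyb := y_bound S hu h hs2 hs hθ hθδ
  have hVb := V_bound S hu h hs2 hs hθ hθδ
  have hab := (a_bound S h hs0 hs).1
  have hz₀Q : z₀ ∈ Qp p z₀ π s := by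
    have : 0 < π ^ (2 - p) * s ^ 2 := by positivity
    exact ⟨mem_ball_self hs0, by constructor <;> linarith⟩
  have hbπ : b ≤ π ^ (p - q) := (hba _ hz₀Q).trans hab
  have hDint : IntegrableOn (fun z => mnorm (Du z) ^ (θ * q)) (Qp p z₀ π s) := by
    refine Integrable.mono' (iθ.const_mul ((b ^ θ)⁻¹)) ?_ ?_
    · exact ((mnorm_meas.comp hu.hDuM).pow_const _).aestronglyMeasurable
    · filter_upwards [ae_restrict_mem hQm] with z hz
      rw [Real.norm_of_nonneg (Real.rpow_nonneg (mnorm_nonneg _) _), le_inv_mul_iff₀ hbθ]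
      exact D_bound S hb.le (hba z hz) hθ0
  have hσ : 0 < π ^ (2 - p) * s ^ 2 := by positivity
  have hce := fun i => comp_est S hu hs0 hσ hsub (hθ.le.trans hθδ) hr1 hDint hC1 hC i
  have hQe : Qrs z₀ s (π ^ (2 - p) * s ^ 2) = Qp p z₀ π s := rfl
  rw [hQe, ← hCm] at hce
  rw [← hW] at hVb
  rw [← hM] at hyb
  set Q := Qp p z₀ π s with hQdef
  set Y := ⨍ z in Q, KK S Du z ^ θ with hYdef
  have hv0 : 0 ≤ (volume.real Q)⁻¹ := by positivity
  have hY0 : 0 ≤ Y := by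
    rw [hYdef, setAverage_eq]
    exact mul_nonneg hv0 (integral_nonneg fun z => Real.rpow_nonneg (K0 z) _)
  set y := Y ^ (1 / (θ * p)) with hy
  have hy0 : 0 ≤ y := by positivity
  set D := ⨍ z in Q, mnorm (Du z) ^ (θ * q) with hDdef
  have hD : b ^ θ * D ≤ Y := by
    rw [hDdef, hYdef, setAverage_eq, setAverage_eq, smul_eq_mul, smul_eq_mul, mul_left_comm, ← integral_const_mul]
    gcongr ?_ * ?_
    exact setIntegral_mono_on (hDint.const_mul _) iθ hQm fun z hz => D_bound S hb.le (hba z hz) hθ0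
  have hcomp : ∀ i, ⨍ z in Q, |u z i - ⨍ w in Q, u w i| ^ (θ * q) ≤
      Cm ^ (θ * q) * (s ^ (θ * q) * D + (s * (W * y)) ^ (θ * q)) := by
    intro i
    refine (hce i).2.trans ?_
    have hX0 : 0 ≤ ⨍ z in Q, ∑ j, |S.A z (Du z) i j - rhsF S z i j| := by
      rw [setAverage_eq]
      exact mul_nonneg hv0 (integral_nonneg fun z => Finset.sum_nonneg fun j _ => abs_nonneg _)
    have e : s⁻¹ * (π ^ (2 - p) * s ^ 2 * ⨍ z in Q, ∑ j, |S.A z (Du z) i j - rhsF S z i j|)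
        = s * (π ^ (2 - p) * ⨍ z in Q, ∑ j, |S.A z (Du z) i j - rhsF S z i j|) := by
      field_simp
    rw [e]
    have := hVb i
    gcongr
  have hnum := num2 hπ hp hq hY0 hθ0 hθ1 hy hM1 hyb hb.le hbπ hW1
  have hsr : 0 < s ^ (θ * q) := Real.rpow_pos_of_pos hs0 _
  have hpt : ∀ z, b ^ θ * (vnorm (u z - vavg u Q) ^ (θ * q) / s ^ (θ * q)) ≤
      (b ^ θ / s ^ (θ * q) * N ^ (θ * q - 1)) * ∑ i, |u z i - ⨍ w in Q, u w i| ^ (θ * q) := by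
    intro z
    have k1 : vnorm (u z - vavg u Q) ^ (θ * q) ≤ N ^ (θ * q - 1) * ∑ i, |u z i - ⨍ w in Q, u w i| ^ (θ * q) := by
      refine (Real.rpow_le_rpow (Real.sqrt_nonneg _) (vnorm_le_sum _) (by linarith)).trans ?_
      refine (Real.rpow_sum_le_const_mul_sum_rpow_of_nonneg Finset.univ hr1 fun i _ => abs_nonneg _).trans ?_
      simp only [Finset.card_univ, Fintype.card_fin]
      exact le_rfl
    calc _ = b ^ θ / s ^ (θ * q) * vnorm (u z - vavg u Q) ^ (θ * q) := by ring
      _ ≤ b ^ θ / s ^ (θ * q) * (N ^ (θ * q - 1) * ∑ i, |u z i - ⨍ w in Q, u w i| ^ (θ * q)) := by gcongr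
      _ = _ := by ring
  have hint : IntegrableOn (fun z => ∑ i, |u z i - ⨍ w in Q, u w i| ^ (θ * q)) Q :=
    integrable_finsetSum _ fun i _ => (hce i).1
  calc (⨍ z in Q, b ^ θ * (vnorm (u z - vavg u Q) ^ (θ * q) / s ^ (θ * q)))
      ≤ ⨍ z in Q, (b ^ θ / s ^ (θ * q) * N ^ (θ * q - 1)) * ∑ i, |u z i - ⨍ w in Q, u w i| ^ (θ * q) := by
        rw [setAverage_eq, setAverage_eq, smul_eq_mul, smul_eq_mul]
        refine mul_le_mul_of_nonneg_left ?_ hv0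
        refine integral_mono_of_nonneg (ae_of_all _ fun z => ?_) (hint.const_mul _) (ae_of_all _ hpt)
        have := Real.rpow_nonneg (Real.sqrt_nonneg (vdot (u z - vavg u Q) (u z - vavg u Q))) (θ * q)
        exact mul_nonneg hbθ.le (div_nonneg this hsr.le)
    _ = (b ^ θ / s ^ (θ * q) * N ^ (θ * q - 1)) * ∑ i, ⨍ z in Q, |u z i - ⨍ w in Q, u w i| ^ (θ * q) := by
        simp only [setAverage_eq, smul_eq_mul]
        rw [integral_const_mul, integral_finsetSum _ fun i _ => ?_, ← Finset.mul_sum]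
        · ring
        · have := (hce i).1
          simp only [setAverage_eq, smul_eq_mul] at this
          exact this
    _ ≤ (b ^ θ / s ^ (θ * q) * N ^ (θ * q - 1)) * ∑ _i : Fin N,
          Cm ^ (θ * q) * (s ^ (θ * q) * D + (s * (W * y)) ^ (θ * q)) := by
        gcongr with i _
        exact hcomp i
    _ = (N * Cm) ^ (θ * q) * (b ^ θ * D + b ^ θ * (W * y) ^ (θ * q)) := by
        have hNN : (N:ℝ) ^ (θ * q) = N ^ (θ * q - 1) * N := by
          rw [← Real.rpow_add_one (by linarith)]; congr 1; ring
        rw [Finset.sum_const, Finset.card_univ, Fintype.card_fin, nsmul_eq_mul,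
          Real.mul_rpow (x := (N:ℝ)) (y := Cm) (by linarith) (by linarith), hNN, Real.mul_rpow hs0.le (mul_nonneg (by linarith) hy0)]
        field_simp
    _ ≤ (N * Cm) ^ (θ * q) * (Y + W ^ q * M ^ q * Y) := by
        have : 0 ≤ (N * Cm) ^ (θ * q) := Real.rpow_nonneg (mul_nonneg (by linarith) (by linarith)) _
        gcongr
    _ ≤ (N * Cm) ^ q * (Y + W ^ q * M ^ q * Y) := by
        have h1 : 1 ≤ N * Cm := one_le_mul_of_one_le_of_one_le hN1 hCm1
        have h2 : 0 ≤ W ^ q := Real.rpow_nonneg (by linarith) _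
        have h3 : 0 ≤ M ^ q := Real.rpow_nonneg (by linarith) _
        exact mul_le_mul_of_nonneg_right (Real.rpow_le_rpow_of_exponent_le h1 hrq) (by positivity)
    _ = _ := by ring

end

/-- Lemma 4.3: weighted Poincaré-type inequality in the `p`-intrinsic case. -/
theorem p_intrinsic_poincare_weighted (n N : ℕ) (p q α L₁ L₂ aH : ℝ) :
    ∃ c : ℝ, 0 < c ∧
      ∀ (S : Setting n N p q α L₁ L₂ aH) (u : Pt n → Vec N) (Du : Pt n → Mat N n) (δ : ℝ),
        VeryWeakSolution S u Du δ →
        ∀ (z₀ : Pt n) (π ρ : ℝ), PHyp S Du z₀ π ρ δ →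
        ∀ θ ∈ Set.Ioc ((q - 1) / p) δ, ∀ s ∈ Set.Icc (2 * ρ) (4 * ρ),
          (⨍ z in Qp p z₀ π s,
              sInf (S.a '' Qp p z₀ π s) ^ θ
                * (vnorm (u z - vavg u (Qp p z₀ π s)) ^ (θ * q) / s ^ (θ * q)))
            ≤ c * (⨍ z in Qp p z₀ π s, (HDu S Du z + HFf S z) ^ θ) := by
  obtain ⟨C, hC1, hC⟩ := cutoff n
  refine ⟨max ((N * (8 * 4 ^ n * 2 ^ (n + 1) * (n + 1) * C)) ^ q *
    (1 + ((n * (L₂ + 1)) * (1 + (1 + 4 * aH)) * (8 ^ (n + 2) : ℝ) ^ q) ^ q * (8 ^ (n + 2) : ℝ) ^ q)) 1,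
    lt_of_lt_of_le one_pos (le_max_right _ _), ?_⟩
  intro S u Du δ hu z₀ π ρ h θ hθ s hs
  have hY0 : 0 ≤ ⨍ z in Qp p z₀ π s, KK S Du z ^ θ := by
    rw [setAverage_eq]
    exact mul_nonneg (by positivity) (integral_nonneg fun z => Real.rpow_nonneg (KK_nonneg S Du z) _)
  have hKe : (⨍ z in Qp p z₀ π s, (HDu S Du z + HFf S z) ^ θ) = ⨍ z in Qp p z₀ π s, KK S Du z ^ θ := rfl
  rw [hKe]
  have hb0 : 0 ≤ sInf (S.a '' Qp p z₀ π s) := by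
    apply Real.sInf_nonneg
    rintro _ ⟨z, _, rfl⟩
    exact S.ha0 z
  have hθ0 : 0 < θ := lt_trans (div_pos (by linarith [S.hp2, S.hpq]) (by linarith [S.hp2])) hθ.1
  rcases hb0.eq_or_lt with hb | hb
  · rw [← hb]
    simp only [Real.zero_rpow hθ0.ne', zero_mul]
    rw [setAverage_eq]
    simp only [integral_zero, smul_zero]
    exact mul_nonneg (le_trans zero_le_one (le_max_right _ _)) hY0
  · refine (final_est S hu h hs.1 hs.2 hθ.1 hθ.2 hC1 hC hb (fun z hz => ?_) rfl rfl rfl).trans ?_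
    · refine csInf_le ⟨0, ?_⟩ ⟨z, hz, rfl⟩
      rintro _ ⟨w, _, rfl⟩
      exact S.ha0 w
    · exact mul_le_mul_of_nonneg_right (le_max_left _ _) hY0
end
end

section
/- In the stopping-time setup, for each w ∈ Ψ(Π,R₁) let ρ_w be the stopping radius and set U(w) = Q^{π_w}_{2ρ_w}(w) if π_w^p ≥ a(w)π_w^q and U(w) = G^{π_w}_{2ρ_w}(w) if π_w^p < a(w)π_w^q. Assume R ≤ R₀, where R₀ ∈ (0,1) is small enough that the radius-decay estimate ρ_w^α π_w^{q−p} ≤ 1/(1+10[a]_α) holds whenever π_w^p ≥ a(w)π_w^q, and a(w)/2 ≤ a(z) ≤ 2a(w) holds for all z ∈ Q_{10ρ_w}(w) whenever π_w^p < a(w)π_w^q. Then for v, w ∈ Ψ(Π,R₁): if U(v) ∩ U(w) ≠ ∅ and ρ_w ≤ 2ρ_v, then π_v ≤ 2^{1/p} π_w. -/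
open MeasureTheory Set Metric Filter
open scoped ENNReal NNReal Topology BigOperators Classical

noncomputable section

open DoublePhase
theorem aux_one_lt {p q x y A B P : ℝ} (hp : 2 < p) (hpq : p < q) (hx : 0 < x) (hy : 1 < y)
    (hA : 0 ≤ A) (hAB : A ≤ B) (h1 : y ^ p + B * y ^ q < P) (h2 : P = x ^ p + A * x ^ q) :
    1 < x := by
  by_contra hc
  have hxy : x ≤ y := by linarith
  have e1 : x ^ p ≤ y ^ p := Real.rpow_le_rpow hx.le hxy (by linarith)
  have e2 : x ^ q ≤ y ^ q := Real.rpow_le_rpow hx.le hxy (by linarith)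
  have e3 : A * x ^ q ≤ B * y ^ q :=
    mul_le_mul hAB e2 (Real.rpow_nonneg hx.le _) (hA.trans hAB)
  linarith

theorem aux_meet {n N : ℕ} {p q α L₁ L₂ aH : ℝ} (S : Setting n N p q α L₁ L₂ aH)
    (v y : Pt n) (x r : ℝ) (hx : 1 < x) (hr : 0 < r) (hy : y ∈ Uw S v x r) :
    dist y.1 v.1 < 2 * r ∧ |y.2 - v.2| < 4 * r ^ 2 := by
  have hx0 : 0 < x := by linarith
  have hp := S.hp2
  have hr2 : 0 < r ^ 2 := by positivity
  unfold Uw at hy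
  split_ifs at hy with h
  · simp only [Qp, Qrs, Set.mem_prod, Metric.mem_ball, Set.mem_Ioo] at hy
    obtain ⟨h1, h2, h3⟩ := hy
    have : x ^ (2 - p) ≤ 1 := Real.rpow_le_one_of_one_le_of_nonpos hx.le (by linarith)
    have h4 : x ^ (2 - p) * (2 * r) ^ 2 ≤ 4 * r ^ 2 := by nlinarith
    exact ⟨h1, abs_lt.2 ⟨by linarith, by linarith⟩⟩
  · simp only [Gpq, Qrs, Set.mem_prod, Metric.mem_ball, Set.mem_Ioo] at hy
    obtain ⟨h1, h2, h3⟩ := hy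
    have e1 : x ^ 2 ≤ x ^ p := by
      rw [← Real.rpow_natCast]
      exact Real.rpow_le_rpow_of_exponent_le hx.le (by push_cast; linarith)
    have e2 : x ^ p ≤ Hf S.a p q v x := by
      unfold Hf
      have := mul_nonneg (S.ha0 v) (Real.rpow_nonneg hx0.le q)
      linarith
    have : x ^ 2 / Hf S.a p q v x ≤ 1 :=
      div_le_one_of_le₀ (e1.trans e2) ((sq_nonneg x).trans (e1.trans e2))
    have h4 : x ^ 2 / Hf S.a p q v x * (2 * r) ^ 2 ≤ 4 * r ^ 2 := by nlinarith
    exact ⟨h1, abs_lt.2 ⟨by linarith, by linarith⟩⟩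

/-- Vitali comparison lemma: comparability of intrinsic scaling parameters
of intersecting stopping-time cylinders. -/
theorem vitali_scale_comparison (n N : ℕ) (p q α L₁ L₂ aH δ₀ : ℝ)
    (hδ₀ : δ₀ ∈ Set.Ioo (0 : ℝ) 1)
    (hδ₀q : q < p + α * (2 - q * (1 - δ₀)) / ((n : ℝ) + 2))
    (hδ₀2 : 1 < 2 - q * (1 - δ₀)) (hδ₀p : 2 < δ₀ * p)
    (S : Setting n N p q α L₁ L₂ aH) (u : Pt n → Vec N) (Du : Pt n → Mat N n) (δ : ℝ)
    (hδ : δ ∈ Set.Ioo δ₀ 1) (hsol : VeryWeakSolution S u Du δ)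
    (z₀ : Pt n) (R R₁ R₂ c₀ π₀ PiV : ℝ)
    (hR : 0 < R) (hQ2R : Qc z₀ (2 * R) ⊆ cyl S.Ω S.T)
    (hRR₁ : R ≤ R₁) (hR₁₂ : R₁ < R₂) (hR₂ : R₂ ≤ 2 * R)
    (hc₀ : 1 < c₀) (hπ₀ : 1 < π₀)
    (hπ₀eq : π₀ ^ 2 * (π₀ ^ p + sSup (S.a '' Qc z₀ (2 * R)) * π₀ ^ q) ^ (δ - 1)
      = (⨍ z in Qc z₀ (2 * R), (HDu S Du z + HFf S z) ^ δ) + c₀ ^ (2 / p))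
    (hPiV : (32 * R / (R₂ - R₁)) ^ (q * ((n : ℝ) + 2) / (2 + p * (δ - 1)))
        * (π₀ ^ p + sSup (S.a '' Qc z₀ (2 * R)) * π₀ ^ q) < PiV)
    (v w : Pt n) (πv πw ρv ρw : ℝ)
    (hv : v ∈ Qc z₀ R₁) (hvΨ : PiV < HDu S Du v)
    (hw : w ∈ Qc z₀ R₁) (hwΨ : PiV < HDu S Du w)
    (hπv : 0 < πv) (hπveq : PiV = πv ^ p + S.a v * πv ^ q)
    (hπw : 0 < πw) (hπweq : PiV = πw ^ p + S.a w * πw ^ q)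
    (hρv : ρv ∈ Set.Ioo (0 : ℝ) ((R₂ - R₁) / 16))
    (hρw : ρw ∈ Set.Ioo (0 : ℝ) ((R₂ - R₁) / 16))
    (hstopv :
      (S.a v * πv ^ q ≤ πv ^ p →
        (⨍ z in Qp p v πv ρv, (HDu S Du z + HFf S z) ^ δ) = πv ^ (δ * p) ∧
        ∀ s ∈ Set.Ioo ρv (R₂ - R₁),
          (⨍ z in Qp p v πv s, (HDu S Du z + HFf S z) ^ δ) < πv ^ (δ * p)) ∧
      (πv ^ p < S.a v * πv ^ q →
        (⨍ z in Gpq S.a p q v πv ρv, (HDu S Du z + HFf S z) ^ δ) = PiV ^ δ ∧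
        ∀ s ∈ Set.Ioo ρv (R₂ - R₁),
          (⨍ z in Gpq S.a p q v πv s, (HDu S Du z + HFf S z) ^ δ) < PiV ^ δ))
    (hstopw :
      (S.a w * πw ^ q ≤ πw ^ p →
        (⨍ z in Qp p w πw ρw, (HDu S Du z + HFf S z) ^ δ) = πw ^ (δ * p) ∧
        ∀ s ∈ Set.Ioo ρw (R₂ - R₁),
          (⨍ z in Qp p w πw s, (HDu S Du z + HFf S z) ^ δ) < πw ^ (δ * p)) ∧
      (πw ^ p < S.a w * πw ^ q →
        (⨍ z in Gpq S.a p q w πw ρw, (HDu S Du z + HFf S z) ^ δ) = PiV ^ δ ∧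
        ∀ s ∈ Set.Ioo ρw (R₂ - R₁),
          (⨍ z in Gpq S.a p q w πw s, (HDu S Du z + HFf S z) ^ δ) < PiV ^ δ))
    (hdecv : S.a v * πv ^ q ≤ πv ^ p → ρv ^ α * πv ^ (q - p) ≤ 1 / (1 + 10 * aH))
    (hdecw : S.a w * πw ^ q ≤ πw ^ p → ρw ^ α * πw ^ (q - p) ≤ 1 / (1 + 10 * aH))
    (hcompv : πv ^ p < S.a v * πv ^ q →
      ∀ z ∈ Qc v (10 * ρv), S.a v / 2 ≤ S.a z ∧ S.a z ≤ 2 * S.a v)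
    (hcompw : πw ^ p < S.a w * πw ^ q →
      ∀ z ∈ Qc w (10 * ρw), S.a w / 2 ≤ S.a z ∧ S.a z ≤ 2 * S.a w)
    (hmeet : (Uw S v πv ρv ∩ Uw S w πw ρw).Nonempty)
    (hρ : ρw ≤ 2 * ρv) :
    πv ≤ (2 : ℝ) ^ (1 / p) * πw := by
  obtain ⟨hα0, hα1⟩ := S.hα
  have hp := S.hp2
  have hpq := S.hpq
  have haH := S.haH
  have hR10 : 0 < R₁ := by linarith
  have hsub : Qc z₀ R₁ ⊆ Qc z₀ (2 * R) := by
    unfold Qc Qrs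
    have : R₁ ^ 2 ≤ (2 * R) ^ 2 := pow_le_pow_left₀ hR10.le (by linarith) 2
    exact Set.prod_mono (Metric.ball_subset_ball (by linarith))
      (Set.Ioo_subset_Ioo (by linarith) (by linarith))
  have hbdd : BddAbove (S.a '' Qc z₀ (2 * R)) := S.haB.mono (Set.image_subset_range _ _)
  have hsv : S.a v ≤ sSup (S.a '' Qc z₀ (2 * R)) := le_csSup hbdd ⟨v, hsub hv, rfl⟩
  have hsw : S.a w ≤ sSup (S.a '' Qc z₀ (2 * R)) := le_csSup hbdd ⟨w, hsub hw, rfl⟩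
  have hs0 : 0 ≤ sSup (S.a '' Qc z₀ (2 * R)) := (S.ha0 v).trans hsv
  have hfac : 1 ≤ (32 * R / (R₂ - R₁)) ^ (q * ((n : ℝ) + 2) / (2 + p * (δ - 1))) := by
    apply Real.one_le_rpow
    · rw [le_div_iff₀ (by linarith)]; linarith
    · apply div_nonneg
      · have : (0 : ℝ) ≤ n := Nat.cast_nonneg n
        have : 0 < q := by linarith
        positivity
      · have h1 : p * (1 - δ) ≤ q * (1 - δ₀) :=
          mul_le_mul hpq.le (by linarith [hδ.1]) (by linarith [hδ.2]) (by linarith)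
        have h2 : p * (δ - 1) = - (p * (1 - δ)) := by ring
        linarith
  have hP : π₀ ^ p + sSup (S.a '' Qc z₀ (2 * R)) * π₀ ^ q < PiV := by
    refine lt_of_le_of_lt (le_mul_of_one_le_left ?_ hfac) hPiV
    have : 0 < π₀ := by linarith
    positivity
  have hv1 : 1 < πv := aux_one_lt hp hpq hπv hπ₀ (S.ha0 v) hsv hP hπveq
  have hw1 : 1 < πw := aux_one_lt hp hpq hπw hπ₀ (S.ha0 w) hsw hP hπweq
  obtain ⟨y, hyv, hyw⟩ := hmeet
  obtain ⟨dv, tv⟩ := aux_meet S v y πv ρv hv1 hρv.1 hyv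
  obtain ⟨dw, tw⟩ := aux_meet S w y πw ρw hw1 hρw.1 hyw
  have hρv0 := hρv.1
  have hρw0 := hρw.1
  have hsq : ρw ^ 2 ≤ 4 * ρv ^ 2 := by
    have := pow_le_pow_left₀ hρw0.le hρ 2
    rw [mul_pow] at this
    linarith
  have hρv2 : 0 < ρv ^ 2 := by positivity
  have hd : dist w.1 v.1 ≤ 6 * ρv := by
    have := dist_triangle_left w.1 v.1 y.1
    linarith
  have ht : |w.2 - v.2| < 36 * ρv ^ 2 := by
    have := abs_sub_le w.2 y.2 v.2
    rw [abs_sub_comm w.2 y.2] at this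
    linarith
  by_contra hcon
  push Not at hcon
  have h2p : ((2 : ℝ) ^ (1 / p)) ^ p = 2 := by
    rw [← Real.rpow_mul (by norm_num), one_div_mul_cancel (by linarith), Real.rpow_one]
  have h2q : 2 ≤ ((2 : ℝ) ^ (1 / p)) ^ q := by
    calc (2 : ℝ) = ((2 : ℝ) ^ (1 / p)) ^ p := h2p.symm
      _ ≤ _ := Real.rpow_le_rpow_of_exponent_le
        (Real.one_le_rpow (by norm_num) (by positivity)) hpq.le
  have hc0 : (0 : ℝ) < 2 ^ (1 / p) := by positivity
  have e1 : 2 * πw ^ p < πv ^ p := by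
    have := Real.rpow_lt_rpow (by positivity) hcon (show 0 < p by linarith)
    rwa [Real.mul_rpow hc0.le hπw.le, h2p] at this
  have hwq : 0 < πw ^ q := by positivity
  have hvq : 0 < πv ^ q := by positivity
  have hvp : 0 < πv ^ p := by positivity
  have e2 : 2 * πw ^ q < πv ^ q := by
    have := Real.rpow_lt_rpow (by positivity) hcon (show 0 < q by linarith)
    rw [Real.mul_rpow hc0.le hπw.le] at this
    exact lt_of_le_of_lt (mul_le_mul_of_nonneg_right h2q hwq.le) this
  have hav := S.ha0 v
  rcases le_or_gt (S.a v * πv ^ q) (πv ^ p) with hc | hc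
  · have hdec := hdecv hc
    have hvc := hQ2R (hsub hv)
    have hwc := hQ2R (hsub hw)
    have hhol := S.haHol w.1 hwc.1 v.1 hvc.1 w.2 hwc.2 v.2 hvc.2
    have h6 : (6 * ρv) ^ α ≤ 6 * ρv ^ α := by
      rw [Real.mul_rpow (by norm_num) hρv0.le]
      have : (6 : ℝ) ^ α ≤ 6 ^ (1 : ℝ) :=
        Real.rpow_le_rpow_of_exponent_le (by norm_num) hα1
      rw [Real.rpow_one] at this
      gcongr
    have hm : max (‖w.1 - v.1‖ ^ α) (|w.2 - v.2| ^ (α / 2)) ≤ 6 * ρv ^ α := by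
      refine le_trans (max_le ?_ ?_) h6
      · rw [← dist_eq_norm]
        exact Real.rpow_le_rpow dist_nonneg hd hα0.le
      · calc |w.2 - v.2| ^ (α / 2) ≤ ((6 * ρv) ^ (2 : ℝ)) ^ (α / 2) := by
              apply Real.rpow_le_rpow (abs_nonneg _) _ (by linarith)
              rw [Real.rpow_two, mul_pow]; linarith
          _ = (6 * ρv) ^ α := by
              rw [← Real.rpow_mul (by positivity)]; congr 1; ring
    have hdiff : S.a w ≤ S.a v + aH * (6 * ρv ^ α) := by
      have h1 := (le_abs_self _).trans (hhol.trans (mul_le_mul_of_nonneg_left hm haH.le))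
      change S.a w - S.a v ≤ _ at h1
      linarith
    have hsplit : πv ^ q = πv ^ (q - p) * πv ^ p := by
      rw [← Real.rpow_add hπv]; congr 1; ring
    have hk : aH * (ρv ^ α * πv ^ q) ≤ πv ^ p / 10 := by
      have h1 : aH * (ρv ^ α * πv ^ (q - p)) ≤ 1 / 10 := by
        refine (mul_le_mul_of_nonneg_left hdec haH.le).trans ?_
        rw [mul_one_div, div_le_div_iff₀ (by linarith) (by norm_num)]
        linarith
      calc aH * (ρv ^ α * πv ^ q) = aH * (ρv ^ α * πv ^ (q - p)) * πv ^ p := by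
            rw [hsplit]; ring
        _ ≤ 1 / 10 * πv ^ p := mul_le_mul_of_nonneg_right h1 hvp.le
        _ = πv ^ p / 10 := by ring
    have hk2 : S.a w * πw ^ q ≤ (S.a v + aH * (6 * ρv ^ α)) * (πv ^ q / 2) :=
      mul_le_mul hdiff (by linarith) hwq.le (by positivity)
    have hk3 : (S.a v + aH * (6 * ρv ^ α)) * (πv ^ q / 2)
        = S.a v * πv ^ q / 2 + 3 * (aH * (ρv ^ α * πv ^ q)) := by ring
    have : 0 ≤ S.a v * πv ^ q := by positivity
    linarith
  · have hmem : w ∈ Qc v (10 * ρv) := by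
      simp only [Qc, Qrs, Set.mem_prod, Metric.mem_ball, Set.mem_Ioo]
      have := abs_lt.1 ht
      have h10 : (10 * ρv) ^ 2 = 100 * ρv ^ 2 := by ring
      rw [h10]
      exact ⟨by linarith, by linarith, by linarith⟩
    have h2 := (hcompv hc w hmem).2
    have h3 : S.a w * πw ^ q ≤ 2 * S.a v * (πv ^ q / 2) :=
      mul_le_mul h2 (by linarith) hwq.le (by positivity)
    have h4 : 2 * S.a v * (πv ^ q / 2) = S.a v * πv ^ q := by ring
    linarith
end
end
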